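/- For every integer r ≥ 2 and every ε > 0 there exists d₀ = d₀(r, ε) such that for every fixed integer d ≥ d₀ the following holds with high probability: |χ(H_r(n,d)) − X| ≤ ε·X, where X := ((r−1)d/(r log d))^{1/(r−1)}. -/

import Mathlib

/-!
A random `d`-regular `r`-uniform hypergraph is studied through the configuration model: a uniformly
random word that contains every vertex `d` times is read as `m` rows of length `r`, where
`m * r = d * n`. The word is *simple* if its rows are sets and are pairwise distinct. Each regular
hypergraph comes from the same number of simple words, and a switching argument shows that a random
word is simple with probability bounded away from zero. Hence it suffices to bound the probability
of bad events for random words.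

A random word is compared with a word of independent letters: by a weak form of Stirling's formula,
probabilities increase by at most a polynomial factor. Write `q = k ^ (1 - r)` for the probability
that a uniformly random edge is monochromatic.

*Lower bound.* The expected number of proper `k`-colorings is at most `(1 - q) ^ m * k ^ n` up to a
polynomial factor, which tends to zero if `log k < (d / r) q`. This covers all `k < X`.

*Upper bound.* Let `k` be `(1 + ε / 2) X`, rounded up.

* In the second moment of the number of proper colorings whose classes have size at most
  `(1 + η) n / k`, the contribution of a pair of colorings depends on the frequencies `a i j` of
  pairs of colors only. A termwise inequality between `y ^ r - 1 - r (y - 1)` and the relative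
  entropy `y log y - y + 1`, at `y = k ^ 2 * a i j`, bounds the second moment by a polynomial
  factor times `((1 - q) ^ m * k ^ n) ^ 2`. For the first moment, an explicit list of nonconstant
  rows in which all nonconstant words occur almost equally often shows that a fixed balanced
  coloring is proper with probability at least `(1 - q) ^ m` up to a polynomial factor. Thus a
  proper `k`-coloring exists with at least inverse polynomial probability.
* The minimal number of monochromatic edges of a `k`-coloring changes by at most `2` under a
  transposition of two slots, so it is concentrated on the scale `sqrt n`. As it vanishes with
  inverse polynomial probability, it is at most `γ n` with high probability, for any fixed
  `γ > 0`.
* Small sets of vertices span few edges. Hence, after one vertex is picked from each monochromatic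
  edge, the hypergraph induced on these vertices can be colored greedily with `5 * r` new colors,
  and `k + 5 * r ≤ (1 + ε) X` if `d` is large.
-/

open Finset Filter Real

open scoped Classical

/-- A coloring `c` of the vertices is proper for the hypergraph with edge set `E`
if no edge has all its vertices of the same color. -/
def ProperColoring {n k : ℕ} (E : Finset (Finset (Fin n))) (c : Fin n → Fin k) : Prop :=
  ∀ e ∈ E, ∃ v ∈ e, ∃ w ∈ e, c v ≠ c w

/-- The chromatic number of the hypergraph with edge set `E`. -/
noncomputable def chromaticNumber {n : ℕ} (E : Finset (Finset (Fin n))) : ℕ :=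
  sInf {k : ℕ | ∃ c : Fin n → Fin k, ProperColoring E c}

/-- The family of all `d`-regular `r`-uniform hypergraphs on vertex set `Fin n`. -/
noncomputable def regularFamily (n r d : ℕ) : Finset (Finset (Finset (Fin n))) :=
  Finset.univ.filter (fun E : Finset (Finset (Fin n)) =>
    (∀ e ∈ E, e.card = r) ∧ ∀ v : Fin n, (E.filter (fun e => v ∈ e)).card = d)

/-- The probability that a uniformly random element of `family` satisfies `P`. -/
noncomputable def uniformProb {α : Type*} (family : Finset α) (P : α → Prop) : ℝ :=
  ((family.filter (fun x => P x)).card : ℝ) / (family.card : ℝ)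

open scoped BigOperators

/-! ### Uniform probabilities -/

section UniformProb

variable {α ι : Type*} {s : Finset α} {P Q : α → Prop}

lemma uniformProb_eq_expect (s : Finset α) (P : α → Prop) :
    uniformProb s P = 𝔼 x ∈ s, if P x then (1 : ℝ) else 0 := by
  rw [expect_eq_sum_div_card, sum_boole, uniformProb]

lemma uniformProb_nonneg (s : Finset α) (P : α → Prop) : 0 ≤ uniformProb s P := by
  unfold uniformProb
  positivity

lemma uniformProb_le_one (s : Finset α) (P : α → Prop) : uniformProb s P ≤ 1 :=
  div_le_one_of_le₀ (mod_cast card_filter_le _ _) (Nat.cast_nonneg _)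

lemma uniformProb_mono (h : ∀ x ∈ s, P x → Q x) : uniformProb s P ≤ uniformProb s Q := by
  unfold uniformProb
  gcongr
  exact h _ ‹_›

lemma uniformProb_eq_zero (h : ∀ x ∈ s, ¬ P x) : uniformProb s P = 0 := by
  rw [uniformProb, filter_eq_empty_iff.2 h, card_empty, Nat.cast_zero, zero_div]

lemma uniformProb_exists_le (s : Finset α) (I : Finset ι) (P : ι → α → Prop) :
    uniformProb s (fun x => ∃ i ∈ I, P i x) ≤ ∑ i ∈ I, uniformProb s (P i) := by
  simp only [uniformProb, ← sum_div]
  gcongr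
  have h : #{x ∈ s | ∃ i ∈ I, P i x} ≤ ∑ i ∈ I, #{x ∈ s | P i x} := by
    refine (card_le_card fun x hx => ?_).trans card_biUnion_le
    simp only [mem_filter, mem_biUnion] at hx ⊢
    obtain ⟨hxs, i, hi, hPx⟩ := hx
    exact ⟨i, hi, hxs, hPx⟩
  exact_mod_cast h

lemma uniformProb_or_le (s : Finset α) (P Q : α → Prop) :
    uniformProb s (fun x => P x ∨ Q x) ≤ uniformProb s P + uniformProb s Q := by
  simp only [uniformProb, ← add_div]
  gcongr
  rw [filter_or]
  exact_mod_cast card_union_le _ _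

lemma uniformProb_and (s : Finset α) (P Q : α → Prop) :
    uniformProb s (fun x => P x ∧ Q x) = uniformProb s P * uniformProb {x ∈ s | P x} Q := by
  unfold uniformProb
  rw [filter_filter]
  rcases eq_or_ne #{x ∈ s | P x} 0 with h | h
  · have hle : #{x ∈ s | P x ∧ Q x} ≤ #{x ∈ s | P x} := by
      rw [← filter_filter]
      exact card_filter_le _ _
    simp [h, Nat.le_zero.1 (hle.trans_eq h)]
  · field_simp

lemma uniformProb_mul_le_expect {G : α → ℝ} {b : ℝ} (hG : ∀ x ∈ s, 0 ≤ G x)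
    (hb : ∀ x ∈ s, P x → b ≤ G x) : uniformProb s P * b ≤ 𝔼 x ∈ s, G x := by
  rw [uniformProb_eq_expect, expect_mul]
  refine expect_le_expect fun x hx => ?_
  split_ifs with hPx
  · simpa only [one_mul] using hb x hx hPx
  · simpa only [zero_mul] using hG x hx

/-- Cauchy–Schwarz for the number of events `P i` that occur. -/
lemma sq_sum_uniformProb_le (s : Finset α) (I : Finset ι) (P : ι → α → Prop) :
    (∑ i ∈ I, uniformProb s (P i)) ^ 2 ≤ uniformProb s (fun x => ∃ i ∈ I, P i x) *
      ∑ p ∈ I ×ˢ I, uniformProb s (fun x => P p.1 x ∧ P p.2 x) := by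
  let some : α → ℝ := fun x => if ∃ i ∈ I, P i x then 1 else 0
  let number : α → ℝ := fun x => ∑ i ∈ I, if P i x then 1 else 0
  have first : ∑ i ∈ I, uniformProb s (P i) = 𝔼 x ∈ s, some x * number x := by
    simp only [uniformProb_eq_expect, ← expect_sum_comm]
    refine expect_congr rfl fun x _ => ?_
    by_cases h : ∃ i ∈ I, P i x
    · simp only [some, number, if_pos h, one_mul]
    · simp only [some, if_neg h, zero_mul]
      exact sum_eq_zero fun i hi => if_neg fun hP => h ⟨i, hi, hP⟩
  have second : ∑ p ∈ I ×ˢ I, uniformProb s (fun x => P p.1 x ∧ P p.2 x) =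
      𝔼 x ∈ s, number x ^ 2 := by
    simp only [uniformProb_eq_expect, ← expect_sum_comm]
    refine expect_congr rfl fun x _ => ?_
    rw [pow_two, sum_mul_sum, sum_product]
    refine sum_congr rfl fun i _ => sum_congr rfl fun j _ => ?_
    by_cases hi : P i x <;> by_cases hj : P j x <;> simp [hi, hj]
  have hsome : uniformProb s (fun x => ∃ i ∈ I, P i x) = 𝔼 x ∈ s, some x ^ 2 := by
    rw [uniformProb_eq_expect]
    exact expect_congr rfl fun x _ => by simp only [some]; split_ifs <;> norm_num
  rw [first, second, hsome]
  exact expect_mul_sq_le_sq_mul_sq s some number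

lemma card_filter_comp_of_card_fiber {β : Type*} [DecidableEq β] {t : Finset β} {f : α → β}
    {N : ℕ} (hst : ∀ x ∈ s, f x ∈ t) (hf : ∀ y ∈ t, #{x ∈ s | f x = y} = N) (P : β → Prop) :
    #{x ∈ s | P (f x)} = #{y ∈ t | P y} * N := by
  rw [card_eq_sum_card_fiberwise (f := f) (t := {y ∈ t | P y}) fun x hx => by
      simp only [coe_filter, Set.mem_ofPred_eq] at hx ⊢
      exact ⟨hst x hx.1, hx.2⟩]
  refine sum_const_nat fun y hy => ?_
  rw [← hf y (mem_filter.1 hy).1, filter_filter]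
  congr 1
  refine filter_congr fun x _ => and_iff_right_of_imp ?_
  rintro rfl
  exact (mem_filter.1 hy).2

lemma uniformProb_comp_of_card_fiber {β : Type*} [DecidableEq β] {t : Finset β} {f : α → β}
    {N : ℕ} (hN : N ≠ 0) (hst : ∀ x ∈ s, f x ∈ t) (hf : ∀ y ∈ t, #{x ∈ s | f x = y} = N)
    (P : β → Prop) :
    uniformProb s (fun x => P (f x)) = uniformProb t P := by
  have hs : #s = #t * N := by
    simpa only [filter_true] using card_filter_comp_of_card_fiber hst hf fun _ => True
  rw [uniformProb, card_filter_comp_of_card_fiber hst hf, hs, uniformProb]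
  push_cast
  exact mul_div_mul_right _ _ (Nat.cast_ne_zero.2 hN)

end UniformProb

/-! ### Concentration for random permutations -/

section Concentration

/-- Hoeffding's lemma. -/
lemma expect_exp_le_of_expect_eq_zero {ι : Type*} [Fintype ι] [Nonempty ι] {x : ι → ℝ} {a : ℝ}
    (hmean : 𝔼 i, x i = 0) (hx : ∀ i, |x i| ≤ a) : 𝔼 i, exp (x i) ≤ exp (a ^ 2 / 2) := by
  let _ : MeasurableSpace ι := ⊤
  have hint : ∀ f : ι → ℝ, ∫ i, f i ∂(PMF.uniformOfFintype ι).toMeasure = 𝔼 i, f i := by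
    intro f
    simp [PMF.integral_eq_sum, PMF.uniformOfFintype_apply, expect_eq_sum_div_card, ← mul_sum,
      div_eq_inv_mul]
  have hsub := (ProbabilityTheory.hasSubgaussianMGF_of_mem_Icc_of_integral_eq_zero
    (μ := (PMF.uniformOfFintype ι).toMeasure) (X := x) (a := -a) (b := a)
    (measurable_from_top).aemeasurable (.of_forall fun i => abs_le.1 (hx i))
    ((hint x).trans hmean)).mgf_le 1
  rw [ProbabilityTheory.mgf, hint] at hsub
  refine le_of_le_of_eq (by simpa only [one_mul] using hsub) ?_
  congr 1
  push_cast
  rw [Real.norm_eq_abs, div_pow, sq_abs]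
  ring

variable {α : Type*} [Fintype α] [DecidableEq α]

/-- Exposing the image of one point of a random permutation. -/
lemma expect_perm_option (F : Equiv.Perm (Option α) → ℝ) :
    𝔼 σ, F σ = 𝔼 p : Option α, 𝔼 τ : Equiv.Perm α, F (Equiv.swap none p * τ.optionCongr) := by
  rw [← Finset.expect_product']
  exact Fintype.expect_equiv Equiv.Perm.decomposeOption _ _ fun σ => by
    rw [← Equiv.Perm.decomposeOption.symm_apply_apply σ]
    simp

/-- `F` changes by at most `c` when two values of the permutation are exchanged. -/
def SwapLipschitz (c : ℝ) (F : Equiv.Perm α → ℝ) : Prop :=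
  ∀ σ a b, |F (Equiv.swap a b * σ) - F σ| ≤ c

namespace SwapLipschitz

variable {c : ℝ} {F : Equiv.Perm α → ℝ}

omit [Fintype α] in
lemma const_mul (hF : SwapLipschitz c F) (l : ℝ) :
    SwapLipschitz (|l| * c) (fun σ => l * F σ) := fun σ a b => by
  rw [← mul_sub, abs_mul]
  exact mul_le_mul_of_nonneg_left (hF σ a b) (abs_nonneg l)

omit [Fintype α] in
lemma comp_permCongr {β : Type*} [DecidableEq β] {F : Equiv.Perm β → ℝ} (hF : SwapLipschitz c F)
    (e : α ≃ β) : SwapLipschitz c (fun σ => F (e.permCongr σ)) := fun σ a b => by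
  have h : e.permCongr (Equiv.swap a b * σ) = Equiv.swap (e a) (e b) * e.permCongr σ := by
    ext x
    simp [Equiv.permCongr_apply, Equiv.swap_apply_def, apply_ite e]
  simpa only [h] using hF _ _ _

omit [Fintype α] in
lemma comp_optionCongr {F : Equiv.Perm (Option α) → ℝ} (hF : SwapLipschitz c F) (p : Option α) :
    SwapLipschitz c (fun τ : Equiv.Perm α => F (Equiv.swap none p * τ.optionCongr)) := by
  intro τ a b
  have h : Equiv.swap none p * (Equiv.swap a b * τ).optionCongr =
      Equiv.swap (Equiv.swap none p (some a)) (Equiv.swap none p (some b)) *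
        (Equiv.swap none p * τ.optionCongr) := by
    have : (Equiv.swap a b * τ).optionCongr = Equiv.swap (some a) (some b) * τ.optionCongr := by
      rw [← Equiv.optionCongr_swap]
      ext x
      cases x <;> rfl
    rw [this, ← mul_assoc, ← mul_assoc, ← Equiv.mul_swap_eq_swap_mul]
  simpa only [h] using hF _ _ _

/-- The conditional mean given that `none ↦ p` is within `c` of the one given that `none` is fixed,
and so is the overall mean. -/
lemma abs_expect_option_sub_le {F : Equiv.Perm (Option α) → ℝ} (hF : SwapLipschitz c F)
    (p : Option α) :
    |(𝔼 τ : Equiv.Perm α, F (Equiv.swap none p * τ.optionCongr)) - 𝔼 σ, F σ| ≤ 2 * c := by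
  let mean (q : Option α) : ℝ := 𝔼 τ : Equiv.Perm α, F (Equiv.swap none q * τ.optionCongr)
  have hnone : ∀ q, |mean q - mean none| ≤ c := fun q => by
    rw [← expect_sub_distrib]
    refine (abs_expect_le _ _).trans (expect_le univ_nonempty fun τ _ => ?_)
    rw [Equiv.swap_self]
    exact hF τ.optionCongr none q
  have htotal : |𝔼 σ, F σ - mean none| ≤ c := by
    rw [expect_perm_option, ← Fintype.expect_const (ι := Option α) (mean none),
      ← expect_sub_distrib]
    exact (abs_expect_le _ _).trans (expect_le univ_nonempty fun q _ => hnone q)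
  calc |mean p - 𝔼 σ, F σ| ≤ |mean p - mean none| + |mean none - 𝔼 σ, F σ| := abs_sub_le _ _ _
    _ ≤ c + c := add_le_add (hnone p) (abs_sub_comm _ (mean none) ▸ htotal)
    _ = 2 * c := (two_mul c).symm

lemma expect_exp_expect_option_le {F : Equiv.Perm (Option α) → ℝ} (hF : SwapLipschitz c F) :
    𝔼 p : Option α, exp (𝔼 τ : Equiv.Perm α, F (Equiv.swap none p * τ.optionCongr)) ≤
      exp (𝔼 σ, F σ + 2 * c ^ 2) := by
  have hmean : 𝔼 p : Option α,
      ((𝔼 τ : Equiv.Perm α, F (Equiv.swap none p * τ.optionCongr)) - 𝔼 σ, F σ) = 0 := by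
    rw [expect_sub_distrib, Fintype.expect_const, ← expect_perm_option, sub_self]
  have hoeffding := expect_exp_le_of_expect_eq_zero hmean hF.abs_expect_option_sub_le
  simp only [exp_sub, ← expect_div] at hoeffding
  rw [div_le_iff₀ (exp_pos _), ← exp_add] at hoeffding
  exact hoeffding.trans_eq (by ring_nf)

/-- The subgaussian bound, by exposing the image of one point at a time. -/
lemma expect_exp_le {F : Equiv.Perm α → ℝ} (hF : SwapLipschitz c F) :
    𝔼 σ, exp (F σ) ≤ exp (𝔼 σ, F σ + 2 * c ^ 2 * Fintype.card α) := by
  revert F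
  refine Fintype.induction_empty_option (P := fun α _ => ∀ [DecidableEq α] {F : Equiv.Perm α → ℝ},
    SwapLipschitz c F → 𝔼 σ, exp (F σ) ≤ exp (𝔼 σ, F σ + 2 * c ^ 2 * Fintype.card α)) ?_ ?_ ?_ α
  · intro α β _ e ih _ F hF
    let _ : Fintype α := Fintype.ofEquiv _ e.symm
    rw [← Fintype.card_congr e, ← Fintype.expect_equiv e.permCongr _ _ fun _ => rfl,
      ← Fintype.expect_equiv e.permCongr _ F fun _ => rfl]
    exact ih (hF.comp_permCongr e)
  · intro _ F _
    simp
  · intro α _ ih inst F hF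
    obtain rfl : inst = Option.instDecidableEq := Subsingleton.elim _ _
    calc 𝔼 σ, exp (F σ)
        = 𝔼 p : Option α, 𝔼 τ : Equiv.Perm α, exp (F (Equiv.swap none p * τ.optionCongr)) :=
          expect_perm_option _
      _ ≤ 𝔼 p : Option α, exp (𝔼 τ : Equiv.Perm α, F (Equiv.swap none p * τ.optionCongr) +
            2 * c ^ 2 * Fintype.card α) :=
          expect_le_expect fun p _ => ih (hF.comp_optionCongr p)
      _ ≤ exp (𝔼 σ, F σ + 2 * c ^ 2) * exp (2 * c ^ 2 * Fintype.card α) := by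
          simp only [exp_add _ (2 * c ^ 2 * Fintype.card α), ← expect_mul]
          gcongr
          exact hF.expect_exp_expect_option_le
      _ = exp (𝔼 σ, F σ + 2 * c ^ 2 * Fintype.card (Option α)) := by
          rw [← exp_add, Fintype.card_option]
          push_cast
          ring_nf

end SwapLipschitz

variable [Nonempty α] {c t : ℝ} {F : Equiv.Perm α → ℝ}

lemma uniformProb_expect_add_le (hF : SwapLipschitz c F) (hc : 0 < c) (ht : 0 ≤ t) :
    uniformProb univ (fun σ => 𝔼 τ, F τ + t ≤ F σ) ≤
      exp (-(t ^ 2 / (8 * c ^ 2 * Fintype.card α))) := by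
  set N : ℝ := (Fintype.card α : ℝ)
  have hN : 0 < N := Nat.cast_pos.2 Fintype.card_pos
  set l := t / (4 * c ^ 2 * N) with hl
  have : 0 ≤ l := by positivity
  have markov := uniformProb_mul_le_expect (s := univ) (P := fun σ => 𝔼 τ, F τ + t ≤ F σ)
    (G := fun σ => exp (l * F σ)) (b := exp (l * (𝔼 τ, F τ + t))) (fun σ _ => (exp_pos _).le)
    fun σ _ hσ => by gcongr
  have mgf := (hF.const_mul l).expect_exp_le
  rw [← mul_expect, mul_pow, sq_abs] at mgf
  rw [← le_div_iff₀ (exp_pos _)] at markov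
  refine markov.trans ((div_le_div_of_nonneg_right mgf (exp_pos _).le).trans_eq ?_)
  rw [← exp_sub, hl]
  congr 1
  field_simp
  ring

/-- The lower tail bound shows that the mean is less than `t`; the upper tail bound then applies. -/
lemma uniformProb_two_mul_le_of_lt_uniformProb_nonpos (hF : SwapLipschitz c F) (hc : 0 < c)
    (ht : 0 ≤ t)
    (h : exp (-(t ^ 2 / (8 * c ^ 2 * Fintype.card α))) < uniformProb univ (fun σ => F σ ≤ 0)) :
    uniformProb univ (fun σ => 2 * t ≤ F σ) ≤ exp (-(t ^ 2 / (8 * c ^ 2 * Fintype.card α))) := by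
  have hneg : SwapLipschitz c (fun σ => -F σ) := by simpa using hF.const_mul (-1)
  have hmean : 𝔼 σ, F σ < t := by
    by_contra! hmean
    refine h.not_ge ((uniformProb_mono fun σ _ hσ => ?_).trans
      (uniformProb_expect_add_le hneg hc ht))
    rw [expect_neg_distrib]
    linarith
  exact (uniformProb_mono fun σ _ hσ => by linarith).trans (uniformProb_expect_add_le hF hc ht)

end Concentration

/-! ### Random words with prescribed letter counts -/

section Words

variable {S T V K : Type*} [Fintype S] [Fintype T] [Fintype V] [Fintype K]

/-- The number of occurrences of the letter `κ` in the word `w`. -/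
noncomputable def letterCount (w : S → K) (κ : K) : ℕ := #{s | w s = κ}

omit [Fintype K] in
lemma letterCount_le_card (w : S → K) (κ : K) : letterCount w κ ≤ Fintype.card S :=
  card_le_univ _

lemma sum_letterCount (w : S → K) : ∑ κ, letterCount w κ = Fintype.card S :=
  (card_eq_sum_card_fiberwise fun _ _ => mem_coe.2 (mem_univ _)).symm

omit [Fintype K] in
lemma letterCount_comp_equiv (w : S → K) (e : T ≃ S) : letterCount (w ∘ e) = letterCount w := by
  funext κ
  exact card_equiv e fun t => by simp only [mem_filter_univ, Function.comp_apply]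

omit [Fintype K] in
lemma letterCount_comp (c : V → K) (g : S → V) (κ : K) :
    letterCount (c ∘ g) κ = ∑ v with c v = κ, letterCount g v := by
  rw [letterCount, card_eq_sum_card_fiberwise (f := g) (t := {v | c v = κ}) fun s hs => by
    simpa using hs]
  refine sum_congr rfl fun v hv => ?_
  rw [filter_filter, letterCount]
  congr 1
  refine filter_congr fun s _ => and_iff_right_of_imp ?_
  rintro rfl
  exact (mem_filter.1 hv).2

lemma prod_comp_eq_prod_pow_letterCount (w : S → K) (a : K → ℝ) :
    ∏ s, a (w s) = ∏ κ, a κ ^ letterCount w κ := by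
  simp only [letterCount, ← prod_const]
  rw [← prod_fiberwise' univ w a]

/-- All words with the same letter counts as `w₀`. -/
noncomputable def rearrangements (w₀ : S → K) : Finset (S → K) :=
  {w | letterCount w = letterCount w₀}

lemma mem_rearrangements {w w₀ : S → K} :
    w ∈ rearrangements w₀ ↔ letterCount w = letterCount w₀ := by
  simp [rearrangements]

lemma exists_comp_perm_eq {w w₀ : S → K} (h : w ∈ rearrangements w₀) :
    ∃ σ : Equiv.Perm S, w₀ ∘ σ = w := by
  have e (κ : K) : {s // w s = κ} ≃ {s // w₀ s = κ} := Fintype.equivOfCardEq <| by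
    simpa only [Fintype.card_subtype, letterCount] using congrFun (mem_rearrangements.1 h) κ
  exact ⟨Equiv.ofFiberEquiv e, funext (Equiv.ofFiberEquiv_map e)⟩

/-- These permutations form a coset of the stabilizer of `w₀`. -/
lemma card_perm_comp_eq [DecidableEq S] {w w₀ : S → K} (h : w ∈ rearrangements w₀) :
    #{σ : Equiv.Perm S | w₀ ∘ σ = w} = ∏ κ, (letterCount w₀ κ).factorial := by
  obtain ⟨τ, rfl⟩ := exists_comp_perm_eq h
  have coset : #{σ : Equiv.Perm S | w₀ ∘ σ = w₀ ∘ τ} = #{σ : Equiv.Perm S | w₀ ∘ σ = w₀} := by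
    refine card_equiv (Equiv.mulRight τ⁻¹) fun σ => ?_
    simp only [mem_filter_univ, Equiv.coe_mulRight, Equiv.Perm.coe_mul, ← Function.comp_assoc,
      Equiv.Perm.coe_inv, Equiv.comp_symm_eq]
  have stabilizer := DomMulAct.stabilizer_card w₀
  rw [Fintype.card_subtype] at stabilizer
  rw [coset]
  convert stabilizer using 2
  rw [Fintype.card_subtype]
  simp [letterCount]

lemma prod_factorial_letterCount_ne_zero (w : S → K) :
    ∏ κ, (letterCount w κ).factorial ≠ 0 :=
  prod_ne_zero_iff.2 fun _ _ => Nat.factorial_ne_zero _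

lemma comp_perm_mem_rearrangements (w₀ : S → K) (σ : Equiv.Perm S) :
    w₀ ∘ σ ∈ rearrangements w₀ :=
  mem_rearrangements.2 (letterCount_comp_equiv w₀ σ)

lemma uniformProb_rearrangements [DecidableEq S] (w₀ : S → K) (A : (S → K) → Prop) :
    uniformProb (rearrangements w₀) A =
      uniformProb univ (fun σ : Equiv.Perm S => A (w₀ ∘ σ)) :=
  (uniformProb_comp_of_card_fiber (prod_factorial_letterCount_ne_zero w₀)
    (fun σ _ => comp_perm_mem_rearrangements w₀ σ) (fun _ hw => card_perm_comp_eq hw) A).symm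

lemma card_rearrangements_mul (w₀ : S → K) :
    #(rearrangements w₀) * ∏ κ, (letterCount w₀ κ).factorial = (Fintype.card S).factorial := by
  have h := card_filter_comp_of_card_fiber
    (fun σ (_ : σ ∈ univ) => comp_perm_mem_rearrangements w₀ σ)
    (fun _ hw => card_perm_comp_eq hw) fun _ => True
  rw [filter_true, filter_true, card_univ, Fintype.card_perm] at h
  exact h.symm

lemma card_rearrangements_pos (w₀ : S → K) : 0 < #(rearrangements w₀) :=
  card_pos.2 ⟨w₀, mem_rearrangements.2 rfl⟩

lemma card_filter_rearrangements_le (w₀ : S → K) (A : (S → K) → Prop) :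
    (#{w ∈ rearrangements w₀ | A w} : ℝ) ≤
      (Fintype.card K : ℝ) ^ Fintype.card S * uniformProb (rearrangements w₀) A := by
  have hcard : (#(rearrangements w₀) : ℝ) ≤ (Fintype.card K : ℝ) ^ Fintype.card S := by
    exact_mod_cast (card_le_univ _).trans_eq Fintype.card_fun
  rw [uniformProb, mul_div_assoc', le_div_iff₀ (mod_cast card_rearrangements_pos w₀), mul_comm]
  gcongr

end Words

/-! ### Comparison with independent letters -/

section IndependentLetters

variable {S V K : Type*} [Fintype S] [Fintype V] [Fintype K]

/-- The probability of the event `A` for a word of independent letters, in which the letter `κ`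
has weight `a κ`. -/
noncomputable def iidMass (a : K → ℝ) (A : (S → K) → Prop) : ℝ := ∑ w with A w, ∏ s, a (w s)

lemma iidMass_nonneg {a : K → ℝ} (ha : ∀ κ, 0 ≤ a κ) (A : (S → K) → Prop) : 0 ≤ iidMass a A :=
  sum_nonneg fun _ _ => prod_nonneg fun _ _ => ha _

lemma iidMass_mono {a : K → ℝ} (ha : ∀ κ, 0 ≤ a κ) {A B : (S → K) → Prop} (h : ∀ w, A w → B w) :
    iidMass a A ≤ iidMass a B :=
  sum_le_sum_of_subset_of_nonneg (monotone_filter_right _ fun w _ => h w)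
    fun _ _ _ => prod_nonneg fun _ _ => ha _

lemma iidMass_true (a : K → ℝ) :
    iidMass a (fun _ : S → K => True) = (∑ κ, a κ) ^ Fintype.card S := by
  rw [iidMass, filter_true, ← Fintype.piFinset_univ, ← prod_univ_sum, prod_const, card_univ]

lemma iidMass_mem_rearrangements (a : K → ℝ) (w₀ : S → K) (A : (S → K) → Prop) :
    iidMass a (fun w => w ∈ rearrangements w₀ ∧ A w) =
      #{w ∈ rearrangements w₀ | A w} * ∏ s, a (w₀ s) := by
  rw [iidMass, ← nsmul_eq_mul, ← sum_const]
  refine sum_congr (by ext; simp) fun w hw => ?_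
  rw [prod_comp_eq_prod_pow_letterCount, prod_comp_eq_prod_pow_letterCount,
    mem_rearrangements.1 (mem_filter.1 hw).1]

/-- The proportion of the letter `κ` in the word `w`. -/
noncomputable def letterFreq (w : S → K) (κ : K) : ℝ := (letterCount w κ : ℝ) / Fintype.card S

omit [Fintype K] in
lemma letterFreq_nonneg (w : S → K) (κ : K) : 0 ≤ letterFreq w κ := by
  unfold letterFreq
  positivity

lemma sum_letterFreq [Nonempty S] (w : S → K) : ∑ κ, letterFreq w κ = 1 := by
  simp only [letterFreq, ← sum_div]
  rw [← Nat.cast_sum, sum_letterCount, div_self (Nat.cast_ne_zero.2 Fintype.card_ne_zero)]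

/-- The polynomial factor lost in passing from `N` independent letters in an alphabet of size `k`
to words with prescribed letter counts. -/
noncomputable def polyLoss (N k : ℕ) : ℝ := (exp 1 * (N + 1)) ^ k

lemma polyLoss_pos (N k : ℕ) : 0 < polyLoss N k := by
  unfold polyLoss
  positivity

lemma factorial_le_exp_mul (n : ℕ) :
    (n.factorial : ℝ) ≤ exp 1 * (n + 1) * (n / exp 1) ^ n := by
  obtain _ | n := n
  · simp
  have stirling : Stirling.stirlingSeq (n + 1) ≤ exp 1 / √2 := by
    simpa [Stirling.stirlingSeq_one] using Stirling.stirlingSeq'_antitone n.zero_le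
  rw [Stirling.stirlingSeq, div_le_iff₀ (by positivity)] at stirling
  have hsqrt : √(n + 1 : ℕ) ≤ (n + 1 : ℕ) + 1 :=
    sqrt_le_iff.2 ⟨by positivity, by nlinarith [Nat.cast_nonneg (α := ℝ) (n + 1)]⟩
  calc ((n + 1).factorial : ℝ)
      ≤ exp 1 / √2 * (√(2 * (n + 1 : ℕ)) * ((n + 1 : ℕ) / exp 1) ^ (n + 1)) := stirling
    _ = exp 1 * √(n + 1 : ℕ) * ((n + 1 : ℕ) / exp 1) ^ (n + 1) := by
        rw [sqrt_mul zero_le_two]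
        field_simp
    _ ≤ exp 1 * ((n + 1 : ℕ) + 1) * ((n + 1 : ℕ) / exp 1) ^ (n + 1) := by gcongr

lemma prod_factorial_letterCount_le (w : S → K) :
    ∏ κ, ((letterCount w κ).factorial : ℝ) ≤
      polyLoss (Fintype.card S) (Fintype.card K) *
        ((Fintype.card S).factorial * ∏ s, letterFreq w (w s)) := by
  have hfreq : ∏ κ, ((letterCount w κ : ℝ) / exp 1) ^ letterCount w κ =
      (Fintype.card S / exp 1) ^ Fintype.card S * ∏ s, letterFreq w (w s) := by
    rw [prod_comp_eq_prod_pow_letterCount, ← sum_letterCount w, ← prod_pow_eq_pow_sum,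
      ← prod_mul_distrib]
    refine prod_congr rfl fun κ _ => ?_
    obtain h0 | h0 := Nat.eq_zero_or_pos (letterCount w κ)
    · simp [h0]
    · have hS : (Fintype.card S : ℝ) ≠ 0 :=
        Nat.cast_ne_zero.2 (h0.trans_le (letterCount_le_card w κ)).ne'
      rw [← mul_pow, letterFreq, sum_letterCount]
      field_simp
  have hfactorial : ((Fintype.card S : ℝ) / exp 1) ^ Fintype.card S ≤
      (Fintype.card S).factorial := by
    have h := pow_div_factorial_le_exp (Fintype.card S : ℝ) (by positivity) (Fintype.card S)
    rw [div_le_iff₀ (by positivity)] at h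
    rwa [div_pow, div_le_iff₀' (by positivity), ← exp_nat_mul, mul_one]
  calc ∏ κ, ((letterCount w κ).factorial : ℝ)
      ≤ ∏ κ, exp 1 * (Fintype.card S + 1) *
          ((letterCount w κ : ℝ) / exp 1) ^ letterCount w κ := by
        gcongr with κ
        refine (factorial_le_exp_mul _).trans ?_
        gcongr
        exact letterCount_le_card w κ
    _ = polyLoss (Fintype.card S) (Fintype.card K) *
          ((Fintype.card S / exp 1) ^ Fintype.card S * ∏ s, letterFreq w (w s)) := by
        rw [prod_mul_distrib, prod_const, card_univ, hfreq, polyLoss]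
    _ ≤ polyLoss (Fintype.card S) (Fintype.card K) *
          ((Fintype.card S).factorial * ∏ s, letterFreq w (w s)) := by
        have := polyLoss_pos (Fintype.card S) (Fintype.card K)
        have : 0 ≤ ∏ s, letterFreq w (w s) := prod_nonneg fun _ _ => letterFreq_nonneg _ _
        gcongr

lemma one_le_polyLoss_mul_card_rearrangements_mul (w₀ : S → K) :
    1 ≤ polyLoss (Fintype.card S) (Fintype.card K) *
      (#(rearrangements w₀) * ∏ s, letterFreq w₀ (w₀ s)) := by
  have hcard : (#(rearrangements w₀) : ℝ) * ∏ κ, ((letterCount w₀ κ).factorial : ℝ) =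
      (Fintype.card S).factorial := mod_cast card_rearrangements_mul w₀
  have h := mul_le_mul_of_nonneg_left (prod_factorial_letterCount_le w₀)
    (Nat.cast_nonneg (α := ℝ) #(rearrangements w₀))
  rw [hcard] at h
  refine le_of_mul_le_mul_left ?_ (Nat.cast_pos.2 (Nat.factorial_pos (Fintype.card S)))
  rw [mul_one]
  exact h.trans_eq (by ring)

lemma uniformProb_rearrangements_le (w₀ : S → K) (A : (S → K) → Prop) :
    uniformProb (rearrangements w₀) A ≤
      polyLoss (Fintype.card S) (Fintype.card K) * iidMass (letterFreq w₀) A := by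
  have hcard : (0 : ℝ) < #(rearrangements w₀) := mod_cast card_rearrangements_pos w₀
  calc uniformProb (rearrangements w₀) A
      ≤ uniformProb (rearrangements w₀) A * (polyLoss (Fintype.card S) (Fintype.card K) *
          (#(rearrangements w₀) * ∏ s, letterFreq w₀ (w₀ s))) :=
        le_mul_of_one_le_right (uniformProb_nonneg _ _)
          (one_le_polyLoss_mul_card_rearrangements_mul w₀)
    _ = polyLoss (Fintype.card S) (Fintype.card K) *
          iidMass (letterFreq w₀) (fun w => w ∈ rearrangements w₀ ∧ A w) := by
        rw [iidMass_mem_rearrangements, uniformProb]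
        field_simp
    _ ≤ polyLoss (Fintype.card S) (Fintype.card K) * iidMass (letterFreq w₀) A :=
        mul_le_mul_of_nonneg_left (iidMass_mono (letterFreq_nonneg w₀) fun _ h => h.2)
          (polyLoss_pos _ _).le

lemma card_pow_le_polyLoss_mul_card_rearrangements [Nonempty S] {w₀ : S → K} {C : ℝ}
    (h : ∀ κ, (letterCount w₀ κ : ℝ) ≤ (Fintype.card S : ℝ) / Fintype.card K + C) :
    (Fintype.card K : ℝ) ^ Fintype.card S ≤
      polyLoss (Fintype.card S) (Fintype.card K) * exp (C * Fintype.card K) *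
        #(rearrangements w₀) := by
  have : Nonempty K := ‹Nonempty S›.map w₀
  have hfreq (κ : K) :
      Fintype.card K * letterFreq w₀ κ ≤ exp (C * Fintype.card K / Fintype.card S) := by
    refine le_trans ?_ (add_one_le_exp _)
    rw [letterFreq, mul_div_assoc', div_le_iff₀ (by positivity)]
    refine (mul_le_mul_of_nonneg_left (h κ) (Nat.cast_nonneg _)).trans_eq ?_
    field_simp
    ring
  have hprod : (Fintype.card K : ℝ) ^ Fintype.card S * ∏ s, letterFreq w₀ (w₀ s) ≤
      exp (C * Fintype.card K) := by
    rw [← card_univ (α := S), ← prod_const, ← prod_mul_distrib]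
    refine (prod_le_prod (fun s _ => mul_nonneg (Nat.cast_nonneg _) (letterFreq_nonneg _ _))
      fun s _ => hfreq (w₀ s)).trans_eq ?_
    rw [prod_const, ← exp_nat_mul, card_univ]
    field_simp
  calc (Fintype.card K : ℝ) ^ Fintype.card S
      ≤ (Fintype.card K : ℝ) ^ Fintype.card S *
          (polyLoss (Fintype.card S) (Fintype.card K) *
            (#(rearrangements w₀) * ∏ s, letterFreq w₀ (w₀ s))) :=
        le_mul_of_one_le_right (by positivity) (one_le_polyLoss_mul_card_rearrangements_mul w₀)
    _ = polyLoss (Fintype.card S) (Fintype.card K) *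
          ((Fintype.card K : ℝ) ^ Fintype.card S * ∏ s, letterFreq w₀ (w₀ s)) *
            #(rearrangements w₀) := by ring
    _ ≤ polyLoss (Fintype.card S) (Fintype.card K) * exp (C * Fintype.card K) *
          #(rearrangements w₀) := by
        have := polyLoss_pos (Fintype.card S) (Fintype.card K)
        gcongr

/-- The number of possible letter counts, times the bound `1` for the sum over each class of
rearrangements. -/
lemma sum_prod_letterFreq_le [DecidableEq S] [Nonempty S] :
    ∑ w : S → K, ∏ s, letterFreq w (w s) ≤ ((Fintype.card S : ℝ) + 1) ^ Fintype.card K := by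
  let counts : Finset (K → ℕ) := Fintype.piFinset fun _ => range (Fintype.card S + 1)
  have hcounts (w : S → K) : letterCount w ∈ counts :=
    Fintype.mem_piFinset.2 fun κ => mem_range_succ_iff.2 (letterCount_le_card w κ)
  rw [← sum_fiberwise_of_maps_to (t := counts) fun w _ => hcounts w]
  have hclass : ∀ n ∈ counts,
      ∑ w : S → K with letterCount w = n, ∏ s, letterFreq w (w s) ≤ 1 := by
    intro n _
    by_cases hn : ∃ w₀ : S → K, letterCount w₀ = n
    · obtain ⟨w₀, rfl⟩ := hn
      calc ∑ w : S → K with letterCount w = letterCount w₀, ∏ s, letterFreq w (w s)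
          = ∑ w : S → K with letterCount w = letterCount w₀, ∏ s, letterFreq w₀ (w s) := by
            refine sum_congr rfl fun w hw => ?_
            simp only [letterFreq, (mem_filter.1 hw).2]
        _ = iidMass (letterFreq w₀) (fun w : S → K => letterCount w = letterCount w₀) := by
            unfold iidMass
            convert rfl
        _ ≤ iidMass (letterFreq w₀) (fun _ : S → K => True) :=
            iidMass_mono (letterFreq_nonneg w₀) fun _ _ => trivial
        _ = 1 := by rw [iidMass_true, sum_letterFreq, one_pow]
    · rw [filter_false_of_mem fun w _ hw => hn ⟨w, hw⟩, sum_empty]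
      exact zero_le_one
  refine (sum_le_sum hclass).trans_eq ?_
  simp [counts]

/-- All words in which every letter occurs exactly `d` times. -/
noncomputable def regularWords (S V : Type*) [Fintype S] [Fintype V] (d : ℕ) : Finset (S → V) :=
  {g | ∀ v, letterCount g v = d}

variable {d : ℕ} {g : S → V}

lemma mem_regularWords : g ∈ regularWords S V d ↔ ∀ v, letterCount g v = d := by
  simp [regularWords]

lemma rearrangements_of_mem_regularWords (hg : g ∈ regularWords S V d) :
    rearrangements g = regularWords S V d := by
  ext w
  rw [mem_rearrangements, mem_regularWords, funext_iff]
  exact forall_congr' fun v => by rw [mem_regularWords.1 hg v]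

lemma card_of_mem_regularWords (hg : g ∈ regularWords S V d) :
    Fintype.card S = d * Fintype.card V := by
  rw [← sum_letterCount g, sum_congr rfl fun v _ => mem_regularWords.1 hg v, sum_const, card_univ,
    smul_eq_mul, mul_comm]

omit [Fintype K] in
lemma letterCount_comp_of_mem_regularWords (hg : g ∈ regularWords S V d) (c : V → K) (κ : K) :
    letterCount (c ∘ g) κ = d * letterCount c κ := by
  rw [letterCount_comp, sum_congr rfl fun v _ => mem_regularWords.1 hg v, sum_const, smul_eq_mul,
    mul_comm, letterCount]

omit [Fintype K] in
lemma letterFreq_comp_of_mem_regularWords (hg : g ∈ regularWords S V d) (hd : d ≠ 0) (c : V → K) :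
    letterFreq (c ∘ g) = letterFreq c := by
  funext κ
  rw [letterFreq, letterCount_comp_of_mem_regularWords hg, card_of_mem_regularWords hg, letterFreq]
  push_cast
  exact mul_div_mul_left _ _ (Nat.cast_ne_zero.2 hd)

lemma uniformProb_regularWords_comp (hg : g ∈ regularWords S V d) (c : V → K)
    (A : (S → K) → Prop) :
    uniformProb (regularWords S V d) (fun w => A (c ∘ w)) =
      uniformProb (rearrangements (c ∘ g)) A := by
  rw [← rearrangements_of_mem_regularWords hg, uniformProb_rearrangements,
    uniformProb_rearrangements]
  rfl

lemma uniformProb_regularWords_comp_le (hd : d ≠ 0) (c : V → K) (A : (S → K) → Prop) :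
    uniformProb (regularWords S V d) (fun g => A (c ∘ g)) ≤
      polyLoss (Fintype.card S) (Fintype.card K) * iidMass (letterFreq c) A := by
  obtain hempty | ⟨g, hg⟩ := (regularWords S V d).eq_empty_or_nonempty
  · rw [uniformProb_eq_zero fun g hg => by simp [hempty] at hg]
    exact mul_nonneg (polyLoss_pos _ _).le (iidMass_nonneg (letterFreq_nonneg c) A)
  · rw [uniformProb_regularWords_comp hg, ← letterFreq_comp_of_mem_regularWords hg hd c]
    exact uniformProb_rearrangements_le _ A

end IndependentLetters

/-! ### Switching away defects -/

section Switching

variable {ι ρ V : Type*} [Fintype ι] [Fintype ρ]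

/-- Quadruples of slots, where `ι × ρ` is the set of slots of a word with rows indexed by `ι`. -/
abbrev SlotQuadruple (ι ρ : Type*) := (ι × ρ) × (ι × ρ) × (ι × ρ) × (ι × ρ)

/-- The defects of a word, whose rows are read as edges: two distinct slots in a row and two
distinct slots in a row carrying the same two vertices, where the first slots differ. A repeated
vertex in a row and a pair of rows sharing two vertices both give rise to a defect. -/
noncomputable def defects (f : ι × ρ → V) : Finset (SlotQuadruple ι ρ) :=
  {q | q.1 ≠ q.2.1 ∧ q.1.1 = q.2.1.1 ∧ q.2.2.1 ≠ q.2.2.2 ∧ q.2.2.1.1 = q.2.2.2.1 ∧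
    q.1 ≠ q.2.2.1 ∧ f q.1 = f q.2.2.1 ∧ f q.2.1 = f q.2.2.2}

lemma mem_defects {f : ι × ρ → V} {a b c e : ι × ρ} :
    (a, b, c, e) ∈ defects f ↔
      a ≠ b ∧ a.1 = b.1 ∧ c ≠ e ∧ c.1 = e.1 ∧ a ≠ c ∧ f a = f c ∧ f b = f e := by
  simp [defects]

/-- The slots in the row of `s`. -/
noncomputable def slotRow (s : ι × ρ) : Finset (ι × ρ) := {t | t.1 = s.1}

lemma mem_slotRow {s t : ι × ρ} : t ∈ slotRow s ↔ t.1 = s.1 := by simp [slotRow]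

lemma card_slotRow (s : ι × ρ) : #(slotRow s) = Fintype.card ρ := by
  have h : slotRow s = {s.1} ×ˢ univ := by
    ext t
    simp only [mem_slotRow, mem_product, mem_singleton, mem_univ, and_true]
  rw [h, card_product, card_singleton, one_mul, card_univ]

/-- The slots that carry the same vertex as `s`. -/
noncomputable def slotFiber (f : ι × ρ → V) (s : ι × ρ) : Finset (ι × ρ) := {t | f t = f s}

lemma mem_slotFiber {f : ι × ρ → V} {s t : ι × ρ} : t ∈ slotFiber f s ↔ f t = f s := by
  simp [slotFiber]

lemma card_slotFiber [Fintype V] {f : ι × ρ → V} {d : ℕ} (hf : f ∈ regularWords (ι × ρ) V d)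
    (s : ι × ρ) : #(slotFiber f s) = d :=
  mem_regularWords.1 hf (f s)

lemma swap_pairs_mem_defects {f : ι × ρ → V} {a b c e : ι × ρ} (h : (a, b, c, e) ∈ defects f) :
    (c, e, a, b) ∈ defects f := by
  obtain ⟨hab, hrab, hce, hrce, hac, h1, h2⟩ := mem_defects.1 h
  exact mem_defects.2 ⟨hce, hrce, hab, hrab, hac.symm, h1.symm, h2.symm⟩

lemma swap_slots_mem_defects {f : ι × ρ → V} {a b c e : ι × ρ} (h : (a, b, c, e) ∈ defects f)
    (hbe : b ≠ e) : (b, a, e, c) ∈ defects f := by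
  obtain ⟨hab, hrab, hce, hrce, -, h1, h2⟩ := mem_defects.1 h
  exact mem_defects.2 ⟨hab.symm, hrab.symm, hce.symm, hrce.symm, hbe, h2, h1⟩

lemma card_biUnion_le_mul_of_card_le {α β : Type*} [DecidableEq β] {s : Finset α}
    {f : α → Finset β} {a b : ℕ} (hs : #s ≤ a) (hf : ∀ x ∈ s, #(f x) ≤ b) :
    #(s.biUnion f) ≤ a * b :=
  (card_biUnion_le_card_mul _ _ _ hf).trans (Nat.mul_le_mul_right b hs)

section GoodPartner

/-- `t` is a good partner for exchanging the letters at `s` and `t`: no row meets both the row of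
`s` and the row of `t`, and the vertex at `t` occurs only once in the row of `t`. -/
def GoodPartner (f : ι × ρ → V) (s t : ι × ρ) : Prop :=
  (∀ a b : ι × ρ, a.1 = b.1 → ∀ u w : ι × ρ, u.1 = s.1 → w.1 = t.1 → f a = f u → f b ≠ f w) ∧
    ∀ u : ι × ρ, u.1 = t.1 → f u = f t → u = t

namespace GoodPartner

variable {f : ι × ρ → V} {s t a b c e : ι × ρ}

omit [Fintype ι] [Fintype ρ] in
lemma letter_ne (h : GoodPartner f s t) (ha : a.1 = s.1) (hb : b.1 = t.1) : f a ≠ f b :=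
  h.1 a a rfl a b ha hb rfl

omit [Fintype ι] [Fintype ρ] in
lemma row_ne (h : GoodPartner f s t) : s.1 ≠ t.1 := fun e => h.letter_ne rfl e rfl

lemma ne_left (h : GoodPartner f s t) (hq : (a, b, c, e) ∈ defects (f ∘ Equiv.swap s t)) :
    a ≠ s := by
  rintro rfl
  obtain ⟨hab, hrab, hce, hrce, hac, h1, h2⟩ := mem_defects.1 hq
  have hbt : b ≠ t := by rintro rfl; exact h.row_ne hrab
  simp only [Function.comp_apply, Equiv.swap_apply_left,
    Equiv.swap_apply_of_ne_of_ne hab.symm hbt] at h1 h2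
  obtain rfl | hct := eq_or_ne c t
  · rw [Equiv.swap_apply_right] at h1
    exact h.letter_ne rfl rfl h1.symm
  rw [Equiv.swap_apply_of_ne_of_ne hac.symm hct] at h1
  obtain rfl | hea := eq_or_ne e a
  · exact h.letter_ne hrce rfl h1.symm
  obtain rfl | het := eq_or_ne e t
  · exact hce (h.2 c hrce h1.symm)
  rw [Equiv.swap_apply_of_ne_of_ne hea het] at h2
  exact h.1 e c hrce.symm b t hrab.symm rfl h2.symm h1.symm

lemma ne_right (h : GoodPartner f s t) (hq : (a, b, c, e) ∈ defects (f ∘ Equiv.swap s t)) :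
    a ≠ t := by
  rintro rfl
  obtain ⟨hab, hrab, -, hrce, hac, h1, h2⟩ := mem_defects.1 hq
  have hbs : b ≠ s := by rintro rfl; exact h.row_ne hrab.symm
  simp only [Function.comp_apply, Equiv.swap_apply_right,
    Equiv.swap_apply_of_ne_of_ne hbs hab.symm] at h1 h2
  obtain rfl | hcs := eq_or_ne c s
  · rw [Equiv.swap_apply_left] at h1
    exact h.letter_ne rfl rfl h1
  rw [Equiv.swap_apply_of_ne_of_ne hcs hac.symm] at h1
  obtain rfl | hea := eq_or_ne e a
  · exact h.letter_ne rfl hrce h1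
  obtain rfl | hes := eq_or_ne e s
  · rw [Equiv.swap_apply_left] at h2
    exact hab (h.2 b hrab.symm h2).symm
  rw [Equiv.swap_apply_of_ne_of_ne hes hea] at h2
  exact h.1 c e hrce s b rfl hrab.symm h1.symm h2.symm

lemma comp_swap_apply (h : GoodPartner f s t) (hq : (a, b, c, e) ∈ defects (f ∘ Equiv.swap s t)) :
    (f ∘ Equiv.swap s t) a = f a :=
  congrArg f (Equiv.swap_apply_of_ne_of_ne (h.ne_left hq) (h.ne_right hq))

lemma defects_comp_swap_subset (h : GoodPartner f s t) :
    defects (f ∘ Equiv.swap s t) ⊆ defects f := by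
  rintro ⟨a, b, c, e⟩ hq
  obtain ⟨hab, hrab, hce, hrce, hac, h1, h2⟩ := mem_defects.1 hq
  have hq' := swap_pairs_mem_defects hq
  rw [h.comp_swap_apply hq, h.comp_swap_apply hq'] at h1
  refine mem_defects.2 ⟨hab, hrab, hce, hrce, hac, h1, ?_⟩
  obtain rfl | hbe := eq_or_ne b e
  · rfl
  · rwa [h.comp_swap_apply (swap_slots_mem_defects hq hbe),
      h.comp_swap_apply (swap_slots_mem_defects hq' hbe.symm)] at h2

lemma card_defects_comp_swap_lt (h : GoodPartner f s t) (hq : (s, b, c, e) ∈ defects f) :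
    #(defects (f ∘ Equiv.swap s t)) < #(defects f) :=
  card_lt_card (ssubset_of_subset_of_ne h.defects_comp_swap_subset fun heq =>
    h.ne_left (heq ▸ hq) rfl)

end GoodPartner

variable [Fintype V] {d : ℕ}

/-- A slot violating the first condition on good partners is reached from `s` by a path of bounded
length, and one violating the second condition is the first slot of a defect. -/
lemma card_not_goodPartner_le {f : ι × ρ → V} (hf : f ∈ regularWords (ι × ρ) V d) (s : ι × ρ) :
    #{t | ¬ GoodPartner f s t} ≤ Fintype.card ρ ^ 3 * d ^ 2 + #(defects f) * Fintype.card ρ := by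
  let near : Finset (ι × ρ) := (slotRow s).biUnion fun u => (slotFiber f u).biUnion fun a =>
    (slotRow a).biUnion fun b => (slotFiber f b).biUnion slotRow
  let defective : Finset (ι × ρ) := (defects f).biUnion fun q => slotRow q.1
  have hnear : #near ≤ Fintype.card ρ * (d * (Fintype.card ρ * (d * Fintype.card ρ))) :=
    card_biUnion_le_mul_of_card_le (card_slotRow s).le fun u _ =>
      card_biUnion_le_mul_of_card_le (card_slotFiber hf u).le fun a _ =>
        card_biUnion_le_mul_of_card_le (card_slotRow a).le fun b _ =>
          card_biUnion_le_mul_of_card_le (card_slotFiber hf b).le fun w _ => (card_slotRow w).le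
  have hdefective : #defective ≤ #(defects f) * Fintype.card ρ :=
    card_biUnion_le_card_mul _ _ _ fun q _ => (card_slotRow q.1).le
  have hsub : ({t | ¬ GoodPartner f s t} : Finset (ι × ρ)) ⊆ near ∪ defective := by
    intro t ht
    by_contra hcon
    simp only [near, defective, mem_union, not_or, mem_biUnion, mem_slotRow, mem_slotFiber,
      not_exists, not_and] at hcon
    refine (mem_filter.1 ht).2 ⟨fun a b hab u w hu hw h1 h2 =>
      hcon.1 u hu a h1 b hab.symm w h2.symm hw.symm, fun u hu huv => ?_⟩
    by_contra hne
    exact hcon.2 (t, u, u, t)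
      (mem_defects.2 ⟨Ne.symm hne, hu.symm, hne, hu, Ne.symm hne, huv.symm, huv⟩) rfl
  calc #{t | ¬ GoodPartner f s t} ≤ #near + #defective :=
        (card_le_card hsub).trans (card_union_le _ _)
    _ ≤ Fintype.card ρ * (d * (Fintype.card ρ * (d * Fintype.card ρ))) +
          #(defects f) * Fintype.card ρ := add_le_add hnear hdefective
    _ = Fintype.card ρ ^ 3 * d ^ 2 + #(defects f) * Fintype.card ρ := by ring

end GoodPartner

section DoubleCounting

/-- The pairs of a quadruple and a slot `t` outside its rows such that exchanging the letters at
`t` and at the first slot of the quadruple turns the quadruple into a defect. -/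
noncomputable def restoringSwitches (g : ι × ρ → V) : Finset (SlotQuadruple ι ρ × (ι × ρ)) :=
  {p | p.2.1 ≠ p.1.1.1 ∧ p.2.1 ≠ p.1.2.2.1.1 ∧ p.1 ∈ defects (g ∘ Equiv.swap p.1.1 p.2)}

lemma mem_restoringSwitches {g : ι × ρ → V} {q : SlotQuadruple ι ρ} {t : ι × ρ} :
    (q, t) ∈ restoringSwitches g ↔
      t.1 ≠ q.1.1 ∧ t.1 ≠ q.2.2.1.1 ∧ q ∈ defects (g ∘ Equiv.swap q.1 t) := by
  simp [restoringSwitches]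

/-- A quadruple that becomes a defect is a path in `g`, or a path with a missing link. -/
lemma mem_paths_of_mem_restoringSwitches {g : ι × ρ → V} {a b c e t : ι × ρ}
    (h : ((a, b, c, e), t) ∈ restoringSwitches g) :
    a.1 = b.1 ∧ c.1 = e.1 ∧ g t = g c ∧ (e = a ∨ g e = g b) := by
  obtain ⟨hta, htc, hq⟩ := mem_restoringSwitches.1 h
  obtain ⟨hab, hrab, -, hrce, hac, h1, h2⟩ := mem_defects.1 hq
  have hbt : b ≠ t := by rintro rfl; exact hta hrab.symm
  have hct : c ≠ t := by rintro rfl; exact htc rfl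
  simp only [Function.comp_apply, Equiv.swap_apply_left,
    Equiv.swap_apply_of_ne_of_ne hac.symm hct] at h1
  refine ⟨hrab, hrce, h1, or_iff_not_imp_left.2 fun hea => ?_⟩
  have het : e ≠ t := by rintro rfl; exact htc hrce.symm
  simp only [Function.comp_apply, Equiv.swap_apply_of_ne_of_ne hab.symm hbt,
    Equiv.swap_apply_of_ne_of_ne hea het] at h2
  exact h2.symm

variable [Fintype V] {d : ℕ}

lemma card_restoringSwitches_le {g : ι × ρ → V} (hg : g ∈ regularWords (ι × ρ) V d) :
    #(restoringSwitches g) ≤ 2 * Fintype.card (ι × ρ) * Fintype.card ρ ^ 2 * d ^ 2 := by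
  let linked : Finset (SlotQuadruple ι ρ × (ι × ρ)) :=
    univ.biUnion fun b => (slotRow b).biUnion fun a => (slotFiber g b).biUnion fun e =>
      (slotRow e).biUnion fun c => (slotFiber g c).image fun t => ((a, b, c, e), t)
  let unlinked : Finset (SlotQuadruple ι ρ × (ι × ρ)) :=
    univ.biUnion fun a => (slotRow a).biUnion fun b => (slotRow a).biUnion fun c =>
      (slotFiber g c).image fun t => ((a, b, c, a), t)
  have hlinked : #linked ≤ Fintype.card (ι × ρ) *
      (Fintype.card ρ * (d * (Fintype.card ρ * d))) :=
    card_biUnion_le_mul_of_card_le card_univ.le fun b _ =>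
      card_biUnion_le_mul_of_card_le (card_slotRow b).le fun a _ =>
        card_biUnion_le_mul_of_card_le (card_slotFiber hg b).le fun e _ =>
          card_biUnion_le_mul_of_card_le (card_slotRow e).le fun c _ =>
            card_image_le.trans (card_slotFiber hg c).le
  have hunlinked : #unlinked ≤ Fintype.card (ι × ρ) *
      (Fintype.card ρ * (Fintype.card ρ * d)) :=
    card_biUnion_le_mul_of_card_le card_univ.le fun a _ =>
      card_biUnion_le_mul_of_card_le (card_slotRow a).le fun b _ =>
        card_biUnion_le_mul_of_card_le (card_slotRow a).le fun c _ =>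
          card_image_le.trans (card_slotFiber hg c).le
  have hsub : restoringSwitches g ⊆ linked ∪ unlinked := by
    rintro ⟨⟨a, b, c, e⟩, t⟩ h
    obtain ⟨hrab, hrce, htc, rfl | heb⟩ := mem_paths_of_mem_restoringSwitches h
    · refine mem_union_right _ ?_
      simp only [unlinked, mem_biUnion, mem_univ, true_and, mem_image, mem_slotRow, mem_slotFiber]
      exact ⟨e, b, hrab.symm, c, hrce, t, htc, rfl⟩
    · refine mem_union_left _ ?_
      simp only [linked, mem_biUnion, mem_univ, true_and, mem_image, mem_slotRow, mem_slotFiber]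
      exact ⟨b, a, hrab, e, heb, c, hrce, t, htc, rfl⟩
  refine (card_le_card hsub).trans ((card_union_le _ _).trans ?_)
  have := Nat.mul_le_mul_left (Fintype.card (ι × ρ) * Fintype.card ρ ^ 2)
    (Nat.le_self_pow two_ne_zero d)
  linarith

lemma comp_perm_mem_regularWords {S : Type*} [Fintype S] {g : S → V} (hg : g ∈ regularWords S V d)
    (e : Equiv.Perm S) : g ∘ e ∈ regularWords S V d :=
  mem_regularWords.2 fun v => by rw [letterCount_comp_equiv, mem_regularWords.1 hg v]

variable [Nonempty ι] [Nonempty ρ]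

/-- Double counting of the switches leading from `B` to `B'`. -/
lemma sum_card_defects_le_of_switching {B B' : Finset (ι × ρ → V)}
    (hB' : B' ⊆ regularWords (ι × ρ) V d)
    (partners : (ι × ρ → V) → SlotQuadruple ι ρ → Finset (ι × ρ))
    (hswitch : ∀ g ∈ B, ∀ q ∈ defects g, ∀ t ∈ partners g q,
      t.1 ≠ q.1.1 ∧ t.1 ≠ q.2.2.1.1 ∧ g ∘ Equiv.swap q.1 t ∈ B')
    (hcard : ∀ g ∈ B, ∀ q ∈ defects g, Fintype.card (ι × ρ) ≤ 2 * #(partners g q)) :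
    ∑ g ∈ B, #(defects g) ≤ 4 * Fintype.card ρ ^ 2 * d ^ 2 * #B' := by
  let switches := B.sigma fun g => (defects g).sigma (partners g)
  let restorings := B'.sigma fun g => restoringSwitches g
  have hlower : Fintype.card (ι × ρ) * ∑ g ∈ B, #(defects g) ≤ 2 * #switches := by
    simp only [switches, card_sigma, mul_sum, card_eq_sum_ones (defects _), mul_one]
    exact sum_le_sum fun g hg => sum_le_sum fun q hq => hcard g hg q hq
  have hupper : #restorings ≤ #B' * (2 * Fintype.card (ι × ρ) * Fintype.card ρ ^ 2 * d ^ 2) := by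
    rw [card_sigma, ← smul_eq_mul]
    exact sum_le_card_nsmul _ _ _ fun g hg => card_restoringSwitches_le (hB' hg)
  have hinj : #switches ≤ #restorings := by
    refine card_le_card_of_injOn
      (fun x => ⟨x.1 ∘ Equiv.swap x.2.1.1 x.2.2, x.2.1, x.2.2⟩) ?_ ?_
    · rintro ⟨g, q, t⟩ hx
      simp only [switches, coe_sigma, Set.mem_sigma_iff, mem_coe] at hx
      obtain ⟨hg, hq, ht⟩ := hx
      obtain ⟨h1, h2, h3⟩ := hswitch g hg q hq t ht
      refine mem_coe.2 (mem_sigma.2 ⟨h3, mem_restoringSwitches.2 ⟨h1, h2, ?_⟩⟩)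
      rwa [Function.comp_assoc, ← Equiv.Perm.coe_mul, Equiv.swap_mul_self, Equiv.Perm.coe_one,
        Function.comp_id]
    · rintro ⟨g, q, t⟩ - ⟨g', q', t'⟩ - h
      simp only [Sigma.mk.injEq, heq_eq_eq, Prod.mk.injEq] at h
      obtain ⟨h, rfl, rfl⟩ := h
      obtain rfl := (Equiv.swap q.1 t).surjective.injective_comp_right h
      rfl
  refine Nat.le_of_mul_le_mul_left ?_ (Fintype.card_pos (α := ι × ρ))
  calc Fintype.card (ι × ρ) * ∑ g ∈ B, #(defects g)
      ≤ 2 * (#B' * (2 * Fintype.card (ι × ρ) * Fintype.card ρ ^ 2 * d ^ 2)) :=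
        hlower.trans (Nat.mul_le_mul_left 2 (hinj.trans hupper))
    _ = Fintype.card (ι × ρ) * (4 * Fintype.card ρ ^ 2 * d ^ 2 * #B') := by ring

lemma sum_card_defects_le (hN : 4 * Fintype.card ρ ≤ Fintype.card (ι × ρ)) :
    ∑ g ∈ regularWords (ι × ρ) V d, #(defects g) ≤
      4 * Fintype.card ρ ^ 2 * d ^ 2 * #(regularWords (ι × ρ) V d) := by
  refine sum_card_defects_le_of_switching Subset.rfl
    (fun _ q => (slotRow q.1 ∪ slotRow q.2.2.1)ᶜ) (fun g hg q _ t ht => ?_) fun _ _ q _ => ?_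
  · simp only [mem_compl, mem_union, mem_slotRow, not_or] at ht
    exact ⟨ht.1, ht.2, comp_perm_mem_regularWords hg _⟩
  · have := card_union_le (slotRow q.1) (slotRow q.2.2.1)
    rw [card_slotRow, card_slotRow] at this
    rw [card_compl]
    omega

lemma card_defects_eq_le {j J : ℕ} (hj : j ≠ 0) (hjJ : j ≤ J)
    (hN : 2 * (Fintype.card ρ ^ 3 * d ^ 2 + J * Fintype.card ρ) ≤ Fintype.card (ι × ρ)) :
    #{g ∈ regularWords (ι × ρ) V d | #(defects g) = j} ≤
      4 * Fintype.card ρ ^ 2 * d ^ 2 * #{g ∈ regularWords (ι × ρ) V d | #(defects g) < j} := by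
  have h := sum_card_defects_le_of_switching (filter_subset _ _)
    (B := {g ∈ regularWords (ι × ρ) V d | #(defects g) = j})
    (B' := {g ∈ regularWords (ι × ρ) V d | #(defects g) < j})
    (fun g q => {t | GoodPartner g q.1 t}) ?_ ?_
  · rw [sum_congr rfl fun g hg => (mem_filter.1 hg).2, sum_const, smul_eq_mul] at h
    exact (Nat.le_mul_of_pos_right _ (Nat.pos_of_ne_zero hj)).trans h
  · rintro g hg ⟨a, b, c, e⟩ hq t ht
    obtain ⟨hreg, rfl⟩ := mem_filter.1 hg
    have ht : GoodPartner g a t := (mem_filter.1 ht).2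
    exact ⟨ht.row_ne.symm, fun htc => ht.letter_ne rfl htc.symm (mem_defects.1 hq).2.2.2.2.2.1,
      mem_filter.2 ⟨comp_perm_mem_regularWords hreg _, ht.card_defects_comp_swap_lt hq⟩⟩
  · rintro g hg q -
    obtain ⟨hreg, rfl⟩ := mem_filter.1 hg
    have hbad := card_not_goodPartner_le hreg q.1
    have hsplit := card_filter_add_card_filter_not (s := univ) fun t => GoodPartner g q.1 t
    have := Nat.mul_le_mul_right (Fintype.card ρ) hjJ
    rw [card_univ] at hsplit
    omega

omit [Nonempty ι] [Nonempty ρ] [Fintype ι] [Fintype ρ] [Fintype V] in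
lemma card_filter_lt_succ_le_pow_mul {α : Type*} {s : Finset α} {D : α → ℕ} {C J : ℕ}
    (h : ∀ j, j ≠ 0 → j ≤ J → #{x ∈ s | D x = j} ≤ C * #{x ∈ s | D x < j}) :
    #{x ∈ s | D x < J + 1} ≤ (1 + C) ^ J * #{x ∈ s | D x = 0} := by
  induction J with
  | zero => simp
  | succ J ih =>
    have hsplit : #{x ∈ s | D x < J + 1 + 1} ≤
        #{x ∈ s | D x < J + 1} + #{x ∈ s | D x = J + 1} := by
      rw [filter_congr fun x _ => Nat.lt_succ_iff_lt_or_eq, filter_or]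
      exact card_union_le _ _
    calc #{x ∈ s | D x < J + 1 + 1} ≤ (1 + C) * #{x ∈ s | D x < J + 1} := by
          linarith [h (J + 1) J.succ_ne_zero le_rfl]
      _ ≤ (1 + C) * ((1 + C) ^ J * #{x ∈ s | D x = 0}) :=
          Nat.mul_le_mul_left _ (ih fun j hj hjJ => h j hj (hjJ.trans J.le_succ))
      _ = (1 + C) ^ (J + 1) * #{x ∈ s | D x = 0} := by ring

omit [Nonempty ι] [Nonempty ρ] [Fintype ι] [Fintype ρ] [Fintype V] in
lemma card_le_two_mul_card_filter_lt_of_sum_le {α : Type*} {s : Finset α} {D : α → ℕ} {C : ℕ}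
    (h : ∑ x ∈ s, D x ≤ C * #s) : #s ≤ 2 * #{x ∈ s | D x < 2 * C + 1} := by
  have hmarkov : #{x ∈ s | ¬ D x < 2 * C + 1} * (2 * C + 1) ≤ C * #s :=
    calc #{x ∈ s | ¬ D x < 2 * C + 1} * (2 * C + 1)
        ≤ ∑ x ∈ s with ¬ D x < 2 * C + 1, D x := by
          rw [← smul_eq_mul]
          exact card_nsmul_le_sum _ _ _ fun x hx => not_lt.1 (mem_filter.1 hx).2
      _ ≤ ∑ x ∈ s, D x := sum_le_sum_of_subset (filter_subset _ _)
      _ ≤ C * #s := h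
  have hsplit := card_filter_add_card_filter_not (s := s) fun x => D x < 2 * C + 1
  by_contra! hlt
  nlinarith

/-- Half of the words have boundedly many defects, and these can be removed one at a time, at the
cost of a constant factor each. -/
lemma le_uniformProb_defects_eq_empty (hne : (regularWords (ι × ρ) V d).Nonempty) {C : ℕ}
    (hC : C = 4 * Fintype.card ρ ^ 2 * d ^ 2)
    (hN : 2 * (Fintype.card ρ ^ 3 * d ^ 2 + 2 * C * Fintype.card ρ) + 4 * Fintype.card ρ ≤
      Fintype.card (ι × ρ)) :
    (1 / (2 * (1 + C) ^ (2 * C)) : ℝ) ≤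
      uniformProb (regularWords (ι × ρ) V d) (fun g => defects g = ∅) := by
  subst hC
  have hbounded := card_le_two_mul_card_filter_lt_of_sum_le
    (sum_card_defects_le (ι := ι) (ρ := ρ) (V := V) (d := d) (by omega))
  have hremove := card_filter_lt_succ_le_pow_mul
    (s := regularWords (ι × ρ) V d) (D := fun g => #(defects g))
    (J := 2 * (4 * Fintype.card ρ ^ 2 * d ^ 2))
    fun j hj hjJ => card_defects_eq_le hj hjJ (by omega)
  have hcard := hbounded.trans (Nat.mul_le_mul_left 2 hremove)
  simp only [card_eq_zero] at hcard
  rw [uniformProb, div_le_div_iff₀ (by positivity) (mod_cast hne.card_pos), one_mul, mul_comm,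
    mul_assoc]
  exact_mod_cast hcard

end DoubleCounting

end Switching

/-! ### Words read in rows and the first moment -/

section Rows

variable {ι ρ V K : Type*} [Fintype ι] [Fintype ρ] [Fintype V] [Fintype K]

lemma iidMass_add_iidMass_not (a : K → ℝ) (A : (ρ → K) → Prop) :
    iidMass a A + iidMass a (fun x => ¬ A x) = (∑ κ, a κ) ^ Fintype.card ρ := by
  rw [← iidMass_true, iidMass, iidMass, iidMass, filter_true, sum_filter_add_sum_filter_not]

lemma iidMass_forall_curry (a : K → ℝ) (A : ι → (ρ → K) → Prop) :
    iidMass a (fun w : ι × ρ → K => ∀ e, A e (Function.curry w e)) = ∏ e, iidMass a (A e) := by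
  simp only [iidMass]
  rw [prod_univ_sum]
  refine sum_bij' (fun w _ => Function.curry w) (fun x _ => Function.uncurry x)
    (fun w hw => ?_) (fun x hx => ?_) (fun w _ => Function.uncurry_curry w)
    (fun x _ => Function.curry_uncurry x) fun w _ => Fintype.prod_prod_type _
  · simpa only [Fintype.mem_piFinset, mem_filter_univ] using hw
  · simpa only [Fintype.mem_piFinset, mem_filter_univ, Function.curry_uncurry] using hx

/-- The word `x` has at least two different letters. -/
def Nonconstant (x : ρ → K) : Prop := ∃ i j, x i ≠ x j

/-- No row of the word `w` is constant, so that `w` colors all edges properly. -/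
def RowProper (w : ι × ρ → K) : Prop := ∀ e, Nonconstant (Function.curry w e)

omit [Fintype ρ] [Fintype K] in
lemma not_nonconstant [Nonempty ρ] {x : ρ → K} : ¬ Nonconstant x ↔ ∃ κ, x = Function.const ρ κ := by
  refine ⟨fun h => ?_, ?_⟩
  · simp only [Nonconstant, not_exists, not_not] at h
    exact ⟨x (Classical.arbitrary ρ), funext fun i => h i _⟩
  · rintro ⟨κ, rfl⟩ ⟨_, _, h⟩
    exact h rfl

lemma iidMass_not_nonconstant [Nonempty ρ] (a : K → ℝ) :
    iidMass a (fun x : ρ → K => ¬ Nonconstant x) = ∑ κ, a κ ^ Fintype.card ρ := by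
  calc iidMass a (fun x : ρ → K => ¬ Nonconstant x)
      = ∑ x ∈ univ.image (Function.const ρ), ∏ s, a (x s) := by
        refine sum_congr ?_ fun _ _ => rfl
        ext x
        simp only [mem_filter_univ, not_nonconstant, mem_image, mem_univ, true_and, eq_comm]
    _ = ∑ κ, a κ ^ Fintype.card ρ := by
        rw [sum_image Function.const_injective.injOn]
        simp only [Function.const_apply, prod_const, card_univ]

/-- The probability that a uniformly random word of length `r` in an alphabet of size `k` is
constant, when `r` and `k` are positive. -/
noncomputable def monoProb (k r : ℕ) : ℝ := ((k : ℝ) ^ (r - 1))⁻¹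

lemma monoProb_nonneg (k r : ℕ) : 0 ≤ monoProb k r := by
  unfold monoProb
  positivity

lemma monoProb_le_one {k : ℕ} (hk : k ≠ 0) (r : ℕ) : monoProb k r ≤ 1 :=
  inv_le_one_of_one_le₀ (one_le_pow₀ (mod_cast Nat.one_le_iff_ne_zero.2 hk))

lemma monoProb_le_inv {r k : ℕ} (hr : 2 ≤ r) (hk : k ≠ 0) : monoProb k r ≤ (k : ℝ)⁻¹ := by
  have : (1 : ℝ) ≤ k := mod_cast Nat.one_le_iff_ne_zero.2 hk
  exact inv_anti₀ (by positivity) (le_self_pow₀ this (by omega))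

lemma monoProb_lt_one {r k : ℕ} (hr : 2 ≤ r) (hk : 2 ≤ k) : monoProb k r < 1 :=
  (monoProb_le_inv hr (by omega)).trans_lt (inv_lt_one_of_one_lt₀ (mod_cast hk))

/-- The power mean inequality. -/
lemma monoProb_le_sum_pow {r : ℕ} (hr : r ≠ 0) {a : K → ℝ} (ha : ∀ κ, 0 ≤ a κ)
    (hsum : ∑ κ, a κ = 1) : monoProb (Fintype.card K) r ≤ ∑ κ, a κ ^ r := by
  obtain ⟨r, rfl⟩ := Nat.exists_eq_succ_of_ne_zero hr
  have h := pow_sum_div_card_le_sum_pow (s := univ) (fun κ _ => ha κ) r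
  rwa [hsum, one_pow, one_div, card_univ] at h

variable [Nonempty ρ]

lemma iidMass_nonconstant_le {a : K → ℝ} (ha : ∀ κ, 0 ≤ a κ) (hsum : ∑ κ, a κ = 1) :
    iidMass a (fun x : ρ → K => Nonconstant x) ≤
      1 - monoProb (Fintype.card K) (Fintype.card ρ) := by
  have h := iidMass_add_iidMass_not a (fun x : ρ → K => Nonconstant x)
  rw [hsum, one_pow, iidMass_not_nonconstant] at h
  linarith [monoProb_le_sum_pow (Fintype.card_ne_zero (α := ρ)) ha hsum]

variable {d : ℕ}

lemma uniformProb_rowProper_comp_le [Nonempty V] (hd : d ≠ 0) (c : V → K) :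
    uniformProb (regularWords (ι × ρ) V d) (fun g => RowProper (c ∘ g)) ≤
      polyLoss (Fintype.card (ι × ρ)) (Fintype.card K) *
        (1 - monoProb (Fintype.card K) (Fintype.card ρ)) ^ Fintype.card ι := by
  refine (uniformProb_regularWords_comp_le hd c RowProper).trans
    (mul_le_mul_of_nonneg_left ?_ (polyLoss_pos _ _).le)
  unfold RowProper
  rw [iidMass_forall_curry, prod_const, card_univ]
  exact pow_le_pow_left₀ (iidMass_nonneg (letterFreq_nonneg c) _)
    (iidMass_nonconstant_le (letterFreq_nonneg c) (sum_letterFreq c)) _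

lemma uniformProb_exists_rowProper_comp_le [Nonempty V] (hd : d ≠ 0) :
    uniformProb (regularWords (ι × ρ) V d) (fun g => ∃ c : V → K, RowProper (c ∘ g)) ≤
      (Fintype.card K : ℝ) ^ Fintype.card V *
        (polyLoss (Fintype.card (ι × ρ)) (Fintype.card K) *
          (1 - monoProb (Fintype.card K) (Fintype.card ρ)) ^ Fintype.card ι) := by
  have h := uniformProb_exists_le (regularWords (ι × ρ) V d) univ
    fun (c : V → K) g => RowProper (c ∘ g)
  simp only [mem_univ, true_and] at h
  refine h.trans ((sum_le_card_nsmul _ _ _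
    fun c _ => uniformProb_rowProper_comp_le hd c).trans_eq ?_)
  rw [card_univ, Fintype.card_fun, nsmul_eq_mul, Nat.cast_pow]

end Rows

section FirstMoment

open Asymptotics Topology

lemma polyLoss_mul_isBigO (d k : ℕ) :
    (fun n : ℕ => polyLoss (d * n) k) =O[atTop] fun n => (n : ℝ) ^ k := by
  refine IsBigO.pow ?_ k
  refine IsBigO.const_mul_left (IsBigO.add ?_ ?_) _
  · push_cast
    exact (isBigO_refl _ _).const_mul_left _
  · exact (isLittleO_const_id_atTop (1 : ℝ)).isBigO.comp_tendsto tendsto_natCast_atTop_atTop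

/-- A sequence that grows at most polynomially. -/
def PolynomiallyBounded (g : ℕ → ℝ) : Prop := ∃ j : ℕ, g =O[atTop] fun n => (n : ℝ) ^ j

lemma polynomiallyBounded_polyLoss (d k : ℕ) :
    PolynomiallyBounded (fun n => polyLoss (d * n) k) :=
  ⟨k, polyLoss_mul_isBigO d k⟩

lemma polynomiallyBounded_const (c : ℝ) : PolynomiallyBounded (fun _ => c) :=
  ⟨0, by simpa only [pow_zero] using isBigO_const_const c one_ne_zero atTop⟩

namespace PolynomiallyBounded

variable {g h : ℕ → ℝ}

lemma mul (hg : PolynomiallyBounded g) (hh : PolynomiallyBounded h) :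
    PolynomiallyBounded (fun n => g n * h n) := by
  obtain ⟨i, hi⟩ := hg
  obtain ⟨j, hj⟩ := hh
  exact ⟨i + j, by simpa only [pow_add] using hi.mul hj⟩

lemma sq (hg : PolynomiallyBounded g) : PolynomiallyBounded (fun n => g n ^ 2) := by
  simpa only [pow_two] using hg.mul hg

lemma tendsto_mul_exp_neg (hg : PolynomiallyBounded g) {β : ℝ} (hβ : 0 < β) :
    Tendsto (fun n : ℕ => g n * exp (-(β * n))) atTop (𝓝 0) := by
  obtain ⟨j, hj⟩ := hg
  have h := hj.trans_isLittleO
    ((isLittleO_pow_exp_pos_mul_atTop j hβ).comp_tendsto tendsto_natCast_atTop_atTop)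
  simpa only [Function.comp_def, exp_neg, ← div_eq_mul_inv] using h.tendsto_div_nhds_zero

end PolynomiallyBounded

/-- A property of words whose probability for a random `d`-regular word with rows of length `r`
tends to zero as the number `n` of vertices grows. -/
def Rare (r d : ℕ) (Bad : (m n : ℕ) → (Fin m × Fin r → Fin n) → Prop) : Prop :=
  ∀ δ : ℝ, 0 < δ → ∀ᶠ n : ℕ in atTop, ∀ m, m * r = d * n →
    uniformProb (regularWords (Fin m × Fin r) (Fin n) d) (Bad m n) ≤ δ

lemma cast_rows_eq {r d m n : ℕ} (hr : r ≠ 0) (hmn : m * r = d * n) : (m : ℝ) = d / r * n := by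
  have : (m : ℝ) * r = d * n := mod_cast hmn
  field_simp
  exact this

/-- The expected number of proper colorings decays exponentially. -/
lemma rare_exists_rowProper {r d k : ℕ} (hr : r ≠ 0) (hd : d ≠ 0) (hk : k ≠ 0)
    (h : log k < d / r * monoProb k r) :
    Rare r d (fun _ n g => ∃ c : Fin n → Fin k, RowProper (c ∘ g)) := by
  intro δ hδ
  filter_upwards [(((polynomiallyBounded_polyLoss d k).tendsto_mul_exp_neg
    (sub_pos.2 h)).eventually_le_const hδ), eventually_ge_atTop 1] with n hn hn1 m hmn
  have : NeZero r := ⟨hr⟩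
  have : NeZero k := ⟨hk⟩
  have : NeZero n := ⟨Nat.one_le_iff_ne_zero.1 hn1⟩
  have hunion := uniformProb_exists_rowProper_comp_le (ι := Fin m) (ρ := Fin r) (V := Fin n)
    (K := Fin k) hd
  simp only [Fintype.card_prod, Fintype.card_fin, hmn] at hunion
  refine hunion.trans (le_trans ?_ hn)
  have hcolorings : (k : ℝ) ^ n = exp (log k * n) := by
    rw [mul_comm, exp_nat_mul, exp_log (mod_cast Nat.pos_of_ne_zero hk)]
  have hproper : (1 - monoProb k r) ^ m ≤ exp (-(d / r * monoProb k r * n)) := by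
    refine (pow_le_pow_left₀ (sub_nonneg.2 (monoProb_le_one hk r))
      (one_sub_le_exp_neg _) m).trans_eq ?_
    rw [← exp_nat_mul, cast_rows_eq hr hmn]
    ring_nf
  calc (k : ℝ) ^ n * (polyLoss (d * n) k * (1 - monoProb k r) ^ m)
      ≤ exp (log k * n) * (polyLoss (d * n) k * exp (-(d / r * monoProb k r * n))) := by
        have := polyLoss_pos (d * n) k
        rw [hcolorings]
        gcongr
    _ = polyLoss (d * n) k * (exp (log k * n) * exp (-(d / r * monoProb k r * n))) := by ring
    _ = polyLoss (d * n) k * exp (-((d / r * monoProb k r - log k) * n)) := by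
        rw [← exp_add]
        ring_nf

end FirstMoment

/-! ### Repairing a coloring with few constant rows -/

section Repair

variable {ι ρ V K : Type*} [Fintype ι]

/-- The rows of the word `g` all of whose letters lie in `W`. -/
noncomputable def rowsInside (g : ι × ρ → V) (W : Finset V) : Finset ι :=
  {e | ∀ i, g (e, i) ∈ W}

@[simp]
lemma mem_rowsInside {g : ι × ρ → V} {W : Finset V} {e : ι} :
    e ∈ rowsInside g W ↔ ∀ i, g (e, i) ∈ W :=
  mem_filter_univ e

/-- The rows of the word `w` that are constant. -/
noncomputable def monoRows (w : ι × ρ → K) : Finset ι :=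
  {e | ¬ Nonconstant (Function.curry w e)}

lemma mem_monoRows {w : ι × ρ → K} {e : ι} :
    e ∈ monoRows w ↔ ¬ Nonconstant (Function.curry w e) :=
  mem_filter_univ e

variable [Fintype ρ]

/-- The rows in `T` that contain `v`. -/
noncomputable def rowsThrough (g : ι × ρ → V) (T : Finset ι) (v : V) : Finset ι :=
  {e ∈ T | ∃ i, g (e, i) = v}

omit [Fintype ι] in
lemma sum_card_rowsThrough_le (g : ι × ρ → V) (T : Finset ι) (W : Finset V) :
    ∑ v ∈ W, #(rowsThrough g T v) ≤ #T * Fintype.card ρ := by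
  have hcount := sum_card_bipartiteAbove_eq_sum_card_bipartiteBelow (s := W) (t := T)
    fun v e => ∃ i, g (e, i) = v
  refine hcount.trans_le ((sum_le_card_nsmul _ _ _ fun e _ => ?_).trans_eq (smul_eq_mul _ _))
  refine (card_le_card fun v hv => ?_).trans (card_image_le (s := univ) (f := Function.curry g e))
  simpa only [mem_image, mem_univ, true_and, Function.curry_apply] using
    ((mem_bipartiteBelow _).1 hv).2

lemma exists_card_rowsThrough_lt [Nonempty ρ] {b : ℕ} (g : ι × ρ → V) {W : Finset V}
    (h : #(rowsInside g W) < b * #W) :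
    ∃ v ∈ W, #(rowsThrough g (rowsInside g W) v) < b * Fintype.card ρ := by
  refine exists_lt_of_sum_lt ((sum_card_rowsThrough_le g _ W).trans_lt ?_)
  rw [sum_const, smul_eq_mul, ← mul_assoc, mul_comm #W]
  exact Nat.mul_lt_mul_of_pos_right h Fintype.card_pos

lemma exists_update_nonconstant [Fintype K] {g : ι × ρ → V}
    (hg : RowProper g) {W : Finset V} {v : V} (c : V → K)
    (hc : ∀ e ∈ rowsInside g (W.erase v), Nonconstant (Function.curry (c ∘ g) e))
    (hv : #(rowsThrough g (rowsInside g W) v) < Fintype.card K) :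
    ∃ κ, ∀ e ∈ rowsInside g W, Nonconstant (Function.curry (Function.update c v κ ∘ g) e) := by
  have hother : ∀ e, ∃ j, g (e, j) ≠ v := fun e => by
    obtain ⟨i, j, hij⟩ := hg e
    by_contra! h
    exact hij ((h i).trans (h j).symm)
  choose j hj using hother
  obtain ⟨κ, hκ⟩ : ∃ κ, κ ∉ (rowsThrough g (rowsInside g W) v).image fun e => c (g (e, j e)) := by
    by_contra! h
    exact (card_image_le.trans_lt hv).ne (card_eq_of_equiv_fin
      ((Equiv.subtypeUnivEquiv h).trans (Fintype.equivFin K)))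
  refine ⟨κ, fun e he => ?_⟩
  by_cases hev : ∃ i, g (e, i) = v
  · obtain ⟨i, hi⟩ := hev
    refine ⟨i, j e, ?_⟩
    simp only [Function.curry_apply, Function.comp_apply]
    rw [hi, Function.update_self, Function.update_of_ne (hj e)]
    rintro rfl
    exact hκ (mem_image_of_mem _ (mem_filter.2 ⟨he, i, hi⟩))
  · push Not at hev
    obtain ⟨a, b, hab⟩ := hc e (mem_rowsInside.2 fun i =>
      mem_erase.2 ⟨hev i, mem_rowsInside.1 he i⟩)
    refine ⟨a, b, ?_⟩
    simpa only [Function.curry_apply, Function.comp_apply, Function.update_of_ne (hev _)] using hab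

/-- A locally sparse hypergraph is degenerate, hence can be colored greedily. -/
lemma exists_greedy_coloring [Nonempty ρ] [Fintype K] {b : ℕ} (hb : b ≠ 0)
    (hK : b * Fintype.card ρ ≤ Fintype.card K) {g : ι × ρ → V} (hg : RowProper g) (W : Finset V)
    (hsparse : ∀ W' ⊆ W, W'.Nonempty → #(rowsInside g W') < b * #W') :
    ∃ c : V → K, ∀ e ∈ rowsInside g W, Nonconstant (Function.curry (c ∘ g) e) := by
  induction W using strongInduction with
  | H W ih =>
  rcases W.eq_empty_or_nonempty with rfl | hW
  · have : 0 < Fintype.card K :=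
      (Nat.mul_pos (Nat.pos_of_ne_zero hb) (Fintype.card_pos (α := ρ))).trans_le hK
    have : Nonempty K := Fintype.card_pos_iff.1 this
    exact ⟨fun _ => Classical.arbitrary K, fun e he =>
      absurd (mem_rowsInside.1 he (Classical.arbitrary ρ)) (notMem_empty _)⟩
  · obtain ⟨v, hvW, hv⟩ := exists_card_rowsThrough_lt g (hsparse W subset_rfl hW)
    obtain ⟨c, hc⟩ := ih (W.erase v) (erase_ssubset hvW)
      fun W' hW' => hsparse W' (hW'.trans (erase_subset _ _))
    obtain ⟨κ, hκ⟩ := exists_update_nonconstant hg c hc (hv.trans_le hK)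
    exact ⟨_, hκ⟩

/-- Recolor one vertex of each constant row with a fresh palette. -/
lemma exists_rowProper_of_monoRows_sparse [Nonempty ρ] {b k : ℕ} (hb : b ≠ 0)
    {g : ι × ρ → V} (hg : RowProper g) (c : V → Fin k)
    (hsparse : ∀ W : Finset V, #W ≤ #(monoRows (c ∘ g)) → W.Nonempty →
      #(rowsInside g W) < b * #W) :
    ∃ c' : V → Fin (k + b * Fintype.card ρ), RowProper (c' ∘ g) := by
  set U := (monoRows (c ∘ g)).image fun e => g (e, Classical.arbitrary ρ)
  obtain ⟨c₂, hc₂⟩ := exists_greedy_coloring (K := Fin (b * Fintype.card ρ)) hb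
    (Fintype.card_fin _).ge hg U
    fun W hW => hsparse W ((card_le_card hW).trans card_image_le)
  refine ⟨fun v => if v ∈ U then Fin.natAdd k (c₂ v) else Fin.castAdd _ (c v), fun e => ?_⟩
  by_cases hin : ∀ i, g (e, i) ∈ U
  · obtain ⟨i, j, hij⟩ := hc₂ e (mem_rowsInside.2 hin)
    refine ⟨i, j, ?_⟩
    simp only [Function.curry_apply, Function.comp_apply, hin, if_true]
    exact (Fin.natAdd_injective _ _).ne hij
  push Not at hin
  obtain ⟨i, hi⟩ := hin
  by_cases hmeet : ∃ j, g (e, j) ∈ U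
  · obtain ⟨j, hj⟩ := hmeet
    refine ⟨i, j, ?_⟩
    simp only [Function.curry_apply, Function.comp_apply, hi, hj, if_true, if_false]
    exact Fin.ne_of_val_ne ((Fin.castAdd_lt _ _).trans_le (Fin.le_coe_natAdd _ _)).ne
  · push Not at hmeet
    have hproper : Nonconstant (Function.curry (c ∘ g) e) := by
      by_contra h
      exact hmeet _ (mem_image_of_mem _ (mem_monoRows.2 h))
    obtain ⟨a, b, hab⟩ := hproper
    refine ⟨a, b, ?_⟩
    simp only [Function.curry_apply, Function.comp_apply, hmeet, if_false]
    exact (Fin.castAdd_injective _ _).ne hab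

end Repair

/-! ### Local sparsity -/

lemma choose_le_exp_mul_div_pow (N : ℕ) {w : ℕ} (hw : w ≠ 0) :
    (N.choose w : ℝ) ≤ (exp 1 * N / w) ^ w := by
  have hexp : (w : ℝ) ^ w ≤ exp 1 ^ w * w.factorial := by
    rw [← exp_nat_mul, mul_one, ← div_le_iff₀ (by positivity)]
    exact pow_div_factorial_le_exp _ w.cast_nonneg w
  refine (Nat.choose_le_pow_div w N).trans ?_
  rw [div_pow, mul_pow, div_le_div_iff₀ (by positivity) (by positivity)]
  calc (N : ℝ) ^ w * w ^ w ≤ N ^ w * (exp 1 ^ w * w.factorial) := by gcongr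
    _ = exp 1 ^ w * N ^ w * w.factorial := by ring

section Sparsity

variable {ι ρ V : Type*} [Fintype ι] [Fintype ρ] [Fintype V]

omit [Fintype ι] [Fintype V] in
lemma iidMass_forall_eq_true (a : Prop → ℝ) :
    iidMass a (fun x : ρ → Prop => ∀ i, x i) = a True ^ Fintype.card ρ := by
  calc iidMass a (fun x : ρ → Prop => ∀ i, x i)
      = ∑ x ∈ {fun _ : ρ => True}, ∏ i, a (x i) := by
        refine sum_congr ?_ fun _ _ => rfl
        ext x
        simp [funext_iff]
    _ = a True ^ Fintype.card ρ := by rw [sum_singleton, prod_const, card_univ]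

lemma letterFreq_mem (W : Finset V) :
    letterFreq (fun v => v ∈ W) True = (#W : ℝ) / Fintype.card V := by
  have h : letterCount (fun v => v ∈ W) True = #W := by
    unfold letterCount
    congr 1
    ext v
    simp
  rw [letterFreq, h]

lemma uniformProb_forall_mem_le [Nonempty V] {d : ℕ} (hd : d ≠ 0) (W : Finset V) (T : Finset ι) :
    uniformProb (regularWords (ι × ρ) V d) (fun g => ∀ e ∈ T, ∀ i, g (e, i) ∈ W) ≤
      polyLoss (Fintype.card (ι × ρ)) 2 *
        ((#W : ℝ) / Fintype.card V) ^ (Fintype.card ρ * #T) := by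
  have h := uniformProb_regularWords_comp_le (S := ι × ρ) hd (fun v => v ∈ W)
    fun w => ∀ e, e ∈ T → ∀ i, Function.curry w e i
  rw [iidMass_forall_curry _ fun e x => e ∈ T → ∀ i, x i, Fintype.card_prop] at h
  refine h.trans_eq (congrArg _ ?_)
  have hrow : ∀ e, iidMass (letterFreq fun v => v ∈ W) (fun x : ρ → Prop => e ∈ T → ∀ i, x i) =
      if e ∈ T then ((#W : ℝ) / Fintype.card V) ^ Fintype.card ρ else 1 := by
    intro e
    split_ifs with he
    · simp only [he, true_imp_iff]
      rw [iidMass_forall_eq_true, letterFreq_mem]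
    · simp only [he, false_imp_iff]
      rw [iidMass_true, sum_letterFreq, one_pow]
  rw [prod_congr rfl fun e _ => hrow e, prod_ite, prod_const, prod_const_one, mul_one, ← pow_mul,
    filter_mem_eq_inter, univ_inter]

lemma uniformProb_le_card_rowsInside_le [Nonempty V] {d : ℕ} (hd : d ≠ 0) (W : Finset V) (s : ℕ) :
    uniformProb (regularWords (ι × ρ) V d) (fun g => s ≤ #(rowsInside g W)) ≤
      (Fintype.card ι).choose s * (polyLoss (Fintype.card (ι × ρ)) 2 *
        ((#W : ℝ) / Fintype.card V) ^ (Fintype.card ρ * s)) := by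
  calc uniformProb (regularWords (ι × ρ) V d) (fun g => s ≤ #(rowsInside g W))
      ≤ uniformProb (regularWords (ι × ρ) V d)
          (fun g => ∃ T ∈ powersetCard s univ, ∀ e ∈ T, ∀ i, g (e, i) ∈ W) := by
        refine uniformProb_mono fun g _ hg => ?_
        obtain ⟨T, hT, hTs⟩ := exists_subset_card_eq hg
        exact ⟨T, mem_powersetCard_univ.2 hTs, fun e he => mem_rowsInside.1 (hT he)⟩
    _ ≤ _ := uniformProb_exists_le _ _ _
    _ ≤ #(powersetCard s (univ : Finset ι)) • (polyLoss (Fintype.card (ι × ρ)) 2 *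
          ((#W : ℝ) / Fintype.card V) ^ (Fintype.card ρ * s)) :=
        sum_le_card_nsmul _ _ _ fun T hT =>
          mem_powersetCard_univ.1 hT ▸ uniformProb_forall_mem_le hd W T
    _ = _ := by rw [card_powersetCard, card_univ, nsmul_eq_mul]

lemma uniformProb_exists_le_card_rowsInside_le [Nonempty V] {d : ℕ} (hd : d ≠ 0) (w s : ℕ) :
    uniformProb (regularWords (ι × ρ) V d)
        (fun g => ∃ W ∈ powersetCard w (univ : Finset V), s ≤ #(rowsInside g W)) ≤
      (Fintype.card V).choose w * ((Fintype.card ι).choose s *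
        (polyLoss (Fintype.card (ι × ρ)) 2 *
          ((w : ℝ) / Fintype.card V) ^ (Fintype.card ρ * s))) := by
  refine ((uniformProb_exists_le _ _ _).trans (sum_le_card_nsmul _ _ _ fun W hW => ?_)).trans_eq
    (by rw [card_powersetCard, card_univ, nsmul_eq_mul])
  rw [← mem_powersetCard_univ.1 hW]
  exact uniformProb_le_card_rowsInside_le hd W s

end Sparsity

lemma pow_le_of_le_half {y : ℝ} (hy : 0 ≤ y) (hy' : y ≤ 1 / 2) {w : ℕ} (hw : w ≠ 0) :
    w * y ^ w ≤ y := by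
  obtain ⟨w, rfl⟩ := Nat.exists_eq_succ_of_ne_zero hw
  have hpow : ((w + 1 : ℕ) : ℝ) ≤ 2 ^ w := mod_cast Nat.lt_two_pow_self
  calc ((w + 1 : ℕ) : ℝ) * y ^ (w + 1) ≤ 2 ^ w * ((1 / 2) ^ w * y) := by
        rw [pow_succ]
        gcongr
    _ = y := by rw [← mul_assoc, ← mul_pow]; norm_num

lemma exp_one_div_mul_pow_mul_pow_le {x c : ℝ} (hx : 0 < x) (hc : 1 ≤ c) :
    exp 1 / x * (exp 1 * c / x) ^ 5 * x ^ 10 ≤ (exp 2 * c ^ 2 * x) ^ 4 := by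
  calc exp 1 / x * (exp 1 * c / x) ^ 5 * x ^ 10 = exp 1 ^ 6 * c ^ 5 * x ^ 4 := by field_simp
    _ ≤ exp 1 ^ 8 * c ^ 8 * x ^ 4 := by
      have := one_le_exp zero_le_one
      gcongr <;> norm_num
    _ = (exp 2 * c ^ 2 * x) ^ 4 := by
      have hexp : exp (2 : ℝ) = exp 1 ^ 2 := by rw [← exp_nat_mul]; norm_num
      rw [hexp]
      ring

/-- The summand for sets of size `w` in the union bound for local sparsity. -/
lemma choose_mul_choose_mul_pow_le {n m r d w : ℕ} (hr : 2 ≤ r) (hd : d ≠ 0) (hn : n ≠ 0)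
    (hw : w ≠ 0) (hm : m ≤ d * n) (hwn : exp 2 * d ^ 2 * (w / n) ≤ 1 / 2) :
    (n.choose w : ℝ) * (m.choose (5 * w) * ((w : ℝ) / n) ^ (r * (5 * w))) ≤
      (exp 2 * d ^ 2 / n) ^ 4 := by
  set C : ℝ := exp 2 * d ^ 2 with hC
  have hd1 : (1 : ℝ) ≤ d := mod_cast Nat.one_le_iff_ne_zero.2 hd
  have : (0 : ℝ) < n := mod_cast Nat.pos_of_ne_zero hn
  have hw1 : (1 : ℝ) ≤ w := mod_cast Nat.one_le_iff_ne_zero.2 hw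
  have hC1 : 1 ≤ C := hC ▸ one_le_mul_of_one_le_of_one_le (one_le_exp zero_le_two) (one_le_pow₀ hd1)
  set x : ℝ := w / n with hx
  have hx0 : 0 < x := by positivity
  have hx1 : x ≤ 1 := by linarith [le_mul_of_one_le_left hx0.le hC1]
  have hvertices : (n.choose w : ℝ) ≤ (exp 1 / x) ^ w := by
    rw [hx, div_div_eq_mul_div]
    exact choose_le_exp_mul_div_pow n hw
  have hedges : (m.choose (5 * w) : ℝ) ≤ ((exp 1 * d / x) ^ 5) ^ w := by
    refine (choose_le_exp_mul_div_pow m (mul_ne_zero (by norm_num) hw)).trans ?_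
    rw [← pow_mul, hx, div_div_eq_mul_div, mul_assoc (exp 1)]
    have hm' : (m : ℝ) ≤ d * n := mod_cast hm
    gcongr
    exact mod_cast Nat.le_mul_of_pos_left w (by norm_num)
  have hinside : x ^ (r * (5 * w)) ≤ (x ^ 10) ^ w := by
    rw [← pow_mul]
    exact pow_le_pow_of_le_one hx0.le hx1 (by nlinarith)
  calc (n.choose w : ℝ) * (m.choose (5 * w) * x ^ (r * (5 * w)))
      ≤ (exp 1 / x) ^ w * (((exp 1 * d / x) ^ 5) ^ w * (x ^ 10) ^ w) := by gcongr
    _ = (exp 1 / x * (exp 1 * d / x) ^ 5 * x ^ 10) ^ w := by rw [mul_pow, mul_pow, mul_assoc]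
    _ ≤ ((C * x) ^ 4) ^ w := by
      gcongr
      exact exp_one_div_mul_pow_mul_pow_le hx0 hd1
    _ = ((C * x) ^ w) ^ 4 := pow_right_comm _ _ _
    _ ≤ (C / n) ^ 4 := by
      have h := pow_le_of_le_half (by positivity) hwn hw
      gcongr
      refine le_of_mul_le_mul_left (h.trans_eq ?_) (zero_lt_one.trans_le hw1)
      rw [hx]
      ring

open Asymptotics Topology in
lemma tendsto_mul_polyLoss_mul_div_pow (d : ℕ) (C : ℝ) :
    Tendsto (fun n : ℕ => n * (polyLoss (d * n) 2 * (C / n) ^ 4)) atTop (𝓝 0) := by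
  refine ((isBigO_refl _ _).mul ((polyLoss_mul_isBigO d 2).mul
    (isBigO_refl _ _))).trans_tendsto ?_
  refine (tendsto_const_div_atTop_nhds_zero_nat (C ^ 4)).congr' ?_
  filter_upwards [eventually_ne_atTop 0] with n hn
  field_simp

lemma exists_rare_five_mul_card_le_card_rowsInside {r d : ℕ} (hr : 2 ≤ r) (hd : d ≠ 0) :
    ∃ γ : ℝ, 0 < γ ∧ Rare r d (fun _ n g => ∃ W : Finset (Fin n), W.Nonempty ∧ (#W : ℝ) ≤ γ * n ∧
      5 * #W ≤ #(rowsInside g W)) := by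
  set C : ℝ := exp 2 * d ^ 2
  have hC0 : 0 < C := by
    have : d ≠ 0 := hd
    positivity
  refine ⟨1 / (2 * C), by positivity, fun δ hδ => ?_⟩
  filter_upwards [(tendsto_mul_polyLoss_mul_div_pow d C).eventually_le_const hδ,
    eventually_ne_atTop 0] with n hn hn0 m hmn
  refine le_trans ?_ hn
  have : NeZero n := ⟨hn0⟩
  calc _ ≤ uniformProb (regularWords (Fin m × Fin r) (Fin n) d)
          (fun g => ∃ w ∈ {w ∈ Icc 1 n | ((w : ℕ) : ℝ) ≤ 1 / (2 * C) * n},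
            ∃ W ∈ powersetCard w (univ : Finset (Fin n)), 5 * w ≤ #(rowsInside g W)) := by
        refine uniformProb_mono fun g _ ⟨W, hW, hWn, hg⟩ => ⟨#W, mem_filter.2 ⟨mem_Icc.2
          ⟨hW.card_pos, card_finset_fin_le W⟩, hWn⟩, W, mem_powersetCard_univ.2 rfl, hg⟩
    _ ≤ _ := uniformProb_exists_le _ _ _
    _ ≤ #{w ∈ Icc 1 n | ((w : ℕ) : ℝ) ≤ 1 / (2 * C) * n} • (polyLoss (d * n) 2 * (C / n) ^ 4) := by
        refine sum_le_card_nsmul _ _ _ fun w hw => ?_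
        rw [mem_filter, mem_Icc] at hw
        refine (uniformProb_exists_le_card_rowsInside_le hd w (5 * w)).trans ?_
        simp only [Fintype.card_prod, Fintype.card_fin, hmn]
        rw [mul_left_comm _ (polyLoss _ _), mul_left_comm _ (polyLoss _ _)]
        refine mul_le_mul_of_nonneg_left (choose_mul_choose_mul_pow_le hr hd hn0 (by omega)
          (hmn ▸ Nat.le_mul_of_pos_right m (by omega)) ?_) (polyLoss_pos _ _).le
        rw [← mul_div_assoc, div_le_iff₀ (by positivity)]
        calc C * w ≤ C * (1 / (2 * C) * n) := by gcongr; exact hw.2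
          _ = 1 / 2 * n := by field_simp
    _ ≤ n * (polyLoss (d * n) 2 * (C / n) ^ 4) := by
        rw [nsmul_eq_mul]
        have := polyLoss_pos (d * n) 2
        gcongr
        exact (card_filter_le _ _).trans_eq (by rw [Nat.card_Icc, Nat.add_sub_cancel])

/-! ### The entropy inequality -/

section Entropy

open InformationTheory

lemma pow_sub_tangent_le (s : ℕ) {y : ℝ} (hy : 0 ≤ y) :
    y ^ (s + 2) - 1 - ((s + 2 : ℕ) : ℝ) * (y - 1) ≤
      ((s + 2 : ℕ) : ℝ) ^ 2 * (1 + y) ^ s * (y - 1) ^ 2 := by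
  induction s with
  | zero => norm_num; nlinarith [sq_nonneg (y - 1)]
  | succ s ih =>
    have := sq_nonneg (y - 1)
    set P := (1 + y) ^ s
    set t : ℝ := ((s + 2 : ℕ) : ℝ)
    have ht : 0 ≤ t := Nat.cast_nonneg _
    have hP : 1 ≤ P := one_le_pow₀ (by linarith)
    have hPy : 1 ≤ P * (1 + y) := one_le_mul_of_one_le_of_one_le hP (by linarith)
    have hcast : ((s + 1 + 2 : ℕ) : ℝ) = t + 1 := by push_cast [t]; ring
    rw [hcast, pow_succ (1 + y)]
    calc y ^ (s + 1 + 2) - 1 - (t + 1) * (y - 1)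
        = y * (y ^ (s + 2) - 1 - t * (y - 1)) + t * (y - 1) ^ 2 := by ring
      _ ≤ y * (t ^ 2 * P * (y - 1) ^ 2) + t * (P * (1 + y)) * (y - 1) ^ 2 := by
        gcongr
        exact le_mul_of_one_le_right ht hPy
      _ ≤ (1 + y) * (t ^ 2 * P * (y - 1) ^ 2) + (2 * t + 1) * (P * (1 + y)) * (y - 1) ^ 2 := by
        gcongr <;> linarith
      _ = (t + 1) ^ 2 * (P * (1 + y)) * (y - 1) ^ 2 := by ring

lemma sq_div_le_klFun {y : ℝ} (hy : 0 ≤ y) : (y - 1) ^ 2 / (2 * (y + 1)) ≤ klFun y := by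
  obtain rfl | hy := hy.eq_or_lt
  · norm_num [klFun]
  obtain ⟨s, hs, rfl⟩ : ∃ s : ℝ, 0 < s ∧ y = s ^ 2 := ⟨√y, sqrt_pos.2 hy, (sq_sqrt hy.le).symm⟩
  have hlog : s - 1 ≤ s * log s := by
    have h := mul_le_mul_of_nonneg_left (one_sub_inv_le_log_of_pos hs) hs.le
    rwa [mul_sub, mul_one, mul_inv_cancel₀ hs.ne'] at h
  calc (s ^ 2 - 1) ^ 2 / (2 * (s ^ 2 + 1)) ≤ (s - 1) ^ 2 := by
        rw [div_le_iff₀ (by positivity)]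
        nlinarith [mul_nonneg (sq_nonneg (s - 1)) (sq_nonneg (s - 1))]
    _ ≤ klFun (s ^ 2) := by
        rw [klFun_apply, log_pow]
        push_cast
        nlinarith

/-- The excess of `y ↦ y ^ r` over its tangent at `1`, scaled by `Λ`, is dominated by relative
entropy on the range of the densities `y = k ^ 2 * a κ` of nearly balanced pairs of colorings with
overlap frequencies `a`. -/
def PowExcessLeEntropy (r k : ℕ) (Λ η : ℝ) : Prop :=
  ∀ y : ℝ, 0 ≤ y → y ≤ (1 + η) * k →
    Λ * monoProb k r * (y ^ r - 1 - r * (y - 1)) ≤ klFun y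

variable {r k : ℕ} {Λ y : ℝ}

lemma pow_excess_le_klFun_of_small (hr : 2 ≤ r) (hΛ : 0 ≤ Λ) (hy : 0 ≤ y) (hyk : 1 + y ≤ k)
    (hΛy : 2 * r ^ 2 * Λ * (1 + y) ≤ k) :
    Λ * monoProb k r * (y ^ r - 1 - r * (y - 1)) ≤ klFun y := by
  obtain ⟨s, rfl⟩ := Nat.exists_eq_add_of_le' hr
  have hk : (0 : ℝ) < k := by linarith
  refine le_trans ?_ (sq_div_le_klFun hy)
  rw [le_div_iff₀ (by positivity), monoProb, show s + 2 - 1 = s + 1 from rfl]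
  have hpow : ((1 + y) / k) ^ (s + 1) ≤ (1 + y) / k :=
    pow_le_of_le_one (by positivity) ((div_le_one hk).2 hyk) s.succ_ne_zero
  have hkey : Λ * (2 * ((s + 2 : ℕ) : ℝ) ^ 2) * ((1 + y) / k) ^ (s + 1) ≤ 1 := by
    calc Λ * (2 * ((s + 2 : ℕ) : ℝ) ^ 2) * ((1 + y) / k) ^ (s + 1)
        ≤ Λ * (2 * ((s + 2 : ℕ) : ℝ) ^ 2) * ((1 + y) / k) := by gcongr
      _ = 2 * ((s + 2 : ℕ) : ℝ) ^ 2 * Λ * (1 + y) / k := by ring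
      _ ≤ 1 := (div_le_one hk).2 hΛy
  calc Λ * ((k : ℝ) ^ (s + 1))⁻¹ * (y ^ (s + 2) - 1 - ((s + 2 : ℕ) : ℝ) * (y - 1)) * (2 * (y + 1))
      ≤ Λ * ((k : ℝ) ^ (s + 1))⁻¹ *
          (((s + 2 : ℕ) : ℝ) ^ 2 * (1 + y) ^ s * (y - 1) ^ 2) * (2 * (y + 1)) := by
        gcongr
        exact pow_sub_tangent_le s hy
    _ = Λ * (2 * ((s + 2 : ℕ) : ℝ) ^ 2) * ((1 + y) / k) ^ (s + 1) * (y - 1) ^ 2 := by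
        rw [div_pow, pow_succ (1 + y)]
        field_simp
        ring
    _ ≤ 1 * (y - 1) ^ 2 := by gcongr
    _ = (y - 1) ^ 2 := one_mul _

lemma pow_excess_le_klFun_of_large {η : ℝ} (hr : r ≠ 0) (hk : k ≠ 0) (hΛ : 0 ≤ Λ) (hy : 1 ≤ y)
    (hyk : y ≤ (1 + η) * k) (hΛy : Λ * (1 + η) ^ (r - 1) ≤ log y - 1) :
    Λ * monoProb k r * (y ^ r - 1 - r * (y - 1)) ≤ klFun y := by
  obtain ⟨s, rfl⟩ := Nat.exists_eq_succ_of_ne_zero hr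
  rw [monoProb]
  simp only [Nat.succ_eq_add_one, Nat.add_sub_cancel] at hΛy ⊢
  have hexcess : y ^ (s + 1) - 1 - ((s + 1 : ℕ) : ℝ) * (y - 1) ≤ y ^ (s + 1) := by
    have := mul_nonneg (s + 1).cast_nonneg (sub_nonneg.2 hy)
    linarith
  have hpow : Λ * ((k : ℝ) ^ s)⁻¹ * y ^ s ≤ log y - 1 := by
    calc Λ * ((k : ℝ) ^ s)⁻¹ * y ^ s ≤ Λ * ((k : ℝ) ^ s)⁻¹ * ((1 + η) * k) ^ s := by gcongr
      _ = Λ * (1 + η) ^ s := by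
        rw [mul_pow]
        field_simp
      _ ≤ log y - 1 := hΛy
  calc Λ * ((k : ℝ) ^ s)⁻¹ * (y ^ (s + 1) - 1 - ((s + 1 : ℕ) : ℝ) * (y - 1))
      ≤ Λ * ((k : ℝ) ^ s)⁻¹ * y ^ (s + 1) := by gcongr
    _ = Λ * ((k : ℝ) ^ s)⁻¹ * y ^ s * y := by ring
    _ ≤ (log y - 1) * y := by gcongr
    _ ≤ klFun y := by
      rw [klFun_apply]
      linarith

lemma powExcessLeEntropy_of_le {η : ℝ} (hr : 2 ≤ r) (hk : 2 ≤ k) (hΛ : 0 ≤ Λ)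
    (hΛk : Λ ≤ log k) (hlog : 4 * r ^ 2 * log k ≤ k)
    (hη : Λ * (1 + η) ^ (r - 1) ≤ log k - log (4 * r ^ 2 * log k) - 1) :
    PowExcessLeEntropy r k Λ η := by
  intro y hy hyk
  set L := log k
  have hr2 : (2 : ℝ) ≤ r := mod_cast hr
  have hk2 : (2 : ℝ) ≤ k := mod_cast hk
  have hL : 1 / 2 ≤ L := by
    linarith [log_le_log zero_lt_two hk2, log_two_gt_d9]
  have hrL : 1 ≤ 2 * (r : ℝ) ^ 2 * L := by nlinarith
  obtain hsmall | hlarge := le_or_gt (2 * (r : ℝ) ^ 2 * L * (1 + y)) (k : ℝ)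
  · refine pow_excess_le_klFun_of_small hr hΛ hy (le_trans ?_ hsmall) (le_trans ?_ hsmall)
    · exact le_mul_of_one_le_left (by positivity) hrL
    · gcongr
  · have hD : 0 < 4 * (r : ℝ) ^ 2 * L := by positivity
    have hk1 : 1 ≤ k / (4 * (r : ℝ) ^ 2 * L) := (one_le_div hD).2 hlog
    have hky : k / (4 * (r : ℝ) ^ 2 * L) ≤ y := by
      rw [div_le_iff₀ hD]
      nlinarith
    refine pow_excess_le_klFun_of_large (by omega) (by omega) hΛ (hk1.trans hky) hyk (hη.trans ?_)
    rw [← log_div (by positivity) hD.ne']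
    gcongr

section Sum

variable {K : Type*} [Fintype K] {a : K → ℝ}

lemma sum_pow_excess (r : ℕ) (hsum : ∑ κ, a κ = 1) {N : ℕ} (hN : Fintype.card K = N) :
    ∑ κ, ((N * a κ) ^ r - 1 - r * (N * a κ - 1)) = (N : ℝ) ^ r * ∑ κ, a κ ^ r - N := by
  simp only [sum_sub_distrib, ← mul_sum, mul_pow, hsum, sum_const, card_univ, hN, nsmul_eq_mul,
    mul_one, sub_self, mul_zero, sub_zero]

lemma sum_klFun (hsum : ∑ κ, a κ = 1) {N : ℕ} (hN : Fintype.card K = N) :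
    ∑ κ, klFun (N * a κ) = N * ∑ κ, a κ * log (N * a κ) := by
  simp only [klFun_apply, sum_sub_distrib, sum_add_distrib, mul_assoc, ← mul_sum, hsum, sum_const,
    card_univ, hN, nsmul_eq_mul, mul_one, add_sub_cancel_right]

lemma PowExcessLeEntropy.sum_le {η : ℝ} (hT : PowExcessLeEntropy r k Λ η) (hr : r ≠ 0) (hk : k ≠ 0)
    (hK : Fintype.card K = k ^ 2) (ha : ∀ κ, 0 ≤ a κ) (hsum : ∑ κ, a κ = 1)
    (hbal : ∀ κ, k * a κ ≤ 1 + η) :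
    Λ * (∑ κ, a κ ^ r - monoProb k r ^ 2) ≤
      monoProb k r * ∑ κ, a κ * log (k ^ 2 * a κ) := by
  have : (0 : ℝ) < k := by positivity
  have hq : 0 < monoProb k r := by
    unfold monoProb
    positivity
  have hterm : ∑ κ, Λ * monoProb k r * ((k ^ 2 * a κ) ^ r - 1 - r * (k ^ 2 * a κ - 1)) ≤
      ∑ κ, klFun (k ^ 2 * a κ) := by
    refine sum_le_sum fun κ _ => hT _ (mul_nonneg (by positivity) (ha κ)) ?_
    calc (k : ℝ) ^ 2 * a κ = k * a κ * k := by ring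
      _ ≤ (1 + η) * k := by gcongr; exact hbal κ
  have hexcess := sum_pow_excess r hsum hK
  have hentropy := sum_klFun hsum hK
  push_cast at hexcess hentropy
  rw [← mul_sum, hexcess, hentropy] at hterm
  have hpow : ((k : ℝ) ^ 2) ^ r = k ^ 2 / monoProb k r ^ 2 := by
    obtain ⟨s, rfl⟩ := Nat.exists_eq_add_of_le' (Nat.one_le_iff_ne_zero.2 hr)
    rw [monoProb, Nat.add_sub_cancel, inv_pow, div_inv_eq_mul]
    ring
  refine le_of_mul_le_mul_left ?_ (show 0 < (k : ℝ) ^ 2 / monoProb k r by positivity)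
  calc (k : ℝ) ^ 2 / monoProb k r * (Λ * (∑ κ, a κ ^ r - monoProb k r ^ 2))
      = Λ * monoProb k r * (((k : ℝ) ^ 2) ^ r * ∑ κ, a κ ^ r - k ^ 2) := by
        rw [hpow]
        field_simp
    _ ≤ k ^ 2 * ∑ κ, a κ * log (k ^ 2 * a κ) := hterm
    _ = k ^ 2 / monoProb k r * (monoProb k r * ∑ κ, a κ * log (k ^ 2 * a κ)) := by field_simp

end Sum

end Entropy

/-! ### The second moment -/

section SecondMoment

section PairMass

variable {ρ K K' : Type*} [Fintype ρ] [Fintype K] [Fintype K']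

lemma iidMass_or_add_iidMass_and (a : K → ℝ) (A B : (ρ → K) → Prop) :
    iidMass a (fun x => A x ∨ B x) + iidMass a (fun x => A x ∧ B x) =
      iidMass a A + iidMass a B := by
  simp only [iidMass, filter_or, filter_and]
  exact sum_union_inter

lemma iidMass_comp (p : K → K') (a : K → ℝ) (A : (ρ → K') → Prop) :
    iidMass a (fun x => A (p ∘ x)) = iidMass (fun i => ∑ κ with p κ = i, a κ) A := by
  rw [iidMass, iidMass, ← sum_fiberwise_of_maps_to (g := fun x : ρ → K => p ∘ x)
    (t := {y | A y}) fun x hx => by simpa using hx]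
  refine sum_congr rfl fun y hy => ?_
  rw [prod_univ_sum]
  refine sum_congr ?_ fun _ _ => rfl
  ext x
  simp only [mem_filter, mem_univ, true_and, Fintype.mem_piFinset]
  refine ⟨fun h => congrFun h.2, fun h => ?_⟩
  obtain rfl : p ∘ x = y := funext h
  exact ⟨(mem_filter_univ _).1 hy, rfl⟩

omit [Fintype ρ] [Fintype K] [Fintype K'] in
lemma nonconstant_iff_fst_or_snd {x : ρ → K × K'} :
    Nonconstant x ↔ Nonconstant (Prod.fst ∘ x) ∨ Nonconstant (Prod.snd ∘ x) := by
  simp only [Nonconstant, Function.comp_apply, ne_eq, Prod.ext_iff, not_and_or, exists_or]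

variable [Nonempty ρ] {a : K → ℝ}

lemma iidMass_nonconstant_comp_le (ha : ∀ κ, 0 ≤ a κ) (hsum : ∑ κ, a κ = 1) (p : K → K') :
    iidMass a (fun x : ρ → K => Nonconstant (p ∘ x)) ≤
      1 - monoProb (Fintype.card K') (Fintype.card ρ) := by
  rw [iidMass_comp]
  exact iidMass_nonconstant_le (fun _ => sum_nonneg fun κ _ => ha κ)
    ((sum_fiberwise univ p a).trans hsum)

/-- Inclusion–exclusion. -/
lemma iidMass_nonconstant_fst_and_snd_le {a : K × K → ℝ} (ha : ∀ κ, 0 ≤ a κ)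
    (hsum : ∑ κ, a κ = 1) :
    iidMass a (fun x : ρ → K × K => Nonconstant (Prod.fst ∘ x) ∧ Nonconstant (Prod.snd ∘ x)) ≤
      1 - 2 * monoProb (Fintype.card K) (Fintype.card ρ) + ∑ κ, a κ ^ Fintype.card ρ := by
  have hor := iidMass_or_add_iidMass_and a (fun x : ρ → K × K => Nonconstant (Prod.fst ∘ x))
    fun x => Nonconstant (Prod.snd ∘ x)
  simp only [← nonconstant_iff_fst_or_snd] at hor
  have hnot := iidMass_add_iidMass_not a (fun x : ρ → K × K => Nonconstant x)
  rw [hsum, one_pow, iidMass_not_nonconstant] at hnot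
  linarith [iidMass_nonconstant_comp_le (ρ := ρ) ha hsum Prod.fst,
    iidMass_nonconstant_comp_le (ρ := ρ) ha hsum Prod.snd]

end PairMass

lemma exp_card_mul_sum_letterFreq_mul_log {S K : Type*} [Fintype S] [Fintype K] [Nonempty S]
    (w : S → K) {b : ℝ} (hb : 0 < b) :
    exp (Fintype.card S * ∑ κ, letterFreq w κ * log (b * letterFreq w κ)) =
      b ^ Fintype.card S * ∏ s, letterFreq w (w s) := by
  calc exp (Fintype.card S * ∑ κ, letterFreq w κ * log (b * letterFreq w κ))
      = ∏ κ, (b * letterFreq w κ) ^ letterCount w κ := by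
        rw [mul_sum, exp_sum]
        refine prod_congr rfl fun κ _ => ?_
        rw [← mul_assoc, letterFreq, mul_div_cancel₀ _ (Nat.cast_ne_zero.2 Fintype.card_ne_zero)]
        obtain hzero | hpos := (letterCount w κ).eq_zero_or_pos
        · rw [hzero, Nat.cast_zero, zero_mul, exp_zero, pow_zero]
        · rw [exp_nat_mul, exp_log (by positivity)]
    _ = ∏ s, b * letterFreq w (w s) :=
        (prod_comp_eq_prod_pow_letterCount w fun κ => b * letterFreq w κ).symm
    _ = b ^ Fintype.card S * ∏ s, letterFreq w (w s) := by
        rw [prod_mul_distrib, prod_const, card_univ]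

lemma one_sub_two_mul_add_le_sq_mul_exp {q : ℝ} (hq : q < 1) (s : ℝ) :
    1 - 2 * q + s ≤ (1 - q) ^ 2 * exp ((s - q ^ 2) / (1 - q) ^ 2) := by
  have h1q : 1 - q ≠ 0 := (sub_pos.2 hq).ne'
  calc 1 - 2 * q + s = (1 - q) ^ 2 * ((s - q ^ 2) / (1 - q) ^ 2 + 1) := by
        field_simp
        ring
    _ ≤ (1 - q) ^ 2 * exp ((s - q ^ 2) / (1 - q) ^ 2) := by
        gcongr
        exact add_one_le_exp _

/-- The excess of the probability that two colorings are both proper over `(1 - q) ^ (2 * m)` is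
compensated by the relative entropy of their overlap frequencies `a`. -/
lemma PowExcessLeEntropy.pow_le {K : Type*} [Fintype K] {a : K → ℝ} {r k d m n : ℕ} {η : ℝ}
    (hT : PowExcessLeEntropy r k (d / r * monoProb k r / (1 - monoProb k r) ^ 2) η) (hr : r ≠ 0)
    (hk : k ≠ 0) (hmn : m * r = d * n) (hq : monoProb k r < 1) (hK : Fintype.card K = k ^ 2)
    (ha : ∀ κ, 0 ≤ a κ) (hsum : ∑ κ, a κ = 1) (hbal : ∀ κ, k * a κ ≤ 1 + η) :
    (1 - 2 * monoProb k r + ∑ κ, a κ ^ r) ^ m ≤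
      (1 - monoProb k r) ^ (2 * m) * exp (n * ∑ κ, a κ * log (k ^ 2 * a κ)) := by
  have hentropy := hT.sum_le hr hk hK ha hsum hbal
  have hsq : monoProb k r ^ 2 ≤ ∑ κ, a κ ^ r := by
    refine le_of_eq_of_le ?_ (monoProb_le_sum_pow hr ha hsum)
    rw [hK, monoProb, monoProb, inv_pow, Nat.cast_pow, ← pow_mul, ← pow_mul, mul_comm]
  have hqpos : 0 < monoProb k r := by
    unfold monoProb
    positivity
  set q := monoProb k r
  set s := ∑ κ, a κ ^ r
  set H := ∑ κ, a κ * log (k ^ 2 * a κ)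
  have hexcess : (d : ℝ) / r * ((s - q ^ 2) / (1 - q) ^ 2) ≤ H := by
    refine le_of_mul_le_mul_left (le_of_eq_of_le ?_ hentropy) hqpos
    ring
  calc (1 - 2 * q + s) ^ m ≤ ((1 - q) ^ 2 * exp ((s - q ^ 2) / (1 - q) ^ 2)) ^ m :=
        pow_le_pow_left₀ (by nlinarith [sq_nonneg (1 - q)])
          (one_sub_two_mul_add_le_sq_mul_exp hq s) m
    _ = (1 - q) ^ (2 * m) * exp (n * (d / r * ((s - q ^ 2) / (1 - q) ^ 2))) := by
        rw [mul_pow, ← pow_mul, ← exp_nat_mul, cast_rows_eq hr hmn]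
        ring_nf
    _ ≤ (1 - q) ^ (2 * m) * exp (n * H) := by gcongr

section NearlyBalanced

lemma letterCount_le_letterCount_comp {S K K' : Type*} [Fintype S] (p : K → K') (w : S → K)
    (κ : K) : letterCount w κ ≤ letterCount (p ∘ w) (p κ) :=
  card_le_card (monotone_filter_right _ fun _ _ h => congrArg p h)

variable {ι ρ V : Type*} [Fintype ι] [Fintype ρ] [Fintype V] {d k : ℕ} {η : ℝ}

variable (V k η) in
/-- The colorings of `V` with no color class larger than `(1 + η) * card V / k`. -/
noncomputable def nearlyBalanced : Finset (V → Fin k) :=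
  {c | ∀ i, (k : ℝ) * letterCount c i ≤ (1 + η) * Fintype.card V}

lemma mem_nearlyBalanced {c : V → Fin k} :
    c ∈ nearlyBalanced V k η ↔ ∀ i, (k : ℝ) * letterCount c i ≤ (1 + η) * Fintype.card V :=
  mem_filter_univ _

lemma mul_letterFreq_le_of_fst_mem_nearlyBalanced [Nonempty V] {K : Type*} {h : V → Fin k × K}
    (hh : Prod.fst ∘ h ∈ nearlyBalanced V k η) (κ : Fin k × K) : k * letterFreq h κ ≤ 1 + η := by
  have hcount := letterCount_le_letterCount_comp Prod.fst h κ
  rw [letterFreq, ← mul_div_assoc, div_le_iff₀ (mod_cast Fintype.card_pos)]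
  refine le_trans ?_ (mem_nearlyBalanced.1 hh κ.1)
  gcongr

variable [Nonempty ρ] [Nonempty V]

lemma uniformProb_rowProper_and_rowProper_le (hd : d ≠ 0) (hk : k ≠ 0)
    (hmn : Fintype.card ι * Fintype.card ρ = d * Fintype.card V)
    (hq : monoProb k (Fintype.card ρ) < 1)
    (hT : PowExcessLeEntropy (Fintype.card ρ) k (d / Fintype.card ρ *
      monoProb k (Fintype.card ρ) / (1 - monoProb k (Fintype.card ρ)) ^ 2) η)
    {h : V → Fin k × Fin k} (hh : Prod.fst ∘ h ∈ nearlyBalanced V k η) :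
    uniformProb (regularWords (ι × ρ) V d)
        (fun g => RowProper (Prod.fst ∘ h ∘ g) ∧ RowProper (Prod.snd ∘ h ∘ g)) ≤
      polyLoss (d * Fintype.card V) (k * k) *
        ((1 - monoProb k (Fintype.card ρ)) ^ Fintype.card ι * (k : ℝ) ^ Fintype.card V) ^ 2 *
          ∏ v, letterFreq h (h v) := by
  have hloss : 0 ≤ polyLoss (d * Fintype.card V) (k * k) := (polyLoss_pos _ _).le
  have hiid := iidMass_nonconstant_fst_and_snd_le (ρ := ρ) (letterFreq_nonneg h) (sum_letterFreq h)
  rw [Fintype.card_fin] at hiid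
  have hpow := hT.pow_le Fintype.card_ne_zero hk hmn hq (by simp [sq]) (letterFreq_nonneg h)
    (sum_letterFreq h) (mul_letterFreq_le_of_fst_mem_nearlyBalanced hh)
  rw [exp_card_mul_sum_letterFreq_mul_log h (by positivity)] at hpow
  set q := monoProb k (Fintype.card ρ)
  calc uniformProb (regularWords (ι × ρ) V d)
        (fun g => RowProper (Prod.fst ∘ h ∘ g) ∧ RowProper (Prod.snd ∘ h ∘ g))
      = uniformProb (regularWords (ι × ρ) V d) (fun g => ∀ e,
          Nonconstant (Prod.fst ∘ Function.curry (h ∘ g) e) ∧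
            Nonconstant (Prod.snd ∘ Function.curry (h ∘ g) e)) := by
        simp only [forall_and]
        rfl
    _ ≤ polyLoss (d * Fintype.card V) (k * k) * (iidMass (letterFreq h) fun x : ρ → Fin k × Fin k =>
          Nonconstant (Prod.fst ∘ x) ∧ Nonconstant (Prod.snd ∘ x)) ^ Fintype.card ι := by
        refine (uniformProb_regularWords_comp_le hd h fun w : ι × ρ → Fin k × Fin k => ∀ e,
          Nonconstant (Prod.fst ∘ Function.curry w e) ∧
            Nonconstant (Prod.snd ∘ Function.curry w e)).trans_eq ?_
        rw [iidMass_forall_curry (letterFreq h) fun _ x =>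
          Nonconstant (Prod.fst ∘ x) ∧ Nonconstant (Prod.snd ∘ x), prod_const, card_univ,
          Fintype.card_prod, hmn, Fintype.card_prod, Fintype.card_fin]
    _ ≤ polyLoss (d * Fintype.card V) (k * k) * ((1 - q) ^ (2 * Fintype.card ι) *
          (((k : ℝ) ^ 2) ^ Fintype.card V * ∏ v, letterFreq h (h v))) := by
        refine mul_le_mul_of_nonneg_left (le_trans ?_ hpow) hloss
        exact pow_le_pow_left₀ (iidMass_nonneg (letterFreq_nonneg h) _) hiid _
    _ = polyLoss (d * Fintype.card V) (k * k) *
          ((1 - q) ^ Fintype.card ι * (k : ℝ) ^ Fintype.card V) ^ 2 *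
            ∏ v, letterFreq h (h v) := by ring

lemma sum_uniformProb_rowProper_and_rowProper_le (hd : d ≠ 0) (hk : k ≠ 0)
    (hmn : Fintype.card ι * Fintype.card ρ = d * Fintype.card V)
    (hq : monoProb k (Fintype.card ρ) < 1)
    (hT : PowExcessLeEntropy (Fintype.card ρ) k (d / Fintype.card ρ *
      monoProb k (Fintype.card ρ) / (1 - monoProb k (Fintype.card ρ)) ^ 2) η) :
    ∑ p ∈ nearlyBalanced V k η ×ˢ nearlyBalanced V k η,
      uniformProb (regularWords (ι × ρ) V d)
        (fun g => RowProper (p.1 ∘ g) ∧ RowProper (p.2 ∘ g)) ≤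
    polyLoss (d * Fintype.card V) (k * k) * ((Fintype.card V : ℝ) + 1) ^ (k * k) *
      ((1 - monoProb k (Fintype.card ρ)) ^ Fintype.card ι * (k : ℝ) ^ Fintype.card V) ^ 2 := by
  have hloss : 0 ≤ polyLoss (d * Fintype.card V) (k * k) := (polyLoss_pos _ _).le
  set B := polyLoss (d * Fintype.card V) (k * k) *
    ((1 - monoProb k (Fintype.card ρ)) ^ Fintype.card ι * (k : ℝ) ^ Fintype.card V) ^ 2 with hB
  let pair : (V → Fin k × Fin k) ≃ (V → Fin k) × (V → Fin k) :=
    Equiv.arrowProdEquivProdArrow V (fun _ => Fin k) fun _ => Fin k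
  calc ∑ p ∈ nearlyBalanced V k η ×ˢ nearlyBalanced V k η,
        uniformProb (regularWords (ι × ρ) V d)
          (fun g => RowProper (p.1 ∘ g) ∧ RowProper (p.2 ∘ g))
      ≤ ∑ p ∈ nearlyBalanced V k η ×ˢ nearlyBalanced V k η,
          B * ∏ v, letterFreq (pair.symm p) (pair.symm p v) :=
        sum_le_sum fun p hp => uniformProb_rowProper_and_rowProper_le hd hk hmn hq hT
          (h := pair.symm p) (mem_product.1 hp).1
    _ ≤ ∑ p, B * ∏ v, letterFreq (pair.symm p) (pair.symm p v) :=
        sum_le_sum_of_subset_of_nonneg (subset_univ _) fun p _ _ =>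
          mul_nonneg (by positivity) (prod_nonneg fun v _ => letterFreq_nonneg _ _)
    _ = B * ∑ h : V → Fin k × Fin k, ∏ v, letterFreq h (h v) := by
        rw [mul_sum]
        exact Equiv.sum_comp pair.symm fun h => B * ∏ v, letterFreq h (h v)
    _ ≤ B * ((Fintype.card V : ℝ) + 1) ^ (k * k) := by
        have := sum_prod_letterFreq_le (S := V) (K := Fin k × Fin k)
        rw [Fintype.card_prod, Fintype.card_fin] at this
        gcongr
    _ = _ := by
        rw [hB]
        ring

end NearlyBalanced

end SecondMoment

/-! ### Balanced lists of nonconstant rows -/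

section Construction

section LetterCount

variable {S T K : Type*} [Fintype S] [Fintype T]

lemma letterCount_sumElim (w : S → K) (w' : T → K) (κ : K) :
    letterCount (Sum.elim w w') κ = letterCount w κ + letterCount w' κ := by
  simp only [letterCount, card_filter, Fintype.sum_sum_type, Sum.elim_inl, Sum.elim_inr]
  rfl

lemma letterCount_comp_snd (w : T → K) (κ : K) :
    letterCount (fun p : S × T => w p.2) κ = Fintype.card S * letterCount w κ := by
  have h : ({p : S × T | w p.2 = κ} : Finset (S × T)) = univ ×ˢ ({t | w t = κ} : Finset T) := by
    ext
    simp
  rw [letterCount, h, card_product, card_univ, letterCount]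

lemma letterCount_snd [Fintype K] (κ : K) :
    letterCount (Prod.snd : S × K → K) κ = Fintype.card S := by
  refine (letterCount_comp_snd (fun x : K => x) κ).trans ?_
  have h : ({x : K | x = κ} : Finset K) = {κ} := by ext; simp
  rw [letterCount, h, card_singleton, mul_one]

lemma letterCount_sumElim_snd_le [Fintype K] [Nonempty K] (w : T → K) (κ : K) :
    (letterCount (Sum.elim (Prod.snd : S × K → K) w) κ : ℝ) ≤
      (Fintype.card ((S × K) ⊕ T) : ℝ) / Fintype.card K + Fintype.card T := by
  have hK : (0 : ℝ) < Fintype.card K := mod_cast Fintype.card_pos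
  have hw : (letterCount w κ : ℝ) ≤ Fintype.card T := mod_cast letterCount_le_card w κ
  have hS : (Fintype.card S : ℝ) ≤ (Fintype.card ((S × K) ⊕ T) : ℝ) / Fintype.card K := by
    rw [le_div_iff₀ hK, Fintype.card_sum, Fintype.card_prod]
    push_cast
    exact le_add_of_nonneg_right (Nat.cast_nonneg _)
  rw [letterCount_sumElim, letterCount_snd, Nat.cast_add]
  exact add_le_add hS hw

end LetterCount

section NonconstantWord

variable {ι ρ K V : Type*}

variable (ρ K) in
/-- The nonconstant words with positions `ρ` and letters `K`, the possible color patterns of an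
edge in a proper coloring. -/
def NonconstantWord : Type _ := {x : ρ → K // Nonconstant x}

noncomputable instance [Fintype ρ] [Fintype K] : Fintype (NonconstantWord ρ K) :=
  inferInstanceAs (Fintype {x : ρ → K // Nonconstant x})

/-- The word whose rows are given by the list `u`. -/
def rowWord (u : ι → NonconstantWord ρ K) (s : ι × ρ) : K := (u s.1).1 s.2

lemma rowProper_rowWord (u : ι → NonconstantWord ρ K) : RowProper (rowWord u) :=
  fun e => (u e).2

lemma rowWord_injective :
    Function.Injective (rowWord : (ι → NonconstantWord ρ K) → ι × ρ → K) := fun _ _ h =>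
  funext fun e => Subtype.ext (funext fun i => congrFun h (e, i))

variable [Fintype ρ] [Fintype K]

lemma card_nonconstantWord_add_card [Nonempty ρ] :
    Fintype.card (NonconstantWord ρ K) + Fintype.card K =
      Fintype.card K ^ Fintype.card ρ := by
  have hcard : iidMass (fun _ : K => (1 : ℝ)) (fun x : ρ → K => Nonconstant x) =
      Fintype.card (NonconstantWord ρ K) := by
    change _ = (Fintype.card {x : ρ → K // Nonconstant x} : ℝ)
    rw [Fintype.card_subtype]
    simp [iidMass]
  have h := iidMass_add_iidMass_not (fun _ : K => (1 : ℝ)) (fun x : ρ → K => Nonconstant x)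
  rw [hcard, iidMass_not_nonconstant] at h
  simp only [one_pow, sum_const, card_univ, nsmul_eq_mul, mul_one] at h
  exact_mod_cast h

lemma card_nonconstantWord_eq [Nonempty ρ] [Nonempty K] :
    (Fintype.card (NonconstantWord ρ K) : ℝ) =
      (1 - monoProb (Fintype.card K) (Fintype.card ρ)) *
        (Fintype.card K : ℝ) ^ Fintype.card ρ := by
  have h : (Fintype.card (NonconstantWord ρ K) : ℝ) + Fintype.card K =
    (Fintype.card K : ℝ) ^ Fintype.card ρ := mod_cast card_nonconstantWord_add_card
  have hK : (Fintype.card K : ℝ) ≠ 0 := Nat.cast_ne_zero.2 Fintype.card_ne_zero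
  have hmono : monoProb (Fintype.card K) (Fintype.card ρ) *
      (Fintype.card K : ℝ) ^ Fintype.card ρ = Fintype.card K := by
    rw [monoProb, ← pow_sub_one_mul (Fintype.card_ne_zero (α := ρ)), ← mul_assoc,
      inv_mul_cancel₀ (pow_ne_zero _ hK), one_mul]
  rw [sub_mul, one_mul, hmono, ← h, add_sub_cancel_right]

/-- By symmetry all letters occur equally often in the list of all nonconstant words. -/
lemma card_mul_letterCount_rowWord_id (κ : K) :
    Fintype.card K * letterCount (rowWord fun x : NonconstantWord ρ K => x) κ =
      Fintype.card (NonconstantWord ρ K) * Fintype.card ρ := by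
  have hsymm (κ' : K) : letterCount (rowWord fun x : NonconstantWord ρ K => x) κ' =
      letterCount (rowWord fun x : NonconstantWord ρ K => x) κ := by
    let recolor : NonconstantWord ρ K ≃ NonconstantWord ρ K :=
      (Equiv.arrowCongr (Equiv.refl ρ) (Equiv.swap κ κ')).subtypeEquiv fun x => by
        simp [Nonconstant]
    rw [← congrFun (letterCount_comp_equiv (rowWord fun x : NonconstantWord ρ K => x)
      (recolor.prodCongr (Equiv.refl ρ))) κ']
    refine congrArg card (filter_congr fun p _ => ?_)
    change Equiv.swap κ κ' (p.1.1 p.2) = κ' ↔ p.1.1 p.2 = κ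
    rw [Equiv.swap_apply_eq_iff, Equiv.swap_apply_right]
  have h := sum_letterCount (rowWord fun x : NonconstantWord ρ K => x)
  rw [sum_congr rfl fun κ' _ => hsymm κ', sum_const, card_univ, smul_eq_mul,
    Fintype.card_prod] at h
  exact h

variable [Fintype ι] [Fintype V]

/-- The letters in the rows `u` occur exactly as often as they do in `c ∘ g` for a `d`-regular
word `g`. -/
def MatchesColoring (d : ℕ) (u : ι → NonconstantWord ρ K) (c : V → K) : Prop :=
  ∀ κ, letterCount (rowWord u) κ = d * letterCount c κ

namespace MatchesColoring

variable {ι' V' : Type*} [Fintype ι'] [Fintype V'] {d : ℕ} {u : ι → NonconstantWord ρ K}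
  {c : V → K}

omit [Fintype K]

lemma comp_equiv (h : MatchesColoring d u c) (e : ι' ≃ ι) (f : V' ≃ V) :
    MatchesColoring d (u ∘ e) (c ∘ f) := fun κ => by
  rw [letterCount_comp_equiv, ← h κ]
  exact congrFun (letterCount_comp_equiv (rowWord u) (e.prodCongr (Equiv.refl ρ))) κ

lemma sumElim (h : MatchesColoring d u c) {u' : ι' → NonconstantWord ρ K} {c' : V' → K}
    (h' : MatchesColoring d u' c') : MatchesColoring d (Sum.elim u u') (Sum.elim c c') :=
  fun κ => by
  rw [letterCount_sumElim, mul_add, ← h κ, ← h' κ, ← letterCount_sumElim,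
    ← letterCount_comp_equiv _ (Equiv.sumProdDistrib ι ι' ρ).symm]
  congr 1
  ext (s | s) <;> rfl

end MatchesColoring

lemma matchesColoring_snd {d : ℕ}
    (h : Fintype.card ι * Fintype.card (NonconstantWord ρ K) * Fintype.card ρ =
      d * Fintype.card V * Fintype.card K) :
    MatchesColoring d (Prod.snd : ι × NonconstantWord ρ K → NonconstantWord ρ K)
      (Prod.snd : V × K → K) := fun κ => by
  have hcount : letterCount (rowWord (Prod.snd : ι × NonconstantWord ρ K → _)) κ =
      Fintype.card ι * letterCount (rowWord fun x : NonconstantWord ρ K => x) κ := by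
    rw [← letterCount_comp_snd, ← letterCount_comp_equiv _ (Equiv.prodAssoc ι _ ρ)]
    rfl
  rw [hcount, letterCount_snd]
  have : Nonempty K := ⟨κ⟩
  refine Nat.eq_of_mul_eq_mul_right (Fintype.card_pos (α := K)) ?_
  rw [← h, mul_assoc, mul_assoc, mul_comm _ (Fintype.card K), card_mul_letterCount_rowWord_id]

end NonconstantWord

section CyclicColoring

/-- A coloring of the cycle on `Fin n` in which consecutive elements receive different colors. -/
def cyclicColoring {k : ℕ} (hk : 3 ≤ k) (n : ℕ) (v : Fin n) : Fin k :=
  if v.1 + 1 = n then ⟨2, hk⟩ else ⟨v.1 % 2, by omega⟩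

lemma cyclicColoring_ne {k n : ℕ} (hk : 3 ≤ k) (hn : 2 ≤ n) {v w : Fin n}
    (h : w.1 = (v.1 + 1) % n) : cyclicColoring hk n v ≠ cyclicColoring hk n w := by
  rw [Ne, Fin.ext_iff, cyclicColoring, cyclicColoring]
  obtain hlast | hlast := eq_or_ne (v.1 + 1) n
  · rw [hlast, Nat.mod_self] at h
    rw [if_pos hlast, if_neg (by omega)]
    dsimp only
    omega
  · rw [Nat.mod_eq_of_lt (by omega)] at h
    rw [if_neg hlast]
    split_ifs <;> dsimp only <;> omega

/-- The slots in their natural order, wound around the cycle of vertices. -/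
def windingEquiv {r d n m : ℕ} (hmn : m * r = d * n) : Fin m × Fin r ≃ Fin d × Fin n :=
  finProdFinEquiv.trans ((finCongr hmn).trans finProdFinEquiv.symm)

lemma val_snd_windingEquiv {r d n m : ℕ} (hmn : m * r = d * n) (s : Fin m × Fin r) :
    ((windingEquiv hmn s).2 : ℕ) = (s.2.1 + r * s.1.1) % n := by
  simp [windingEquiv, finProdFinEquiv, Fin.modNat]

lemma exists_matchesColoring {r d k n m : ℕ} (hr : 2 ≤ r) (hk : 3 ≤ k) (hn : 2 ≤ n)
    (hmn : m * r = d * n) :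
    ∃ (u : Fin m → NonconstantWord (Fin r) (Fin k)) (c : Fin n → Fin k),
      MatchesColoring d u c := by
  let row (e : Fin m) (l : Fin r) : Fin k := cyclicColoring hk n (windingEquiv hmn (e, l)).2
  have hrow (e : Fin m) : Nonconstant (row e) := by
    refine ⟨⟨0, by omega⟩, ⟨1, by omega⟩, cyclicColoring_ne hk hn ?_⟩
    rw [val_snd_windingEquiv, val_snd_windingEquiv]
    simp [add_comm]
  refine ⟨fun e => ⟨row e, hrow e⟩, cyclicColoring hk n, fun κ => ?_⟩
  have h := congrFun (letterCount_comp_equiv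
    (fun p : Fin d × Fin n => cyclicColoring hk n p.2) (windingEquiv hmn)) κ
  rwa [letterCount_comp_snd, Fintype.card_fin] at h

end CyclicColoring

lemma exists_eq_mul_add_of_le {M n : ℕ} (hM : 0 < M) (h : M ≤ n) :
    ∃ j n₁, M ≤ n₁ ∧ n₁ < 2 * M ∧ n = M * j + n₁ := by
  refine ⟨(n - M) / M, M + (n - M) % M, Nat.le_add_right _ _, ?_, ?_⟩
  · have := Nat.mod_lt (n - M) hM
    omega
  · have := Nat.div_add_mod (n - M) M
    omega

lemma exists_block_decomposition {r d k G j n₁ m : ℕ} (hr : 0 < r)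
    (hmn : m * r = d * (k * r * G * j + n₁)) :
    ∃ m₁, m = d * k * j * G + m₁ ∧ m₁ * r = d * n₁ := by
  have hblock : d * k * j * G * r = d * (k * r * G * j) := by ring
  have hle : d * k * j * G ≤ m := by
    refine Nat.le_of_mul_le_mul_right ?_ hr
    rw [hmn, hblock]
    exact Nat.mul_le_mul_left _ (Nat.le_add_right _ _)
  obtain ⟨m₁, rfl⟩ := Nat.exists_eq_add_of_le hle
  refine ⟨m₁, rfl, ?_⟩
  rw [add_mul, mul_add, hblock] at hmn
  exact Nat.add_left_cancel hmn

lemma nonempty_nonconstantWord_fin {r k : ℕ} (hr : 2 ≤ r) (hk : 2 ≤ k) :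
    Nonempty (NonconstantWord (Fin r) (Fin k)) :=
  ⟨fun l => ⟨l % 2, by omega⟩, ⟨0, by omega⟩, ⟨1, by omega⟩, by simp [Fin.ext_iff]⟩

/-- Most vertices and edges form copies of a block in which all colors and all color patterns are
used equally often; the bounded remainder is colored cyclically. -/
lemma exists_balanced_matchesColoring {r k : ℕ} (d : ℕ) (hr : 2 ≤ r) (hk : 3 ≤ k) :
    ∃ C n₀ : ℕ, ∀ n, n₀ ≤ n → ∀ m, m * r = d * n →
      ∃ (u : Fin m → NonconstantWord (Fin r) (Fin k)) (c : Fin n → Fin k),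
        (∀ τ, (letterCount u τ : ℝ) ≤
          (m : ℝ) / Fintype.card (NonconstantWord (Fin r) (Fin k)) + C) ∧
        (∀ i, (letterCount c i : ℝ) ≤ (n : ℝ) / k + C) ∧ MatchesColoring d u c := by
  have : Nonempty (Fin r) := ⟨⟨0, by omega⟩⟩
  have : Nonempty (Fin k) := ⟨⟨0, by omega⟩⟩
  have := nonempty_nonconstantWord_fin hr (show 2 ≤ k by omega)
  set G := Fintype.card (NonconstantWord (Fin r) (Fin k)) with hG
  have hGpos : 0 < G := Fintype.card_pos
  set M := k * r * G with hM
  have hM2 : 2 ≤ M := (Nat.mul_le_mul (Nat.mul_le_mul hk hr) hGpos).trans' (by omega)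
  refine ⟨(d + 1) * (2 * M), M, fun n hn m hmn => ?_⟩
  obtain ⟨j, n₁, hMn₁, hn₁M, rfl⟩ := exists_eq_mul_add_of_le (by omega) hn
  obtain ⟨m₁, rfl, hmn₁⟩ := exists_block_decomposition (by omega) hmn
  obtain ⟨u₁, c₁, h₁⟩ := exists_matchesColoring hr hk (hM2.trans hMn₁) hmn₁
  have hblock := matchesColoring_snd (ι := Fin (d * k * j)) (V := Fin (r * G * j)) (ρ := Fin r)
    (K := Fin k) (d := d) (by
      simp only [Fintype.card_fin]
      ring)
  have hcardV : Fintype.card (Fin (M * j + n₁)) =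
      Fintype.card ((Fin (r * G * j) × Fin k) ⊕ Fin n₁) := by
    simp only [Fintype.card_sum, Fintype.card_prod, Fintype.card_fin, hM]
    ring
  have hcardE : Fintype.card (Fin (d * k * j * G + m₁)) =
      Fintype.card ((Fin (d * k * j) × NonconstantWord (Fin r) (Fin k)) ⊕ Fin m₁) := by
    simp only [Fintype.card_sum, Fintype.card_prod, Fintype.card_fin, hG]
  have hm₁ : m₁ ≤ (d + 1) * (2 * M) := by
    have : m₁ ≤ m₁ * r := Nat.le_mul_of_pos_right _ (by omega)
    nlinarith
  refine ⟨_, _, fun τ => ?_, fun i => ?_, (hblock.sumElim h₁).comp_equiv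
    (Fintype.equivOfCardEq hcardE) (Fintype.equivOfCardEq hcardV)⟩
  · have h := letterCount_sumElim_snd_le (S := Fin (d * k * j)) u₁ τ
    rw [← hcardE, Fintype.card_fin, Fintype.card_fin] at h
    rw [letterCount_comp_equiv]
    exact h.trans (by gcongr)
  · have h := letterCount_sumElim_snd_le (S := Fin (r * G * j)) c₁ i
    rw [← hcardV, Fintype.card_fin, Fintype.card_fin, Fintype.card_fin] at h
    rw [letterCount_comp_equiv]
    exact h.trans (by gcongr; nlinarith)

end Construction

/-! ### Colorability with inverse polynomial probability -/

section InversePolynomial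

lemma regularWords_nonempty {r d m n : ℕ} (hmn : m * r = d * n) :
    (regularWords (Fin m × Fin r) (Fin n) d).Nonempty :=
  ⟨Prod.snd ∘ windingEquiv hmn, mem_regularWords.2 fun v => by
    rw [letterCount_comp_equiv, letterCount_snd, Fintype.card_fin]⟩

lemma polyLoss_le_polyLoss {N N' : ℕ} (h : N ≤ N') (k : ℕ) : polyLoss N k ≤ polyLoss N' k := by
  unfold polyLoss
  gcongr

lemma add_one_pow_le_polyLoss (N k : ℕ) : ((N : ℝ) + 1) ^ k ≤ polyLoss N k := by
  unfold polyLoss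
  gcongr
  exact le_mul_of_one_le_left (by positivity) (one_le_exp zero_le_one)

section OneColoring

variable {ι ρ V K : Type*} [Fintype ι] [Fintype ρ] [Fintype V] [Fintype K] {d : ℕ}
  {u : ι → NonconstantWord ρ K} {c c₀ : V → K}

namespace MatchesColoring

lemma of_mem_rearrangements (h : MatchesColoring d u c₀) (hc : c ∈ rearrangements c₀) :
    MatchesColoring d u c := fun κ => by
  rw [h κ, mem_rearrangements.1 hc]

lemma card_rearrangements_le (h : MatchesColoring d u c) {g : ι × ρ → V}
    (hg : g ∈ regularWords (ι × ρ) V d) :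
    #(rearrangements u) ≤ #{w ∈ rearrangements (c ∘ g) | RowProper w} := by
  refine card_le_card_of_injOn rowWord (fun u' hu' => ?_) rowWord_injective.injOn
  obtain ⟨σ, rfl⟩ := exists_comp_perm_eq (mem_coe.1 hu')
  refine mem_coe.2 (mem_filter.2 ⟨mem_rearrangements.2 (funext fun κ => ?_), rowProper_rowWord _⟩)
  rw [letterCount_comp_of_mem_regularWords hg, ← h κ]
  exact congrFun (letterCount_comp_equiv (rowWord u) (σ.prodCongr (Equiv.refl ρ))) κ

/-- Rearranging the rows of a single proper word produces enough proper words. -/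
lemma one_sub_monoProb_pow_le [Nonempty ι] [Nonempty ρ] (h : MatchesColoring d u c)
    (hne : (regularWords (ι × ρ) V d).Nonempty) {C : ℝ}
    (hu : ∀ τ, (letterCount u τ : ℝ) ≤
      (Fintype.card ι : ℝ) / Fintype.card (NonconstantWord ρ K) + C) :
    (1 - monoProb (Fintype.card K) (Fintype.card ρ)) ^ Fintype.card ι ≤
      polyLoss (Fintype.card ι) (Fintype.card (NonconstantWord ρ K)) *
        exp (C * Fintype.card (NonconstantWord ρ K)) *
        uniformProb (regularWords (ι × ρ) V d) (fun g => RowProper (c ∘ g)) := by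
  obtain ⟨g, hg⟩ := hne
  have : Nonempty K := ⟨c (g (Classical.arbitrary _))⟩
  set G := Fintype.card (NonconstantWord ρ K)
  have hloss := polyLoss_pos (Fintype.card ι) G
  have hproper : (#(rearrangements u) : ℝ) ≤ (Fintype.card K : ℝ) ^ Fintype.card (ι × ρ) *
      uniformProb (regularWords (ι × ρ) V d) (fun g => RowProper (c ∘ g)) := by
    rw [uniformProb_regularWords_comp hg c RowProper]
    exact (Nat.cast_le.2 (h.card_rearrangements_le hg)).trans (card_filter_rearrangements_le _ _)
  refine le_of_mul_le_mul_right ?_ (show (0 : ℝ) <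
    (Fintype.card K : ℝ) ^ Fintype.card (ι × ρ) from by positivity)
  calc (1 - monoProb (Fintype.card K) (Fintype.card ρ)) ^ Fintype.card ι *
        (Fintype.card K : ℝ) ^ Fintype.card (ι × ρ)
      = (G : ℝ) ^ Fintype.card ι := by
        rw [card_nonconstantWord_eq, mul_pow, ← pow_mul, Fintype.card_prod,
          mul_comm (Fintype.card ι)]
    _ ≤ polyLoss (Fintype.card ι) G * exp (C * G) * #(rearrangements u) :=
        card_pow_le_polyLoss_mul_card_rearrangements hu
    _ ≤ polyLoss (Fintype.card ι) G * exp (C * G) *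
          ((Fintype.card K : ℝ) ^ Fintype.card (ι × ρ) *
            uniformProb (regularWords (ι × ρ) V d) (fun g => RowProper (c ∘ g))) := by
        gcongr
    _ = _ := by ring

end MatchesColoring

end OneColoring

section AllColorings

variable {ι ρ V : Type*} [Fintype ι] [Fintype ρ] [Fintype V] {d k : ℕ} {C η : ℝ}
  {u : ι → NonconstantWord ρ (Fin k)} {c₀ : V → Fin k}

lemma rearrangements_subset_nearlyBalanced (hk : k ≠ 0)
    (hc₀ : ∀ i, (letterCount c₀ i : ℝ) ≤ (Fintype.card V : ℝ) / k + C)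
    (hC : k * C ≤ η * Fintype.card V) : rearrangements c₀ ⊆ nearlyBalanced V k η := by
  refine fun c hc => mem_nearlyBalanced.2 fun i => ?_
  rw [mem_rearrangements.1 hc]
  calc (k : ℝ) * letterCount c₀ i ≤ k * ((Fintype.card V : ℝ) / k + C) := by
        gcongr
        exact hc₀ i
    _ = Fintype.card V + k * C := by
        field_simp
    _ ≤ (1 + η) * Fintype.card V := by
        linarith

variable [Nonempty ι] [Nonempty ρ] [Nonempty V]

lemma MatchesColoring.pow_mul_pow_le_sum_uniformProb (hk : k ≠ 0) (h : MatchesColoring d u c₀)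
    (hne : (regularWords (ι × ρ) V d).Nonempty)
    (hu : ∀ τ, (letterCount u τ : ℝ) ≤
      (Fintype.card ι : ℝ) / Fintype.card (NonconstantWord ρ (Fin k)) + C)
    (hc₀ : ∀ i, (letterCount c₀ i : ℝ) ≤ (Fintype.card V : ℝ) / k + C)
    (hC : k * C ≤ η * Fintype.card V) :
    (1 - monoProb k (Fintype.card ρ)) ^ Fintype.card ι * (k : ℝ) ^ Fintype.card V ≤
      polyLoss (Fintype.card V) k * exp (C * k) *
        (polyLoss (Fintype.card ι) (Fintype.card (NonconstantWord ρ (Fin k))) *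
          exp (C * Fintype.card (NonconstantWord ρ (Fin k)))) *
        ∑ c ∈ nearlyBalanced V k η,
          uniformProb (regularWords (ι × ρ) V d) (fun g => RowProper (c ∘ g)) := by
  set G := Fintype.card (NonconstantWord ρ (Fin k))
  set q := monoProb k (Fintype.card ρ)
  set P := fun c : V → Fin k =>
    uniformProb (regularWords (ι × ρ) V d) (fun g => RowProper (c ∘ g))
  have hlossV := polyLoss_pos (Fintype.card V) k
  have hlossι := polyLoss_pos (Fintype.card ι) G
  have : 0 ≤ 1 - q := sub_nonneg.2 (monoProb_le_one hk _)
  have hone : ∀ c ∈ rearrangements c₀,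
      (1 - q) ^ Fintype.card ι ≤ polyLoss (Fintype.card ι) G * exp (C * G) * P c := by
    intro c hc
    have := (h.of_mem_rearrangements hc).one_sub_monoProb_pow_le hne hu
    rwa [Fintype.card_fin] at this
  have hcount : (k : ℝ) ^ Fintype.card V ≤
      polyLoss (Fintype.card V) k * exp (C * k) * #(rearrangements c₀) := by
    simpa only [Fintype.card_fin] using
      card_pow_le_polyLoss_mul_card_rearrangements (w₀ := c₀) (C := C)
        (by simpa only [Fintype.card_fin] using hc₀)
  calc (1 - q) ^ Fintype.card ι * (k : ℝ) ^ Fintype.card V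
      ≤ (1 - q) ^ Fintype.card ι *
          (polyLoss (Fintype.card V) k * exp (C * k) * #(rearrangements c₀)) := by gcongr
    _ = polyLoss (Fintype.card V) k * exp (C * k) *
          ∑ _c ∈ rearrangements c₀, (1 - q) ^ Fintype.card ι := by
        rw [sum_const, nsmul_eq_mul]
        ring
    _ ≤ polyLoss (Fintype.card V) k * exp (C * k) *
          ∑ c ∈ nearlyBalanced V k η, polyLoss (Fintype.card ι) G * exp (C * G) * P c := by
        gcongr
        exact (sum_le_sum hone).trans (sum_le_sum_of_subset_of_nonneg
          (rearrangements_subset_nearlyBalanced hk hc₀ hC) fun c _ _ =>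
            mul_nonneg (by positivity) (uniformProb_nonneg _ _))
    _ = _ := by
        rw [← mul_sum, ← mul_assoc]

end AllColorings

/-- The second moment method in the form of an inequality between the number `S` of proper
colorings, its second moment `T` and the probability `p` that it is positive. -/
lemma one_le_mul_of_sq_le {Q A B S T p : ℝ} (hQ : 0 < Q) (hp : 0 ≤ p) (hS : Q ≤ A * S)
    (hST : S ^ 2 ≤ p * T) (hT : T ≤ B * Q ^ 2) : 1 ≤ A ^ 2 * B * p := by
  have hQ2 : 0 < Q ^ 2 := by positivity
  refine le_of_mul_le_mul_right ?_ hQ2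
  calc 1 * Q ^ 2 ≤ (A * S) ^ 2 := by
        rw [one_mul]
        gcongr
    _ = A ^ 2 * S ^ 2 := by ring
    _ ≤ A ^ 2 * (p * (B * Q ^ 2)) := by
        gcongr
        exact hST.trans (mul_le_mul_of_nonneg_left hT hp)
    _ = A ^ 2 * B * p * Q ^ 2 := by ring

/-- An upper bound for the reciprocal of the probability of being `k`-colorable. The number `G` is
the number of nonconstant rows and `C` bounds the deviation from perfect balance. -/
noncomputable def colorabilityLoss (d k G C n : ℕ) : ℝ :=
  (polyLoss (1 * n) k * exp (C * k) * (polyLoss (d * n) G * exp (C * G))) ^ 2 *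
    (polyLoss (d * n) (k * k) * polyLoss (1 * n) (k * k))

lemma colorabilityLoss_pos (d k G C n : ℕ) : 0 < colorabilityLoss d k G C n := by
  have h₁ := polyLoss_pos (1 * n) k
  have h₂ := polyLoss_pos (d * n) G
  have h₃ := polyLoss_pos (d * n) (k * k)
  have h₄ := polyLoss_pos (1 * n) (k * k)
  unfold colorabilityLoss
  positivity

lemma polynomiallyBounded_colorabilityLoss (d k G C : ℕ) :
    PolynomiallyBounded (colorabilityLoss d k G C) := by
  have h := ((polynomiallyBounded_polyLoss 1 k).mul (polynomiallyBounded_const (exp (C * k)))).mul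
    ((polynomiallyBounded_polyLoss d G).mul (polynomiallyBounded_const (exp (C * G))))
  exact h.sq.mul
    ((polynomiallyBounded_polyLoss d (k * k)).mul (polynomiallyBounded_polyLoss 1 (k * k)))

lemma MatchesColoring.one_le_colorabilityLoss_mul {r d k m n C : ℕ} {η : ℝ} (hr : r ≠ 0)
    (hd : d ≠ 0) (hk : k ≠ 0) (hn : n ≠ 0) (hmn : m * r = d * n) (hq : monoProb k r < 1)
    (hT : PowExcessLeEntropy r k (d / r * monoProb k r / (1 - monoProb k r) ^ 2) η)
    {u : Fin m → NonconstantWord (Fin r) (Fin k)} {c₀ : Fin n → Fin k}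
    (h : MatchesColoring d u c₀)
    (hu : ∀ τ, (letterCount u τ : ℝ) ≤
      (m : ℝ) / Fintype.card (NonconstantWord (Fin r) (Fin k)) + C)
    (hc₀ : ∀ i, (letterCount c₀ i : ℝ) ≤ (n : ℝ) / k + C) (hC : k * C ≤ η * n) :
    1 ≤ colorabilityLoss d k (Fintype.card (NonconstantWord (Fin r) (Fin k))) C n *
      uniformProb (regularWords (Fin m × Fin r) (Fin n) d)
        (fun g => ∃ c : Fin n → Fin k, RowProper (c ∘ g)) := by
  have : NeZero r := ⟨hr⟩
  have : NeZero n := ⟨hn⟩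
  have : NeZero m := ⟨fun hm => mul_ne_zero hd hn (by rw [← hmn, hm, zero_mul])⟩
  have hm : m ≤ d * n := hmn ▸ Nat.le_mul_of_pos_right m (Nat.pos_of_ne_zero hr)
  set G := Fintype.card (NonconstantWord (Fin r) (Fin k))
  have hlower := h.pow_mul_pow_le_sum_uniformProb (η := η) hk (regularWords_nonempty hmn)
    (by simpa only [Fintype.card_fin] using hu)
    (by simpa only [Fintype.card_fin] using hc₀) (by simpa only [Fintype.card_fin] using hC)
  have hupper := sum_uniformProb_rowProper_and_rowProper_le (ι := Fin m) (ρ := Fin r)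
    (V := Fin n) (η := η) hd hk (by simpa only [Fintype.card_fin] using hmn)
    (by simpa only [Fintype.card_fin] using hq) (by simpa only [Fintype.card_fin] using hT)
  simp only [Fintype.card_fin] at hlower hupper
  have hsome := one_le_mul_of_sq_le (by have := sub_pos.2 hq; positivity)
    (uniformProb_nonneg _ _) hlower (sq_sum_uniformProb_le _ _ _) hupper
  have h₁ := polyLoss_pos n k
  have h₂ := polyLoss_pos m G
  have h₃ := polyLoss_pos (d * n) (k * k)
  refine hsome.trans (mul_le_mul ?_ (uniformProb_mono fun g _ ⟨c, _, hc⟩ => ⟨c, hc⟩)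
    (uniformProb_nonneg _ _) (colorabilityLoss_pos _ _ _ _ _).le)
  rw [colorabilityLoss, one_mul]
  gcongr
  · exact polyLoss_le_polyLoss hm G
  · exact add_one_pow_le_polyLoss n (k * k)

lemma exists_one_le_mul_uniformProb_exists_rowProper {r d k : ℕ} (hr : 2 ≤ r) (hd : d ≠ 0)
    (hk : 3 ≤ k) {η : ℝ} (hη : 0 < η)
    (hT : PowExcessLeEntropy r k (d / r * monoProb k r / (1 - monoProb k r) ^ 2) η) :
    ∃ L : ℕ → ℝ, PolynomiallyBounded L ∧ (∀ n, 0 < L n) ∧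
      ∀ᶠ n in atTop, ∀ m, m * r = d * n →
        1 ≤ L n * uniformProb (regularWords (Fin m × Fin r) (Fin n) d)
          (fun g => ∃ c : Fin n → Fin k, RowProper (c ∘ g)) := by
  obtain ⟨C, n₀, hbalanced⟩ := exists_balanced_matchesColoring d hr hk
  refine ⟨_, polynomiallyBounded_colorabilityLoss d k
    (Fintype.card (NonconstantWord (Fin r) (Fin k))) C, fun n => colorabilityLoss_pos _ _ _ _ n, ?_⟩
  filter_upwards [eventually_ge_atTop n₀, eventually_ne_atTop 0,
    (tendsto_natCast_atTop_atTop.const_mul_atTop hη).eventually_ge_atTop (k * C : ℝ)]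
    with n hn hn0 hC m hmn
  obtain ⟨u, c₀, hu, hc₀, h⟩ := hbalanced n hn m hmn
  exact h.one_le_colorabilityLoss_mul (by omega) hd (by omega) hn0 hmn
    (monoProb_lt_one hr (by omega)) hT hu hc₀ hC

end InversePolynomial

/-! ### Few monochromatic rows -/

section FewMonochromaticRows

variable {ι ρ V K : Type*} [Fintype ι]

section MinMonoRows

lemma card_monoRows_le_add_two {w w' : ι × ρ → K} {e₁ e₂ : ι}
    (h : ∀ e, e ≠ e₁ → e ≠ e₂ → Function.curry w e = Function.curry w' e) :
    #(monoRows w) ≤ #(monoRows w') + 2 := by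
  have hsub : monoRows w ⊆ monoRows w' ∪ {e₁, e₂} := fun e he => by
    by_cases h₁ : e = e₁
    · simp [h₁]
    by_cases h₂ : e = e₂
    · simp [h₂]
    refine mem_union_left _ (mem_monoRows.2 ?_)
    rw [← h e h₁ h₂]
    exact mem_monoRows.1 he
  exact (card_le_card hsub).trans ((card_union_le _ _).trans (Nat.add_le_add_left card_le_two _))

lemma card_monoRows_comp_swap_mul_le [DecidableEq (ι × ρ)] (w : ι × ρ → K)
    (σ : Equiv.Perm (ι × ρ)) (a b : ι × ρ) :
    #(monoRows (w ∘ (Equiv.swap a b * σ : Equiv.Perm (ι × ρ)))) ≤ #(monoRows (w ∘ σ)) + 2 := by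
  refine card_monoRows_le_add_two (e₁ := (σ⁻¹ a).1) (e₂ := (σ⁻¹ b).1) fun e ha hb =>
    funext fun i => congrArg w ?_
  refine Equiv.swap_apply_of_ne_of_ne ?_ ?_
  · rintro rfl
    simp at ha
  · rintro rfl
    simp at hb

variable (K) in
/-- The least number of constant rows of `c ∘ g` among all colorings `c` with colors `K`. -/
noncomputable def minMonoRows (g : ι × ρ → V) : ℕ := ⨅ c : V → K, #(monoRows (c ∘ g))

lemma minMonoRows_le (g : ι × ρ → V) (c : V → K) : minMonoRows K g ≤ #(monoRows (c ∘ g)) :=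
  ciInf_le (OrderBot.bddBelow _) c

lemma exists_card_monoRows_eq_minMonoRows [Nonempty K] (g : ι × ρ → V) :
    ∃ c : V → K, #(monoRows (c ∘ g)) = minMonoRows K g :=
  ciInf_mem fun c : V → K => #(monoRows (c ∘ g))

lemma minMonoRows_eq_zero {g : ι × ρ → V} {c : V → K} (hc : RowProper (c ∘ g)) :
    minMonoRows K g = 0 := by
  have hempty : monoRows (c ∘ g) = ∅ :=
    eq_empty_of_forall_notMem fun e he => mem_monoRows.1 he (hc e)
  exact Nat.le_zero.1 ((minMonoRows_le g c).trans_eq (by rw [hempty, card_empty]))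

variable (K) in
lemma swapLipschitz_minMonoRows [Nonempty K] [DecidableEq (ι × ρ)] (g : ι × ρ → V) :
    SwapLipschitz 2 (fun σ => (minMonoRows K (g ∘ σ) : ℝ)) := by
  have hstep (σ : Equiv.Perm (ι × ρ)) (a b : ι × ρ) :
      minMonoRows K (g ∘ (Equiv.swap a b * σ : Equiv.Perm (ι × ρ))) ≤
        minMonoRows K (g ∘ σ) + 2 := by
    obtain ⟨c, hc⟩ := exists_card_monoRows_eq_minMonoRows (K := K) (g ∘ σ)
    rw [← hc]
    exact (minMonoRows_le _ c).trans (card_monoRows_comp_swap_mul_le (c ∘ g) σ a b)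
  intro σ a b
  have hback := hstep (Equiv.swap a b * σ) a b
  rw [← mul_assoc, Equiv.swap_mul_self, one_mul] at hback
  dsimp only
  rw [abs_sub_le_iff, sub_le_iff_le_add', sub_le_iff_le_add']
  exact ⟨mod_cast hstep σ a b, mod_cast hback⟩

end MinMonoRows

lemma uniformProb_regularWords_two_mul_le {S : Type*} [Fintype S] [Nonempty S] [DecidableEq S]
    [Fintype V] {d : ℕ} {F : (S → V) → ℝ} {c t : ℝ} (hF : ∀ g, SwapLipschitz c (fun σ => F (g ∘ σ)))
    (hc : 0 < c) (ht : 0 ≤ t)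
    (h : exp (-(t ^ 2 / (8 * c ^ 2 * Fintype.card S))) <
      uniformProb (regularWords S V d) (fun g => F g ≤ 0)) :
    uniformProb (regularWords S V d) (fun g => 2 * t ≤ F g) ≤
      exp (-(t ^ 2 / (8 * c ^ 2 * Fintype.card S))) := by
  obtain hempty | ⟨g, hg⟩ := (regularWords S V d).eq_empty_or_nonempty
  · rw [hempty, uniformProb_eq_zero (by simp)]
    positivity
  rw [← rearrangements_of_mem_regularWords hg, uniformProb_rearrangements] at h ⊢
  exact uniformProb_two_mul_le_of_lt_uniformProb_nonpos (hF g) hc ht h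

/-- The least number of monochromatic rows is concentrated, and it vanishes with inverse
polynomial probability. -/
lemma rare_forall_le_card_monoRows {r d k : ℕ} (hr : 2 ≤ r) (hd : d ≠ 0) (hk : 3 ≤ k) {η : ℝ}
    (hη : 0 < η)
    (hT : PowExcessLeEntropy r k (d / r * monoProb k r / (1 - monoProb k r) ^ 2) η) {γ : ℝ}
    (hγ : 0 < γ) :
    Rare r d (fun _ n g => ∀ c : Fin n → Fin k, γ * n ≤ #(monoRows (c ∘ g))) := by
  obtain ⟨L, hL, hLpos, hcolorable⟩ :=
    exists_one_le_mul_uniformProb_exists_rowProper hr hd hk hη hT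
  intro δ hδ
  have : (0 : ℝ) < d := mod_cast Nat.pos_of_ne_zero hd
  have hβ : 0 < γ ^ 2 / (128 * d) := by positivity
  filter_upwards [hcolorable, (hL.tendsto_mul_exp_neg hβ).eventually_lt_const one_pos,
    ((polynomiallyBounded_const 1).tendsto_mul_exp_neg hβ).eventually_le_const hδ,
    eventually_ne_atTop 0] with n hn hLn hδn hn0 m hmn
  have : NeZero k := ⟨by omega⟩
  have hcard : (Fintype.card (Fin m × Fin r) : ℝ) = d * n := by
    rw [Fintype.card_prod, Fintype.card_fin, Fintype.card_fin]
    exact_mod_cast hmn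
  have : Nonempty (Fin m × Fin r) := Fintype.card_pos_iff.1 <| Nat.pos_of_ne_zero fun h0 => by
    rw [h0] at hcard
    exact mul_ne_zero hd hn0 (by exact_mod_cast hcard.symm)
  have hexp : (γ * n / 2) ^ 2 / (8 * 2 ^ 2 * (Fintype.card (Fin m × Fin r) : ℝ)) =
      γ ^ 2 / (128 * d) * n := by
    rw [hcard]
    field_simp
    norm_num
  have htail := uniformProb_regularWords_two_mul_le (d := d) (t := γ * n / 2)
    (F := fun g : Fin m × Fin r → Fin n => (minMonoRows (Fin k) g : ℝ))
    (swapLipschitz_minMonoRows (Fin k)) two_pos (by positivity) (by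
      rw [hexp, ← mul_lt_mul_iff_right₀ (hLpos n)]
      refine hLn.trans_le ((hn m hmn).trans (mul_le_mul_of_nonneg_left
        (uniformProb_mono fun g _ ⟨c, hc⟩ => ?_) (hLpos n).le))
      rw [minMonoRows_eq_zero hc, Nat.cast_zero])
  rw [hexp] at htail
  refine (uniformProb_mono fun g _ hg => ?_).trans (htail.trans (by rwa [one_mul] at hδn))
  obtain ⟨c, hc⟩ := exists_card_monoRows_eq_minMonoRows (K := Fin k) g
  rw [mul_div_cancel₀ _ two_ne_zero, ← hc]
  exact hg c

lemma Rare.of_imp_or {r d : ℕ} {A B D : (m n : ℕ) → (Fin m × Fin r → Fin n) → Prop}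
    (hB : Rare r d B) (hD : Rare r d D) (h : ∀ m n g, A m n g → B m n g ∨ D m n g) :
    Rare r d A := fun δ hδ => by
  filter_upwards [hB _ (half_pos hδ), hD _ (half_pos hδ)] with n hBn hDn m hmn
  exact (uniformProb_mono fun g _ hg => h m n g hg).trans ((uniformProb_or_le _ _ _).trans
    ((add_le_add (hBn m hmn) (hDn m hmn)).trans_eq (add_halves δ)))

lemma rare_rowProper_and_not_exists_rowProper {r d k : ℕ} (hr : 2 ≤ r) (hd : d ≠ 0) (hk : 3 ≤ k)
    {η : ℝ} (hη : 0 < η)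
    (hT : PowExcessLeEntropy r k (d / r * monoProb k r / (1 - monoProb k r) ^ 2) η) :
    Rare r d (fun _ n g => RowProper g ∧ ¬ ∃ c : Fin n → Fin (k + 5 * r), RowProper (c ∘ g)) := by
  have : NeZero r := ⟨by omega⟩
  obtain ⟨γ, hγ, hsparse⟩ := exists_rare_five_mul_card_le_card_rowsInside hr hd
  refine hsparse.of_imp_or (rare_forall_le_card_monoRows hr hd hk hη hT hγ) fun m n g hg => ?_
  by_contra! ⟨hlocal, c, hc⟩
  have hrepair := exists_rowProper_of_monoRows_sparse (b := 5) (by norm_num) hg.1 c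
    fun W hW hWne => hlocal W hWne ((Nat.cast_le.2 hW).trans hc.le)
  rw [Fintype.card_fin] at hrepair
  exact hg.2 hrepair

end FewMonochromaticRows

/-! ### From random words to random regular hypergraphs -/

section SimpleWords

variable {ι ρ V : Type*} [Fintype ρ]

/-- The set of letters in row `e` of the word `g`. -/
noncomputable def rowSet (g : ι × ρ → V) (e : ι) : Finset V := univ.image (Function.curry g e)

/-- The rows of the word `g` consist of distinct letters and have distinct underlying sets, so
that they can be read as the edges of a uniform hypergraph. -/
def SimpleWord (g : ι × ρ → V) : Prop :=
  (∀ e, Function.Injective (Function.curry g e)) ∧ Function.Injective (rowSet g)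

/-- The hypergraph whose edges are the rows of `g`. -/
noncomputable def edgesOf [Fintype ι] (g : ι × ρ → V) : Finset (Finset V) := univ.image (rowSet g)

lemma mem_rowSet {g : ι × ρ → V} {e : ι} {v : V} : v ∈ rowSet g e ↔ ∃ i, g (e, i) = v := by
  simp [rowSet]

lemma mem_edgesOf [Fintype ι] {g : ι × ρ → V} {E : Finset V} :
    E ∈ edgesOf g ↔ ∃ e, rowSet g e = E := by
  simp [edgesOf]

lemma rowSet_mem_edgesOf [Fintype ι] (g : ι × ρ → V) (e : ι) : rowSet g e ∈ edgesOf g :=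
  mem_edgesOf.2 ⟨e, rfl⟩

lemma SimpleWord.card_rowSet {g : ι × ρ → V} (hg : SimpleWord g) (e : ι) :
    #(rowSet g e) = Fintype.card ρ := by
  rw [rowSet, card_image_of_injective _ (hg.1 e), card_univ]

lemma rowSet_comp_prodShear (g : ι × ρ → V) (σ : Equiv.Perm ι) (τ : ι → Equiv.Perm ρ) (e : ι) :
    rowSet (g ∘ σ.prodShear τ) e = rowSet g (σ e) := by
  ext v
  rw [mem_rowSet, mem_rowSet]
  exact (τ e).exists_congr_left.trans (exists_congr fun i => by simp)

lemma SimpleWord.comp_prodShear {g : ι × ρ → V} (hg : SimpleWord g) (σ : Equiv.Perm ι)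
    (τ : ι → Equiv.Perm ρ) : SimpleWord (g ∘ σ.prodShear τ) :=
  ⟨fun e => (hg.1 (σ e)).comp (τ e).injective, fun e e' hee => by
    rw [rowSet_comp_prodShear, rowSet_comp_prodShear] at hee
    exact σ.injective (hg.2 hee)⟩

lemma SimpleWord.comp_prodShear_injective {g : ι × ρ → V} (hg : SimpleWord g) :
    Function.Injective fun q : Equiv.Perm ι × (ι → Equiv.Perm ρ) => g ∘ q.1.prodShear q.2 := by
  rintro ⟨σ, τ⟩ ⟨σ', τ'⟩ heq
  obtain rfl : σ = σ' := Equiv.ext fun e => hg.2 <| by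
    rw [← rowSet_comp_prodShear g σ τ, ← rowSet_comp_prodShear g σ' τ']
    exact congrArg (rowSet · e) heq
  obtain rfl : τ = τ' := funext fun e => Equiv.ext fun i => hg.1 (σ e) (congrFun heq (e, i))
  rfl

variable [Fintype ι]

lemma simpleWord_of_defects_eq_empty [Nontrivial ρ] {g : ι × ρ → V} (h : defects g = ∅) :
    SimpleWord g := by
  have hno {a b c e : ι × ρ} (hab : a ≠ b) (hab₁ : a.1 = b.1) (hce : c ≠ e) (hce₁ : c.1 = e.1)
      (hac : a ≠ c) (hgac : g a = g c) : g b ≠ g e := fun hgbe =>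
    notMem_empty _ (h ▸ mem_defects.2 ⟨hab, hab₁, hce, hce₁, hac, hgac, hgbe⟩)
  have hinj (e : ι) : Function.Injective (Function.curry g e) := fun i j hij => by
    by_contra hne
    have hslot : (e, i) ≠ (e, j) := fun h => hne (Prod.ext_iff.1 h).2
    exact hno hslot rfl hslot.symm rfl hslot hij hij.symm
  refine ⟨hinj, fun e e' hee => ?_⟩
  by_contra hne
  have hmatch (i : ρ) : ∃ j, g (e', j) = g (e, i) := by
    rw [← mem_rowSet, ← hee, mem_rowSet]
    exact ⟨i, rfl⟩
  obtain ⟨i₀, i₁, hi⟩ := exists_pair_ne ρ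
  obtain ⟨j₀, h₀⟩ := hmatch i₀
  obtain ⟨j₁, h₁⟩ := hmatch i₁
  have hj : j₀ ≠ j₁ := by
    rintro rfl
    exact hi (hinj e (h₀.symm.trans h₁))
  exact hno (a := (e, i₀)) (b := (e, i₁)) (c := (e', j₀)) (e := (e', j₁))
    (fun h => hi (Prod.ext_iff.1 h).2) rfl (fun h => hj (Prod.ext_iff.1 h).2) rfl
    (fun h => hne (Prod.ext_iff.1 h).1) h₀.symm h₁.symm

lemma SimpleWord.card_filter_mem_edgesOf {g : ι × ρ → V} (hg : SimpleWord g)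
    (v : V) : #{E ∈ edgesOf g | v ∈ E} = letterCount g v := by
  symm
  refine card_bij (fun s _ => rowSet g s.1) ?_ ?_ ?_
  · rintro ⟨e, i⟩ hs
    exact mem_filter.2 ⟨rowSet_mem_edgesOf g e, mem_rowSet.2 ⟨i, (mem_filter.1 hs).2⟩⟩
  · rintro ⟨e, i⟩ hs ⟨e', i'⟩ hs' hee
    obtain rfl : e = e' := hg.2 hee
    obtain rfl : i = i' := hg.1 e ((mem_filter.1 hs).2.trans (mem_filter.1 hs').2.symm)
    rfl
  · intro E hE
    obtain ⟨hE, hv⟩ := mem_filter.1 hE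
    obtain ⟨e, rfl⟩ := mem_edgesOf.1 hE
    obtain ⟨i, hi⟩ := mem_rowSet.1 hv
    exact ⟨(e, i), mem_filter.2 ⟨mem_univ _, hi⟩, rfl⟩

lemma exists_simpleWord_edgesOf_eq {E : Finset (Finset V)} (hE : #E = Fintype.card ι)
    (hcard : ∀ e ∈ E, #e = Fintype.card ρ) : ∃ g : ι × ρ → V, SimpleWord g ∧ edgesOf g = E := by
  let edge : ι ≃ E := Fintype.equivOfCardEq (by rw [Fintype.card_coe, hE])
  have vertices (e : ι) : Nonempty (ρ ≃ (edge e).1) :=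
    Fintype.card_eq.1 (by rw [Fintype.card_coe, hcard _ (edge e).2])
  let vertex (e : ι) : ρ ≃ (edge e).1 := (vertices e).some
  let g : ι × ρ → V := fun s => vertex s.1 s.2
  have hrow (e : ι) : rowSet g e = edge e := by
    ext v
    rw [mem_rowSet]
    refine ⟨?_, fun hv => ⟨(vertex e).symm ⟨v, hv⟩, ?_⟩⟩
    · rintro ⟨i, rfl⟩
      exact (vertex e i).2
    · simp only [g, Equiv.apply_symm_apply]
  refine ⟨g, ⟨fun e => Subtype.val_injective.comp (vertex e).injective, fun e e' hee => ?_⟩, ?_⟩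
  · rw [hrow, hrow] at hee
    exact edge.injective (Subtype.ext hee)
  · ext x
    rw [mem_edgesOf]
    refine ⟨?_, fun hx => ⟨edge.symm ⟨x, hx⟩, ?_⟩⟩
    · rintro ⟨e, rfl⟩
      exact hrow e ▸ (edge e).2
    · rw [hrow, Equiv.apply_symm_apply]

lemma edgesOf_comp_prodShear (g : ι × ρ → V) (σ : Equiv.Perm ι) (τ : ι → Equiv.Perm ρ) :
    edgesOf (g ∘ σ.prodShear τ) = edgesOf g := by
  ext E
  simp only [mem_edgesOf, rowSet_comp_prodShear]
  exact σ.exists_congr_left.trans (exists_congr fun e => by rw [Equiv.apply_symm_apply])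

lemma SimpleWord.exists_comp_prodShear_eq {g g' : ι × ρ → V} (hg' : SimpleWord g')
    (h : edgesOf g' = edgesOf g) :
    ∃ (σ : Equiv.Perm ι) (τ : ι → Equiv.Perm ρ), g ∘ σ.prodShear τ = g' := by
  have hrow (e : ι) : ∃ e', rowSet g e' = rowSet g' e := by
    rw [← mem_edgesOf, ← h]
    exact rowSet_mem_edgesOf g' e
  choose σ hσ using hrow
  have hslot (e : ι) (i : ρ) : ∃ j, g (σ e, j) = g' (e, i) := by
    rw [← mem_rowSet, hσ, mem_rowSet]
    exact ⟨i, rfl⟩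
  choose τ hτ using hslot
  have hσi : Function.Injective σ := fun e e' hee => hg'.2 (by rw [← hσ, ← hσ, hee])
  have hτi (e : ι) : Function.Injective (τ e) := fun i j hij => hg'.1 e <| by
    rw [Function.curry_apply, Function.curry_apply, ← hτ, ← hτ, hij]
  exact ⟨.ofBijective σ (Finite.injective_iff_bijective.1 hσi),
    fun e => .ofBijective (τ e) (Finite.injective_iff_bijective.1 (hτi e)),
    funext fun s => hτ s.1 s.2⟩

/-- One word for each way of ordering the edges and the vertices in each edge. -/
lemma SimpleWord.card_filter_edgesOf_eq [Fintype V] {g : ι × ρ → V} (hg : SimpleWord g) :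
    #{g' : ι × ρ → V | SimpleWord g' ∧ edgesOf g' = edgesOf g} =
      Nat.card (Equiv.Perm ι × (ι → Equiv.Perm ρ)) := by
  rw [Nat.card_eq_fintype_card, ← card_univ,
    ← card_image_of_injective _ hg.comp_prodShear_injective]
  congr 1
  ext g'
  simp only [mem_filter_univ, mem_image, mem_univ, true_and, Prod.exists]
  refine ⟨fun h => h.1.exists_comp_prodShear_eq h.2, ?_⟩
  rintro ⟨σ, τ, rfl⟩
  exact ⟨hg.comp_prodShear σ τ, edgesOf_comp_prodShear g σ τ⟩

end SimpleWords

section RegularFamily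

variable {m n r d : ℕ} {g : Fin m × Fin r → Fin n} {E : Finset (Finset (Fin n))}

lemma mem_regularFamily : E ∈ regularFamily n r d ↔
    (∀ e ∈ E, #e = r) ∧ ∀ v, #{e ∈ E | v ∈ e} = d :=
  mem_filter_univ _

lemma SimpleWord.edgesOf_mem_regularFamily_iff (hg : SimpleWord g) :
    edgesOf g ∈ regularFamily n r d ↔ g ∈ regularWords (Fin m × Fin r) (Fin n) d := by
  have hdegree (v : Fin n) : #{e ∈ edgesOf g | v ∈ e} = letterCount g v := by
    convert hg.card_filter_mem_edgesOf v
  rw [mem_regularFamily, mem_regularWords]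
  simp only [hdegree, and_iff_right_iff_imp]
  intro _ e he
  obtain ⟨i, rfl⟩ := mem_edgesOf.1 he
  rw [hg.card_rowSet, Fintype.card_fin]

lemma card_of_mem_regularFamily (hr : r ≠ 0) (hmn : m * r = d * n)
    (hE : E ∈ regularFamily n r d) : #E = m := by
  obtain ⟨hsize, hdegree⟩ := mem_regularFamily.1 hE
  refine Nat.eq_of_mul_eq_mul_right (Nat.pos_of_ne_zero hr) ?_
  calc #E * r = ∑ e ∈ E, #e := (sum_const_nat hsize).symm
    _ = ∑ v : Fin n, #{e ∈ E | v ∈ e} := by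
      simp only [card_filter]
      rw [sum_comm]
      exact sum_congr rfl fun e _ => by simp
    _ = m * r := by
      rw [sum_const_nat fun v _ => hdegree v, card_univ, Fintype.card_fin, mul_comm n, hmn]

lemma uniformProb_simpleWord_edgesOf (hr : r ≠ 0) (hmn : m * r = d * n)
    (P : Finset (Finset (Fin n)) → Prop) :
    uniformProb {g ∈ regularWords (Fin m × Fin r) (Fin n) d | SimpleWord g}
      (fun g => P (edgesOf g)) = uniformProb (regularFamily n r d) P := by
  refine uniformProb_comp_of_card_fiber
    (N := Nat.card (Equiv.Perm (Fin m) × (Fin m → Equiv.Perm (Fin r)))) Nat.card_pos.ne'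
    (fun g hg => ?_) (fun E hE => ?_) P
  · rw [mem_filter] at hg
    exact hg.2.edgesOf_mem_regularFamily_iff.2 hg.1
  · obtain ⟨g₀, hg₀, rfl⟩ := exists_simpleWord_edgesOf_eq (ι := Fin m) (ρ := Fin r) (E := E)
      (by rw [card_of_mem_regularFamily hr hmn hE, Fintype.card_fin])
      (by simpa only [Fintype.card_fin] using (mem_regularFamily.1 hE).1)
    rw [← hg₀.card_filter_edgesOf_eq, filter_filter]
    congr 1
    ext g
    simp only [mem_filter, mem_univ, true_and]
    refine ⟨fun h => h.2, fun h => ⟨?_, h⟩⟩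
    rw [← h.1.edgesOf_mem_regularFamily_iff, h.2]
    exact hE

lemma uniformProb_simpleWord_mul_one_sub_le (hr : r ≠ 0) (hmn : m * r = d * n)
    {Bad : (Fin m × Fin r → Fin n) → Prop} {P : Finset (Finset (Fin n)) → Prop}
    (hP : ∀ g, SimpleWord g → ¬ Bad g → P (edgesOf g)) :
    uniformProb (regularWords (Fin m × Fin r) (Fin n) d) SimpleWord *
        (1 - uniformProb (regularFamily n r d) P) ≤
      uniformProb (regularWords (Fin m × Fin r) (Fin n) d) Bad := by
  have hsplit : uniformProb (regularWords (Fin m × Fin r) (Fin n) d) SimpleWord ≤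
      uniformProb (regularWords (Fin m × Fin r) (Fin n) d) (fun g => SimpleWord g ∧ P (edgesOf g)) +
        uniformProb (regularWords (Fin m × Fin r) (Fin n) d) Bad := by
    refine (uniformProb_mono fun g _ hg => ?_).trans (uniformProb_or_le _ _ _)
    by_cases hB : Bad g
    · exact .inr hB
    · exact .inl ⟨hg, hP g hg hB⟩
  rw [uniformProb_and, uniformProb_simpleWord_edgesOf hr hmn] at hsplit
  linarith

lemma exists_pos_eventually_le_uniformProb_simpleWord (hr : 2 ≤ r) (hd : d ≠ 0) :
    ∃ p : ℝ, 0 < p ∧ ∀ᶠ n in atTop, ∀ m, m * r = d * n →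
      p ≤ uniformProb (regularWords (Fin m × Fin r) (Fin n) d) SimpleWord := by
  have : NeZero r := ⟨by omega⟩
  have : Nontrivial (Fin r) := Fin.nontrivial_iff_two_le.2 hr
  let C := 4 * r ^ 2 * d ^ 2
  refine ⟨1 / (2 * (1 + C) ^ (2 * C)), by positivity, ?_⟩
  filter_upwards [eventually_gt_atTop 0,
    eventually_ge_atTop (2 * (r ^ 3 * d ^ 2 + 2 * C * r) + 4 * r)] with n hn0 hn m hmn
  have hlarge : 2 * (r ^ 3 * d ^ 2 + 2 * C * r) + 4 * r ≤ m * r :=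
    hmn ▸ hn.trans (Nat.le_mul_of_pos_left n (Nat.pos_of_ne_zero hd))
  have : NeZero m := ⟨by
    rintro rfl
    have := Nat.mul_pos (Nat.pos_of_ne_zero hd) hn0
    omega⟩
  refine (le_uniformProb_defects_eq_empty (C := C) (regularWords_nonempty hmn)
    (by rw [Fintype.card_fin]) ?_).trans
    (uniformProb_mono fun g _ => simpleWord_of_defects_eq_empty)
  simpa only [Fintype.card_prod, Fintype.card_fin] using hlarge

end RegularFamily

/-- The random `d`-regular `r`-uniform hypergraph on `n` vertices has property `P` with
probability tending to `1` as `n` tends to infinity along the admissible values. -/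
def WithHighProb (r d : ℕ) (P : (n : ℕ) → Finset (Finset (Fin n)) → Prop) : Prop :=
  Tendsto (fun n => uniformProb (regularFamily n r d) (P n)) (atTop ⊓ 𝓟 {n | r ∣ d * n}) (nhds 1)

section WithHighProb

variable {r d : ℕ} {P : (n : ℕ) → Finset (Finset (Fin n)) → Prop}

lemma WithHighProb.mono {Q : (n : ℕ) → Finset (Finset (Fin n)) → Prop} (hP : WithHighProb r d P)
    (h : ∀ n E, P n E → Q n E) : WithHighProb r d Q :=
  tendsto_of_tendsto_of_tendsto_of_le_of_le hP tendsto_const_nhds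
    (fun n => uniformProb_mono fun E _ => h n E) fun _ => uniformProb_le_one _ _

/-- A random word is simple with probability bounded away from zero, so that conditioning on
simplicity keeps rare events rare. -/
lemma Rare.withHighProb {Bad : (m n : ℕ) → (Fin m × Fin r → Fin n) → Prop} (hBad : Rare r d Bad)
    (hr : 2 ≤ r) (hd : d ≠ 0) (hP : ∀ m n g, SimpleWord g → ¬ Bad m n g → P n (edgesOf g)) :
    WithHighProb r d P := by
  obtain ⟨p, hp, hsimple⟩ := exists_pos_eventually_le_uniformProb_simpleWord hr hd
  refine tendsto_order.2 ⟨fun a ha => ?_, fun a ha =>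
    .of_forall fun n => (uniformProb_le_one _ _).trans_lt ha⟩
  have hδ : 0 < p * ((1 - a) / 2) := mul_pos hp (by linarith)
  rw [eventually_inf_principal]
  filter_upwards [hsimple, hBad _ hδ] with n hpn hBn
  rintro ⟨m, hm⟩
  have hmn : m * r = d * n := by rw [hm, mul_comm]
  have hle : p * (1 - uniformProb (regularFamily n r d) (P n)) ≤ p * ((1 - a) / 2) :=
    calc p * (1 - uniformProb (regularFamily n r d) (P n))
        ≤ uniformProb (regularWords (Fin m × Fin r) (Fin n) d) SimpleWord *
          (1 - uniformProb (regularFamily n r d) (P n)) :=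
          mul_le_mul_of_nonneg_right (hpn m hmn) (sub_nonneg.2 (uniformProb_le_one _ _))
      _ ≤ uniformProb (regularWords (Fin m × Fin r) (Fin n) d) (Bad m n) :=
          uniformProb_simpleWord_mul_one_sub_le (by omega) hmn (hP m n)
      _ ≤ p * ((1 - a) / 2) := hBn m hmn
  linarith [le_of_mul_le_mul_left hle hp]

end WithHighProb

section ChromaticNumber

variable {m n r k : ℕ}

lemma chromaticNumber_le {E : Finset (Finset (Fin n))} {c : Fin n → Fin k}
    (hc : ProperColoring E c) : chromaticNumber E ≤ k :=
  Nat.sInf_le ⟨c, hc⟩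

lemma ProperColoring.comp_injective {l : ℕ} {E : Finset (Finset (Fin n))} {c : Fin n → Fin k}
    (hc : ProperColoring E c) {f : Fin k → Fin l} (hf : Function.Injective f) :
    ProperColoring E (f ∘ c) := fun e he => by
  obtain ⟨v, hv, w, hw, hvw⟩ := hc e he
  exact ⟨v, hv, w, hw, hf.ne hvw⟩

lemma lt_chromaticNumber {l : ℕ} {E : Finset (Finset (Fin n))} {c : Fin n → Fin l}
    (hc : ProperColoring E c) (hk : ¬ ∃ c : Fin n → Fin k, ProperColoring E c) :
    k < chromaticNumber E := by
  by_contra! hle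
  obtain ⟨c', hc'⟩ : ∃ c : Fin n → Fin (chromaticNumber E), ProperColoring E c :=
    Nat.sInf_mem (s := {k | ∃ c : Fin n → Fin k, ProperColoring E c}) ⟨l, c, hc⟩
  exact hk ⟨_, hc'.comp_injective (Fin.castLE_injective hle)⟩

lemma properColoring_edgesOf_iff {g : Fin m × Fin r → Fin n} {c : Fin n → Fin k} :
    ProperColoring (edgesOf g) c ↔ RowProper (c ∘ g) := by
  refine ⟨fun h e => ?_, fun h E hE => ?_⟩
  · obtain ⟨v, hv, w, hw, hvw⟩ := h _ (rowSet_mem_edgesOf g e)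
    obtain ⟨i, rfl⟩ := mem_rowSet.1 hv
    obtain ⟨j, rfl⟩ := mem_rowSet.1 hw
    exact ⟨i, j, hvw⟩
  · obtain ⟨e, rfl⟩ := mem_edgesOf.1 hE
    obtain ⟨i, j, hij⟩ := h e
    exact ⟨_, mem_rowSet.2 ⟨i, rfl⟩, _, mem_rowSet.2 ⟨j, rfl⟩, hij⟩

lemma SimpleWord.rowProper {ι ρ V : Type*} [Fintype ρ] [Nontrivial ρ] {g : ι × ρ → V}
    (hg : SimpleWord g) : RowProper g := fun e =>
  have ⟨i, j, hij⟩ := exists_pair_ne ρ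
  ⟨i, j, (hg.1 e).ne hij⟩

lemma withHighProb_lt_chromaticNumber_and_le {d l : ℕ} (hr : 2 ≤ r) (hd : d ≠ 0) (hl : l ≠ 0)
    (hlog : log l < d / r * monoProb l r) (hk : 3 ≤ k) {η : ℝ} (hη : 0 < η)
    (hT : PowExcessLeEntropy r k (d / r * monoProb k r / (1 - monoProb k r) ^ 2) η) :
    WithHighProb r d fun _ E => l < chromaticNumber E ∧ chromaticNumber E ≤ k + 5 * r := by
  have : Nontrivial (Fin r) := Fin.nontrivial_iff_two_le.2 hr
  have hrare := (rare_exists_rowProper (by omega) hd hl hlog).of_imp_or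
    (rare_rowProper_and_not_exists_rowProper hr hd hk hη hT) fun _ _ _ => id
  refine hrare.withHighProb hr hd fun m n g hg hgood => ?_
  simp only [← properColoring_edgesOf_iff] at hgood
  obtain ⟨hfew, hmany⟩ := not_or.1 hgood
  obtain ⟨c, hc⟩ := not_not.1 fun h => hmany ⟨hg.rowProper, h⟩
  exact ⟨lt_chromaticNumber hc hfew, chromaticNumber_le hc⟩

end ChromaticNumber

/-! ### The number of colors -/

section Parameters

lemma exists_one_lt_pow_eq {b : ℝ} (hb : 1 < b) {j : ℕ} (hj : j ≠ 0) :
    ∃ s : ℝ, 1 < s ∧ s ^ j = b :=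
  ⟨b ^ (j : ℝ)⁻¹, one_lt_rpow hb (by positivity), rpow_inv_natCast_pow (by positivity) hj⟩

lemma tendsto_monoProb_atTop {r : ℕ} (hr : 2 ≤ r) :
    Tendsto (fun k : ℕ => monoProb k r) atTop (nhds 0) :=
  squeeze_zero' (.of_forall fun k => monoProb_nonneg k r)
    ((eventually_ne_atTop 0).mono fun _ hk => monoProb_le_inv hr hk)
    tendsto_inv_atTop_nhds_zero_nat

lemma eventually_log_const_mul_add_le {A c : ℝ} (hA : A ≠ 0) (hc : 0 < c) (B : ℝ) :
    ∀ᶠ y : ℝ in atTop, log (A * y) + B ≤ c * y := by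
  filter_upwards [isLittleO_log_id_atTop.bound (half_pos hc),
    eventually_ge_atTop ((log A + B) / (c / 2)), eventually_gt_atTop 0] with y hlog hy hy0
  rw [div_le_iff₀ (half_pos hc)] at hy
  rw [id_eq, norm_eq_abs, norm_eq_abs, abs_of_pos hy0] at hlog
  rw [log_mul hA hy0.ne']
  linarith [le_abs_self (log y)]

lemma tendsto_log_natCast_atTop : Tendsto (fun k : ℕ => log k) atTop atTop :=
  tendsto_log_atTop.comp tendsto_natCast_atTop_atTop

/-- The factor `s ^ 3` is spent in three steps: on `(1 - monoProb k r) ^ 2`, on the lower order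
terms of the entropy bound, and on the exponent `η`. -/
lemma eventually_exists_powExcessLeEntropy {r : ℕ} (hr : 2 ≤ r) {s : ℝ} (hs : 1 < s) :
    ∀ᶠ k : ℕ in atTop, ∀ Λ : ℝ, 0 ≤ Λ → Λ * s ^ 3 ≤ log k →
      ∃ η > 0, PowExcessLeEntropy r k (Λ / (1 - monoProb k r) ^ 2) η := by
  have hr0 : (0 : ℝ) < 4 * r ^ 2 := by
    have : r ≠ 0 := by omega
    positivity
  have hq : ∀ᶠ k : ℕ in atTop, s⁻¹ < (1 - monoProb k r) ^ 2 :=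
    (((tendsto_monoProb_atTop hr).const_sub 1).pow 2).eventually_const_lt
      (by simpa using inv_lt_one_of_one_lt₀ hs)
  have hlin : ∀ᶠ k : ℕ in atTop, log k ≤ k / (4 * r ^ 2) :=
    (tendsto_natCast_atTop_atTop (R := ℝ)).eventually <| by
      filter_upwards [eventually_log_const_mul_add_le one_ne_zero (inv_pos.2 hr0) 0] with y hy
      rwa [one_mul, add_zero, inv_mul_eq_div] at hy
  have hlog : ∀ᶠ k : ℕ in atTop, log (4 * r ^ 2 * log k) + 1 ≤ (1 - s⁻¹) * log k :=
    tendsto_log_natCast_atTop.eventually (eventually_log_const_mul_add_le hr0.ne'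
      (sub_pos.2 (inv_lt_one_of_one_lt₀ hs)) 1)
  filter_upwards [hq, hlin, hlog, eventually_ge_atTop 2] with k hq hlin hlog hk Λ hΛ hΛk
  have hs0 : 0 < s := one_pos.trans hs
  have hq0 : 0 < (1 - monoProb k r) ^ 2 := (inv_pos.2 hs0).trans hq
  obtain ⟨t, ht, hts⟩ := exists_one_lt_pow_eq hs (j := r - 1) (by omega)
  have hΛq : Λ / (1 - monoProb k r) ^ 2 * s ≤ s⁻¹ * log k := by
    have hle : Λ / (1 - monoProb k r) ^ 2 ≤ Λ * s := by
      rw [div_eq_mul_inv]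
      exact mul_le_mul_of_nonneg_left (inv_le_of_inv_le₀ hs0 hq.le) hΛ
    rw [inv_mul_eq_div, le_div_iff₀ hs0]
    calc Λ / (1 - monoProb k r) ^ 2 * s * s ≤ Λ * s * s * s := by gcongr
      _ = Λ * s ^ 3 := by ring
      _ ≤ log k := hΛk
  have hΛ0 : 0 ≤ Λ / (1 - monoProb k r) ^ 2 := div_nonneg hΛ hq0.le
  have hlogk : s⁻¹ * log k ≤ log k :=
    mul_le_of_le_one_left (log_natCast_nonneg k) (inv_le_one_of_one_le₀ hs.le)
  refine ⟨t - 1, sub_pos.2 ht, powExcessLeEntropy_of_le hr hk hΛ0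
    ((le_mul_of_one_le_right hΛ0 hs.le).trans (hΛq.trans hlogk)) ?_ ?_⟩
  · rw [le_div_iff₀ hr0] at hlin
    linarith
  · rw [add_sub_cancel, hts]
    linarith

/-- The asymptotic value of the chromatic number. -/
noncomputable def chromScale (r d : ℕ) : ℝ :=
  (((r : ℝ) - 1) * d / (r * log d)) ^ ((1 : ℝ) / ((r : ℝ) - 1))

variable {r : ℕ}

lemma sub_one_pos_of_two_le (hr : 2 ≤ r) : (0 : ℝ) < r - 1 :=
  sub_pos.2 (mod_cast hr)

lemma log_div_mul_chromScale_pow {d : ℕ} (hr : 2 ≤ r) (hd : 2 ≤ d) :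
    log d / (r - 1) * chromScale r d ^ (r - 1) = d / r := by
  have hr0 : (0 : ℝ) < r - 1 := sub_one_pos_of_two_le hr
  have hlog : 0 < log d := log_pos (mod_cast hd)
  have hcast : ((r - 1 : ℕ) : ℝ) = r - 1 := by rw [Nat.cast_sub (by omega), Nat.cast_one]
  rw [chromScale, one_div, ← hcast, rpow_inv_natCast_pow (by positivity) (by omega), hcast]
  field_simp

lemma sub_one_mul_log_chromScale {d : ℕ} (hr : 2 ≤ r) (hd : 2 ≤ d) :
    (r - 1) * log (chromScale r d) = log d - log (r / (r - 1) * log d) := by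
  have hr0 : (0 : ℝ) < r - 1 := sub_one_pos_of_two_le hr
  have hlog : 0 < log d := log_pos (mod_cast hd)
  have hbase : (r - 1) * d / (r * log d) = d / (r / (r - 1) * log d) := by field_simp
  rw [chromScale, log_rpow (by positivity), hbase, log_div (by positivity) (by positivity)]
  field_simp

lemma eventually_log_chromScale_le (hr : 2 ≤ r) :
    ∀ᶠ d : ℕ in atTop, log (chromScale r d) ≤ log d / (r - 1) := by
  have hr0 : (0 : ℝ) < r - 1 := sub_one_pos_of_two_le hr
  filter_upwards [eventually_ge_atTop 2, tendsto_log_natCast_atTop.eventually_ge_atTop 1]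
    with d hd hlog
  have hone : 1 ≤ r / (r - 1) * log d :=
    one_le_mul_of_one_le_of_one_le ((one_le_div hr0).2 (by linarith)) hlog
  rw [le_div_iff₀' hr0, sub_one_mul_log_chromScale hr hd]
  linarith [log_nonneg hone]

lemma eventually_log_div_le_mul_log_chromScale (hr : 2 ≤ r) {s : ℝ} (hs : 1 < s) :
    ∀ᶠ d : ℕ in atTop, log d / (r - 1) ≤ s * log (chromScale r d) := by
  have hr0 : (0 : ℝ) < r - 1 := sub_one_pos_of_two_le hr
  have hs0 : 0 < s := one_pos.trans hs
  filter_upwards [eventually_ge_atTop 2, tendsto_log_natCast_atTop.eventually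
    (eventually_log_const_mul_add_le (A := r / (r - 1)) (by positivity)
      (sub_pos.2 (inv_lt_one_of_one_lt₀ hs)) 0)] with d hd hlog
  rw [← inv_mul_le_iff₀ hs0, mul_div_assoc', div_le_iff₀' hr0, sub_one_mul_log_chromScale hr hd]
  linarith

lemma tendsto_chromScale_atTop (hr : 2 ≤ r) : Tendsto (chromScale r) atTop atTop := by
  have hr0 : (0 : ℝ) < r - 1 := sub_one_pos_of_two_le hr
  have hexp : Tendsto (fun d : ℕ => log d / (r - 1) / 2) atTop atTop :=
    (tendsto_log_natCast_atTop.atTop_div_const hr0).atTop_div_const two_pos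
  refine tendsto_atTop_mono' _ ?_ (tendsto_exp_atTop.comp hexp)
  filter_upwards [eventually_ge_atTop 2, eventually_log_div_le_mul_log_chromScale hr one_lt_two]
    with d hd hlog
  have : 0 < log d := log_pos (mod_cast hd)
  have hpos : 0 < chromScale r d := rpow_pos_of_pos (by positivity) _
  exact (le_log_iff_exp_le hpos).1 (by linarith)

lemma eventually_log_lt_of_lt_chromScale (hr : 2 ≤ r) :
    ∀ᶠ d : ℕ in atTop, ∀ l : ℕ, l ≠ 0 → l < chromScale r d → log l < d / r * monoProb l r := by
  filter_upwards [eventually_ge_atTop 2, eventually_log_chromScale_le hr] with d hd hlog l hl hlX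
  have hl0 : (0 : ℝ) < l := mod_cast Nat.pos_of_ne_zero hl
  have hlogl : log l < log d / (r - 1) := (log_lt_log hl0 hlX).trans_le hlog
  refine hlogl.trans_le ?_
  rw [← log_div_mul_chromScale_pow hr hd, monoProb, ← div_eq_mul_inv, le_div_iff₀ (by positivity)]
  have := (log_natCast_nonneg l).trans hlogl.le
  gcongr

lemma eventually_mul_monoProb_mul_pow_le_log (hr : 2 ≤ r) {s : ℝ} (hs : 1 < s) :
    ∀ᶠ d : ℕ in atTop, ∀ k : ℕ, s ^ 4 * chromScale r d ≤ k →
      d / r * monoProb k r * s ^ 3 ≤ log k := by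
  have hr0 : (0 : ℝ) < r - 1 := sub_one_pos_of_two_le hr
  have hs0 : 0 < s := one_pos.trans hs
  filter_upwards [eventually_ge_atTop 2, eventually_log_div_le_mul_log_chromScale hr hs,
    (tendsto_chromScale_atTop hr).eventually_gt_atTop 0] with d hd hlog hX k hk
  have hlogk : log (chromScale r d) ≤ log k :=
    log_le_log hX ((le_mul_of_one_le_left hX.le (one_le_pow₀ hs.le)).trans hk)
  have hk0 : (0 : ℝ) < k := (mul_pos (pow_pos hs0 4) hX).trans_le hk
  have : 0 ≤ log d / (r - 1) := div_nonneg (log_natCast_nonneg d) hr0.le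
  have hpow : s ^ 4 * chromScale r d ^ (r - 1) ≤ (k : ℝ) ^ (r - 1) :=
    calc s ^ 4 * chromScale r d ^ (r - 1) ≤ (s ^ 4) ^ (r - 1) * chromScale r d ^ (r - 1) := by
          gcongr
          exact le_self_pow₀ (one_le_pow₀ hs.le) (by omega)
      _ = (s ^ 4 * chromScale r d) ^ (r - 1) := (mul_pow _ _ _).symm
      _ ≤ (k : ℝ) ^ (r - 1) := by gcongr
  refine le_of_mul_le_mul_right ?_ hs0
  calc d / r * monoProb k r * s ^ 3 * s
      = log d / (r - 1) * (s ^ 4 * chromScale r d ^ (r - 1)) / (k : ℝ) ^ (r - 1) := by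
        rw [← log_div_mul_chromScale_pow hr hd, monoProb]
        ring
    _ ≤ log d / (r - 1) := by
        rw [div_le_iff₀ (by positivity)]
        gcongr
    _ ≤ log k * s := by linarith [mul_le_mul_of_nonneg_left hlogk hs0.le]

lemma eventually_withHighProb_chromScale_le_chromaticNumber_le (hr : 2 ≤ r) {ε : ℝ} (hε : 0 < ε) :
    ∀ᶠ d : ℕ in atTop, WithHighProb r d fun _ E =>
      chromScale r d ≤ chromaticNumber E ∧ chromaticNumber E ≤ (1 + ε) * chromScale r d := by
  obtain ⟨s, hs, hs4⟩ := exists_one_lt_pow_eq (b := 1 + ε / 2) (by linarith) (j := 4) (by norm_num)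
  have hX := tendsto_chromScale_atTop hr
  have hkatTop : Tendsto (fun d => ⌈(1 + ε / 2) * chromScale r d⌉₊) atTop atTop :=
    tendsto_nat_ceil_atTop.comp (hX.const_mul_atTop (by positivity))
  filter_upwards [eventually_ne_atTop 0, eventually_log_lt_of_lt_chromScale hr,
    eventually_mul_monoProb_mul_pow_le_log hr hs,
    hkatTop.eventually (eventually_exists_powExcessLeEntropy hr hs),
    hkatTop.eventually_ge_atTop 3, hX.eventually_gt_atTop 1,
    hX.eventually_ge_atTop ((2 + 10 * r) / ε)] with d hd hfirst hsecond hentropy hk hX1 hXε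
  set X := chromScale r d
  set k := ⌈(1 + ε / 2) * X⌉₊
  have hceil : 1 < ⌈X⌉₊ := Nat.lt_ceil.2 (by exact_mod_cast hX1)
  have hl : ((⌈X⌉₊ - 1 : ℕ) : ℝ) < X := Nat.lt_ceil.1 (by omega)
  obtain ⟨η, hη, hT⟩ := hentropy (d / r * monoProb k r)
    (mul_nonneg (by positivity) (monoProb_nonneg k r)) (hsecond k (hs4 ▸ Nat.le_ceil _))
  refine (withHighProb_lt_chromaticNumber_and_le hr hd (by omega) (hfirst _ (by omega) hl)
    hk hη hT).mono fun n E ⟨hlower, hupper⟩ => ⟨?_, ?_⟩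
  · exact Nat.ceil_le.1 (by omega)
  · have hkX : (k : ℝ) < (1 + ε / 2) * X + 1 := Nat.ceil_lt_add_one (by positivity)
    have hupper : (chromaticNumber E : ℝ) ≤ k + 5 * r := mod_cast hupper
    rw [div_le_iff₀ hε] at hXε
    linarith

end Parameters

/-- For every integer `r ≥ 2` and every `ε > 0` there exists `d₀ = d₀(r, ε)` such that
for every fixed integer `d ≥ d₀`, w.h.p. (as `n → ∞` along `n` with `r ∣ d·n`)
`|χ(H_r(n,d)) − X| ≤ ε·X` where `X = ((r−1)d/(r log d))^(1/(r−1))`. -/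
theorem chromatic_number_of_random_regular_hypergraph (r : ℕ) (hr : 2 ≤ r) (ε : ℝ) (hε : 0 < ε) :
    ∃ d₀ : ℕ, ∀ d : ℕ, d₀ ≤ d →
      Filter.Tendsto
        (fun n : ℕ =>
          uniformProb (regularFamily n r d)
            (fun E =>
              |(chromaticNumber E : ℝ) -
                  ((((r : ℝ) - 1) * d / (r * Real.log d)) ^ ((1 : ℝ) / ((r : ℝ) - 1)))| ≤
                ε * ((((r : ℝ) - 1) * d / (r * Real.log d)) ^ ((1 : ℝ) / ((r : ℝ) - 1)))))
        (Filter.atTop ⊓ Filter.principal {n : ℕ | r ∣ d * n}) (nhds 1) := by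
  obtain ⟨d₀, hd₀⟩ :=
    eventually_atTop.1 (eventually_withHighProb_chromScale_le_chromaticNumber_le hr hε)
  refine ⟨d₀, fun d hd => (hd₀ d hd).mono fun n E ⟨hlower, hupper⟩ => ?_⟩
  change |(chromaticNumber E : ℝ) - chromScale r d| ≤ ε * chromScale r d
  exact (abs_of_nonneg (sub_nonneg.2 hlower)).trans_le (by linarith [hupper])
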